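/- Let Ω ⊆ ℝ³ be open and let f = (F, f₃) : Ω → ℝ³ be a smooth map satisfying the contact equations with J_F > 0 on Ω, and let g be a conformal map defined on an open set containing f(Ω). (1) If g is of type 1, i.e. g = τ_p ∘ r_φ ∘ δ_r ∘ τ_q for some p, q ∈ ℝ³, φ ∈ ℝ, r > 0, then S_CL(g ∘ f) = S_CL(f) on Ω. (2) If g is of type 2, i.e. g = τ_p ∘ ι ∘ r_φ ∘ δ_r ∘ τ_q, then S_CL(g ∘ f) = S_CL(f) holds on Ω if and only if Z̄F = 0 on Ω, i.e. if and only if f is conformal. -/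

import Mathlib

noncomputable section

open Complex

/-- The underlying space of the first Heisenberg group: ℝ³ with coordinates (x, y, t). -/
abbrev Heis : Type := ℝ × ℝ × ℝ

/-- The left-invariant vector field X = ∂/∂x + 2y ∂/∂t, as a derivation. -/
def XD {E : Type*} [NormedAddCommGroup E] [NormedSpace ℝ E] (u : Heis → E) (p : Heis) : E :=
  fderiv ℝ u p (1, 0, 2 * p.2.1)

/-- The left-invariant vector field Y = ∂/∂y − 2x ∂/∂t, as a derivation. -/
def YD {E : Type*} [NormedAddCommGroup E] [NormedSpace ℝ E] (u : Heis → E) (p : Heis) : E :=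
  fderiv ℝ u p (0, 1, -(2 * p.1))

/-- The vector field T = ∂/∂t, as a derivation. -/
def TD {E : Type*} [NormedAddCommGroup E] [NormedSpace ℝ E] (u : Heis → E) (p : Heis) : E :=
  fderiv ℝ u p (0, 0, 1)

/-- Z = (X − iY)/2. -/
def ZD (u : Heis → ℂ) (p : Heis) : ℂ := (XD u p - Complex.I * YD u p) / 2

/-- Z̄ = (X + iY)/2. -/
def ZbD (u : Heis → ℂ) (p : Heis) : ℂ := (XD u p + Complex.I * YD u p) / 2

/-- The complexification F = f₁ + i f₂ of the horizontal components. -/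
def CF (f1 f2 : Heis → ℝ) : Heis → ℂ := fun p => (f1 p : ℂ) + (f2 p : ℂ) * Complex.I

/-- Complexification of a real-valued function. -/
def Cplx (u : Heis → ℝ) : Heis → ℂ := fun p => (u p : ℂ)

/-- The horizontal Jacobian J_F = Xf₁·Yf₂ − Yf₁·Xf₂. -/
def JF (f1 f2 : Heis → ℝ) (p : Heis) : ℝ := XD f1 p * YD f2 p - YD f1 p * XD f2 p

/-- The contact equations on Ω. -/
def ContactOn (f1 f2 f3 : Heis → ℝ) (Ω : Set Heis) : Prop :=
  ∀ p ∈ Ω, XD f3 p - 2 * f2 p * XD f1 p + 2 * f1 p * XD f2 p = 0 ∧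
           YD f3 p - 2 * f2 p * YD f1 p + 2 * f1 p * YD f2 p = 0

/-- f = (f₁,f₂,f₃) is conformal on Ω: smooth, contact, J_F > 0, and the conformality
equations hold. -/
def ConformalOn (f1 f2 f3 : Heis → ℝ) (Ω : Set Heis) : Prop :=
  ContDiffOn ℝ (⊤ : ℕ∞) f1 Ω ∧ ContDiffOn ℝ (⊤ : ℕ∞) f2 Ω ∧ ContDiffOn ℝ (⊤ : ℕ∞) f3 Ω ∧
  ContactOn f1 f2 f3 Ω ∧ (∀ p ∈ Ω, 0 < JF f1 f2 p) ∧
  ∀ p ∈ Ω, (XD f1 p) ^ 2 + (XD f2 p) ^ 2 = (YD f1 p) ^ 2 + (YD f2 p) ^ 2 ∧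
           XD f1 p * YD f1 p + XD f2 p * YD f2 p = 0

/-- The sub-Laplacian Δ_H = X² + Y². -/
def LapH {E : Type*} [NormedAddCommGroup E] [NormedSpace ℝ E] (u : Heis → E) (p : Heis) : E :=
  XD (XD u) p + YD (YD u) p

/-- The CR Schwarzian derivative S_CR(f) = (1/2)·J_F·Z²(J_F⁻¹). -/
def SCR (f1 f2 : Heis → ℝ) (p : Heis) : ℂ :=
  (1 / 2 : ℂ) * (JF f1 f2 p : ℂ) * ZD (ZD (fun q => (((JF f1 f2 q)⁻¹ : ℝ) : ℂ))) p

/-- The classical type Schwarzian S_CL(f) = Z³F/ZF − (3/2)(Z²F/ZF)². -/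
def SCL (f1 f2 : Heis → ℝ) (p : Heis) : ℂ :=
  ZD (ZD (ZD (CF f1 f2))) p / ZD (CF f1 f2) p
    - (3 / 2 : ℂ) * (ZD (ZD (CF f1 f2)) p / ZD (CF f1 f2) p) ^ 2

/-- The Preschwarzian Pf = Z(ln J_F). -/
def PS (f1 f2 : Heis → ℝ) (p : Heis) : ℂ := ZD (Cplx (fun q => Real.log (JF f1 f2 q))) p

/-- The map (f₁,f₂,f₃) packaged as a map Heis → Heis. -/
def Fmap (f1 f2 f3 : Heis → ℝ) (p : Heis) : Heis := (f1 p, f2 p, f3 p)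

/-- Heisenberg group multiplication (z₁,t₁)(z₂,t₂) = (z₁+z₂, t₁+t₂+2 Im(z₁ conj z₂)). -/
def hmul (p q : Heis) : Heis :=
  (p.1 + q.1, p.2.1 + q.2.1, p.2.2 + q.2.2 + 2 * (q.1 * p.2.1 - p.1 * q.2.1))

/-- Left translation τ_p. -/
def tau (p : Heis) (w : Heis) : Heis := hmul p w

/-- Rotation r_φ(z,t) = (e^{iφ}z, t). -/
def rot (φ : ℝ) (w : Heis) : Heis :=
  (w.1 * Real.cos φ - w.2.1 * Real.sin φ, w.1 * Real.sin φ + w.2.1 * Real.cos φ, w.2.2)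

/-- Dilation δ_r(z,t) = (rz, r²t). -/
def dil (r : ℝ) (w : Heis) : Heis := (r * w.1, r * w.2.1, r ^ 2 * w.2.2)

/-- Complex first component of the Korányi inversion: z/(it − |z|²). -/
def iotaC (w : Heis) : ℂ :=
  ((w.1 : ℂ) + (w.2.1 : ℂ) * Complex.I) /
    ((w.2.2 : ℂ) * Complex.I - ((w.1 ^ 2 + w.2.1 ^ 2 : ℝ) : ℂ))

/-- The Korányi inversion ι(z,t) = (z/(it − |z|²), −t/(|z|⁴ + t²)). -/
def iotaMap (w : Heis) : Heis :=
  ((iotaC w).re, (iotaC w).im, -w.2.2 / ((w.1 ^ 2 + w.2.1 ^ 2) ^ 2 + w.2.2 ^ 2))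

/-!
Up to an affine map of the horizontal coordinate, which does not change the Schwarzian, a map of
type 2 replaces `F` by `x / N`, where `x` is an affine image of `F` and `N` is the denominator of
the inversion, with `N + N̄ = -2 x x̄`, `Z N = -2 x̄ Z x` and `Z̄ N = -2 x̄ Z̄ x`. Where `A = Z x`,
`B = Z̄ x` and `x` do not vanish, write `N = n²`; the two Schwarzians then agree iff
`k = n³ Ā / (B x̄³)` satisfies `Z̄ k = 0`.

Suppose that this holds although `B ≠ 0` on an open set. Besides `k`, also `h = 1 / x̄ + k / n` and
a third function `e` are annihilated by `Z̄`, and `x̄ = n / (h n - k)`, so that over the field `K`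
of germs annihilated by `Z̄` everything is rational in `n`, which turns out to be transcendental
over `K`. On `K(n)` the fields `Z` and `Z̄` are given by explicit polynomials built from the
quadratic `Q = h X² - 2 k X - e`. Complex conjugation turns the relations into a quartic equation
for `n` over `K(s)`, where `s = 2 i z̄`. A comparison of `n` with its Galois conjugate over `K(s)`
shows that the quartic is a constant times a square unless a certain Wronskian divides a sextic
over `K`. The first case is excluded at a point by `|B| < |A|`, which is the assumption `J_F > 0`.
In the second case an argument with Darboux polynomials yields `|B| = 2 |A|`, which contradicts
`|B| < |A|` again.
-/

section Algebra

open Polynomial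

/-! ### Derivations of polynomial rings -/

section CoeffDer

variable {R : Type*} [CommRing R]

/-- The derivation of `R[X]` that acts on coefficients by `d` and kills `X`. -/
def coeffDer (d : Derivation ℤ R R) : Derivation ℤ R[X] R[X] :=
  PolynomialModule.equivPolynomialSelf.compDer d.mapCoeffs

lemma coeff_coeffDer (d : Derivation ℤ R R) (p : R[X]) (i : ℕ) :
    (coeffDer d p).coeff i = d (p.coeff i) := rfl

lemma coeffDer_monomial (d : Derivation ℤ R R) (i : ℕ) (u : R) :
    coeffDer d (monomial i u) = monomial i (d u) := by
  ext j
  rw [coeff_coeffDer, coeff_monomial, coeff_monomial, apply_ite d, map_zero]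

@[simp] lemma coeffDer_C (d : Derivation ℤ R R) (u : R) : coeffDer d (C u) = C (d u) :=
  coeffDer_monomial d 0 u

@[simp] lemma coeffDer_X (d : Derivation ℤ R R) : coeffDer d (X : R[X]) = 0 := by
  rw [← monomial_one_one_eq_X, coeffDer_monomial, Derivation.map_one_eq_zero, monomial_zero_right]

lemma natDegree_coeffDer_le (d : Derivation ℤ R R) (p : R[X]) :
    (coeffDer d p).natDegree ≤ p.natDegree := by
  rw [natDegree_le_iff_coeff_eq_zero]
  intro i hi
  rw [coeff_coeffDer, coeff_eq_zero_of_natDegree_lt hi, map_zero]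

lemma derivative_coeffDer (d : Derivation ℤ R R) (p : R[X]) :
    derivative (coeffDer d p) = coeffDer d (derivative p) := by
  ext i
  have hcast : d ((i : R) + 1) = 0 := by rw [map_add, d.map_natCast, d.map_one_eq_zero, add_zero]
  rw [coeff_derivative, coeff_coeffDer, coeff_coeffDer, coeff_derivative, d.leibniz, hcast,
    smul_zero, zero_add, smul_eq_mul, mul_comm]

lemma derivation_aeval {A : Type*} [CommRing A] [Algebra R A] (Z : Derivation ℤ A A)
    (d₁ d₂ : Derivation ℤ R R) (s : A)
    (hZ : ∀ u : R, Z (algebraMap R A u) = algebraMap R A (d₁ u) + s * algebraMap R A (d₂ u))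
    (n : A) (p : R[X]) :
    Z (aeval n p) = aeval n (coeffDer d₁ p) + s * aeval n (coeffDer d₂ p)
      + aeval n (derivative p) * Z n := by
  induction p using Polynomial.induction_on' with
  | add p q hp hq => simp only [map_add, hp, hq]; ring
  | monomial i u =>
    simp only [coeffDer_monomial, aeval_monomial, Derivation.leibniz, hZ, Derivation.leibniz_pow,
      derivative_monomial, smul_eq_mul, nsmul_eq_mul, map_mul, map_natCast]
    ring

end CoeffDer

section FirstIntegral

variable {K : Type*} [Field K]

lemma isCoprime_of_eq_C {p q : K[X]} {c : K} (u v : K[X]) (hc : c ≠ 0)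
    (h : u * p + v * q = C c) : IsCoprime p q := by
  refine ⟨C c⁻¹ * u, C c⁻¹ * v, ?_⟩
  rw [mul_assoc, mul_assoc, ← mul_add, h, ← C_mul, inv_mul_cancel₀ hc, C_1]

lemma dvd_of_dvd_C_mul {p q : K[X]} {c : K} (hc : c ≠ 0) (h : p ∣ C c * q) : p ∣ q :=
  (isUnit_C.mpr hc.isUnit).dvd_mul_left.mp h

lemma dvd_of_dvd_two_mul [CharZero K] {p q : K[X]} (h : p ∣ 2 * q) : p ∣ q :=
  dvd_of_dvd_C_mul (two_ne_zero : (2 : K) ≠ 0) h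

lemma squarefree_quadratic (α β γ : K) (h : discrim α β γ ≠ 0) :
    Squarefree (C α * X ^ 2 + C β * X + C γ) := by
  refine Separable.squarefree
    (isCoprime_of_eq_C (-4 * C α) (2 * C α * X + C β) h ?_)
  simp only [discrim, derivative_add, derivative_C_mul_X_pow, derivative_C_mul_X, derivative_C,
    map_sub, map_pow, map_mul, map_ofNat, Nat.cast_ofNat, Nat.add_one_sub_one, pow_one]
  ring

lemma dvd_of_squarefree_of_forall_prime_dvd {p q : K[X]} (hq : Squarefree q)
    (h : ∀ π, Prime π → π ∣ q → π ∣ p) : q ∣ p := by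
  rcases eq_or_ne p 0 with rfl | hp
  · exact dvd_zero q
  classical
  rw [← UniqueFactorizationMonoid.dvd_radical_iff hq.isRadical hp]
  refine (hq.isRadical.dvd_radical hq.ne_zero).trans ?_
  rw [UniqueFactorizationMonoid.radical_dvd_radical_iff_normalizedFactors_subset_normalizedFactors]
  intro π hπ
  rw [UniqueFactorizationMonoid.mem_normalizedFactors_iff' hq.ne_zero] at hπ
  rw [UniqueFactorizationMonoid.mem_normalizedFactors_iff' hp]
  exact ⟨hπ.1, hπ.2.1, h π hπ.1.prime hπ.2.2⟩

lemma mul_derivation_pow_mul {R A : Type*} [CommRing R] [CommRing A] [Algebra R A]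
    (D : Derivation R A A) (π f : A) (i : ℕ) :
    π * D (π ^ i * f) = π ^ i * (i * f * D π + π * D f) := by
  rcases i with _ | i
  · simp
  · simp only [Derivation.leibniz, Derivation.leibniz_pow, smul_eq_mul, nsmul_eq_mul,
      Nat.add_one_sub_one]
    push_cast
    ring

/-- Logarithmic differentiation of `F / G` has a simple pole at `π` unless `π ∣ D π`. -/
lemma dvd_derivation_of_emultiplicity_ne [CharZero K] (D : Derivation ℤ K[X] K[X]) {π F G : K[X]}
    (hπ : Prime π) (hF : F ≠ 0) (hG : G ≠ 0) (h : G * D F = F * D G)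
    (hFG : emultiplicity π F ≠ emultiplicity π G) : π ∣ D π := by
  have hfin {H : K[X]} (hH : H ≠ 0) : FiniteMultiplicity π H := .of_prime_left hπ hH
  obtain ⟨f, hf, hπf⟩ := (hfin hF).exists_eq_pow_mul_and_not_dvd
  obtain ⟨g, hg, hπg⟩ := (hfin hG).exists_eq_pow_mul_and_not_dvd
  rw [(hfin hF).emultiplicity_eq_multiplicity, (hfin hG).emultiplicity_eq_multiplicity] at hFG
  generalize multiplicity π F = i at *
  generalize multiplicity π G = j at *
  have hij : (i : K) - j ≠ 0 := sub_ne_zero.mpr fun h => hFG (congrArg _ (Nat.cast_injective h))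
  have hprod :
      π ^ (i + j) * (((i : K[X]) - j) * (f * g * D π) + π * (g * D f - f * D g)) = 0 := by
    have h' : G * (π * D F) = F * (π * D G) := by linear_combination π * h
    rw [hf, hg, mul_derivation_pow_mul, mul_derivation_pow_mul] at h'
    linear_combination h'
  have hsum := (mul_eq_zero.mp hprod).resolve_left (pow_ne_zero _ hπ.ne_zero)
  have hdvd : π ∣ C ((i : K) - j) * (f * g * D π) :=
    ⟨-(g * D f - f * D g), by rw [map_sub, map_natCast, map_natCast]; linear_combination hsum⟩
  exact (hπ.dvd_or_dvd (dvd_of_dvd_C_mul hij hdvd)).resolve_left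
    (fun hfg => (hπ.dvd_or_dvd hfg).elim hπf hπg)

lemma emultiplicity_pow_mul_pow {π f g : K[X]} (hπ : Prime π) (i j : ℕ) :
    emultiplicity π (f ^ i * g ^ j) = i * emultiplicity π f + j * emultiplicity π g := by
  rw [emultiplicity_mul hπ, emultiplicity_pow hπ, emultiplicity_pow hπ]

lemma emultiplicity_eq_one_of_squarefree {π r : K[X]} (hr : Squarefree r) (hπ : Prime π)
    (h : π ∣ r) : emultiplicity π r = 1 := by
  refine le_antisymm ((squarefree_iff_emultiplicity_le_one r).mp hr π |>.resolve_right
    hπ.not_isUnit) ?_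
  rw [← pow_one π] at h
  exact_mod_cast le_emultiplicity_of_pow_dvd h

section

variable [CharZero K] (D : Derivation ℤ K[X] K[X]) {P M q r π : K[X]}

/-- The exponents of `π` in `M ^ 2 * q ^ 6` and `P ^ 2 * r ^ 3` have different parity. -/
lemma dvd_derivation_of_dvd_denominator (hP : P ≠ 0) (hM : M ≠ 0) (hr : Squarefree r)
    (hqr : IsCoprime q r) (hq : q ≠ 0)
    (h : (P ^ 2 * r ^ 3) * D (M ^ 2 * q ^ 6) = (M ^ 2 * q ^ 6) * D (P ^ 2 * r ^ 3))
    (hπ : Prime π) (hπr : π ∣ r) : π ∣ D π := by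
  have hπq : ¬ π ∣ q := fun hπq => hπ.not_isUnit (hqr.isUnit_of_dvd' hπq hπr)
  refine dvd_derivation_of_emultiplicity_ne D hπ (by simp [hM, hq]) (by simp [hP, hr.ne_zero]) h ?_
  rw [emultiplicity_pow_mul_pow hπ, emultiplicity_pow_mul_pow hπ,
    emultiplicity_eq_one_of_squarefree hr hπ hπr, emultiplicity_eq_zero.mpr hπq,
    (FiniteMultiplicity.of_prime_left hπ hP).emultiplicity_eq_multiplicity,
    (FiniteMultiplicity.of_prime_left hπ hM).emultiplicity_eq_multiplicity]
  norm_cast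
  omega

lemma dvd_or_dvd_derivation_of_dvd_numerator (hP : P ≠ 0) (hM : M ≠ 0) (hq : Squarefree q)
    (hr : r ≠ 0) (hqr : IsCoprime q r)
    (h : (P ^ 2 * r ^ 3) * D (M ^ 2 * q ^ 6) = (M ^ 2 * q ^ 6) * D (P ^ 2 * r ^ 3))
    (hπ : Prime π) (hπq : π ∣ q) : π ∣ P ∨ π ∣ D π := by
  have hπr : ¬ π ∣ r := fun hπr => hπ.not_isUnit (hqr.isUnit_of_dvd' hπq hπr)
  refine or_iff_not_imp_left.mpr fun hπP =>
    dvd_derivation_of_emultiplicity_ne D hπ (by simp [hM, hq.ne_zero]) (by simp [hP, hr]) h ?_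
  rw [emultiplicity_pow_mul_pow hπ, emultiplicity_pow_mul_pow hπ,
    emultiplicity_eq_one_of_squarefree hq hπ hπq, emultiplicity_eq_zero.mpr hπr,
    emultiplicity_eq_zero.mpr hπP,
    (FiniteMultiplicity.of_prime_left hπ hM).emultiplicity_eq_multiplicity]
  norm_cast
  omega

end

end FirstIntegral

/-! ### Quadratics over a field with two commuting derivations -/

/-- A quadratic `h X² - 2 k X - e` over a field with two commuting derivations. -/
structure DifferentialQuadratic (K : Type*) [Field K] where
  d₁ : Derivation ℤ K K
  d₂ : Derivation ℤ K K
  comm : ∀ u, d₁ (d₂ u) = d₂ (d₁ u)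
  h : K
  k : K
  e : K

namespace DifferentialQuadratic

variable {K : Type*} [Field K] (S : DifferentialQuadratic K)

/-- The quadratic `h X² - 2 k X - e`. -/
def quad : K[X] := C S.h * X ^ 2 - 2 * C S.k * X - C S.e

/-- Half the `X`-derivative of the homogenized quadratic `h X² - 2 k X Y - e Y²`, at `Y = 1`. -/
def U : K[X] := C S.h * X - C S.k

/-- Minus half the `Y`-derivative of the homogenized quadratic `h X² - 2 k X Y - e Y²`,
at `Y = 1`. -/
def V : K[X] := C S.k * X + C S.e

/-- A quarter of the discriminant of the quadratic. -/
def Δ : K := S.k ^ 2 + S.h * S.e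

/-- The generic position assumptions on the coefficients of the quadratic. -/
structure Nondegenerate : Prop where
  h_ne_zero : S.h ≠ 0
  k_ne_zero : S.k ≠ 0
  e_ne_zero : S.e ≠ 0
  Δ_ne_zero : S.Δ ≠ 0

/-- The derivative of the quadratic along `d₁`. -/
def a : K[X] := C (S.d₁ S.h) * X ^ 2 - 2 * C (S.d₁ S.k) * X - C (S.d₁ S.e)

/-- The derivative of the quadratic along `d₂`. -/
def b : K[X] := C (S.d₂ S.h) * X ^ 2 - 2 * C (S.d₂ S.k) * X - C (S.d₂ S.e)

/-- The Jacobian of two constants with respect to the two derivations. -/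
def bracket (u v : K) : K := S.d₁ u * S.d₂ v - S.d₂ u * S.d₁ v

/-- Half the Wronskian `a' b - a b'` of `a` and `b`, a quadratic because the cubic terms cancel. -/
def w : K[X] := -C (S.bracket S.h S.k) * X ^ 2 - C (S.bracket S.h S.e) * X
  + C (S.bracket S.k S.e)

/-- The discriminant of `w`. -/
def disc : K := S.bracket S.h S.e ^ 2 + 4 * S.bracket S.h S.k * S.bracket S.k S.e

/-- The derivation `b d₁ - a d₂`, which kills `X`. Along a root of `a + s b` it is proportional to
the action of `d₁ + s d₂` on coefficients. -/
def vectorField : Derivation ℤ K[X] K[X] := S.b • coeffDer S.d₁ - S.a • coeffDer S.d₂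

/-- The resultant-like combination `b v(a) - a v(b)` for `v = vectorField`; it determines the
derivative of a root of `a + s b`. -/
def sextic : K[X] := S.b * S.vectorField S.a - S.a * S.vectorField S.b

/-- The combination `b' v(a) - a' v(b)` for `v = vectorField`. -/
def quintic : K[X] := derivative S.b * S.vectorField S.a - derivative S.a * S.vectorField S.b

/-- The derivation `P d/dX - vectorField`. -/
def flow (P : K[X]) : Derivation ℤ K[X] K[X] :=
  P • (derivative' : Derivation K K[X] K[X]).restrictScalars ℤ - S.vectorField

lemma vectorField_apply (p : K[X]) :
    S.vectorField p = S.b * coeffDer S.d₁ p - S.a * coeffDer S.d₂ p := rfl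

lemma vectorField_C (u : K) :
    S.vectorField (C u) = S.b * C (S.d₁ u) - S.a * C (S.d₂ u) := by
  rw [vectorField_apply, coeffDer_C, coeffDer_C]

lemma vectorField_X : S.vectorField (X : K[X]) = 0 := by
  rw [vectorField_apply, coeffDer_X, coeffDer_X, mul_zero, mul_zero, sub_zero]

lemma vectorField_mul (p q : K[X]) :
    S.vectorField (p * q) = p * S.vectorField q + q * S.vectorField p :=
  S.vectorField.leibniz p q

lemma vectorField_two_mul (p : K[X]) : S.vectorField (2 * p) = 2 * S.vectorField p := by
  rw [two_mul, map_add, two_mul]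

lemma flow_apply (P p : K[X]) : S.flow P p = P * derivative p - S.vectorField p := rfl

lemma wronskian_a_b : derivative S.a * S.b - S.a * derivative S.b = 2 * S.w := by
  simp only [a, b, w, bracket, derivative_mul, derivative_C, derivative_X_sq, derivative_X,
    derivative_ofNat, map_sub, map_mul, map_ofNat]
  ring

lemma derivative_w : derivative S.w = C (S.d₁ S.h) * S.b - C (S.d₂ S.h) * S.a := by
  simp only [a, b, w, bracket, derivative_add, derivative_neg, derivative_mul, derivative_C,
    derivative_X_sq, derivative_X, map_sub, map_mul, map_ofNat]
  ring

lemma C_disc : C S.disc = derivative S.w ^ 2 + 4 * C (S.bracket S.h S.k) * S.w := by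
  simp only [w, disc, derivative_sub, derivative_neg, derivative_mul, derivative_C,
    derivative_X_sq, derivative_X, map_add, map_mul, map_pow, map_ofNat]
  ring

lemma quad_eq : S.quad = X * S.U - S.V := by
  simp only [quad, U, V]; ring

lemma derivative_U : derivative S.U = C S.h := by
  simp [U]

lemma derivative_V : derivative S.V = C S.k := by
  simp [V]

lemma derivative_quad : derivative S.quad = 2 * S.U := by
  rw [quad_eq, derivative_sub, derivative_mul, derivative_U, derivative_V, derivative_X, U]
  ring

lemma vectorField_U : S.vectorField S.U = S.w := by
  simp only [U, map_sub, vectorField_mul, vectorField_C, vectorField_X, w, bracket, map_mul, a, b]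
  ring

lemma vectorField_V : S.vectorField S.V = X * S.w := by
  simp only [V, map_add, map_sub, vectorField_mul, vectorField_C, vectorField_X, w, bracket,
    map_mul, a, b]
  ring

lemma vectorField_quad : S.vectorField S.quad = 0 := by
  rw [quad_eq, map_sub, vectorField_mul, vectorField_U, vectorField_V, vectorField_X]
  ring

lemma vectorField_C_k :
    S.vectorField (C S.k) = -C (S.bracket S.h S.k) * X ^ 2 - C (S.bracket S.k S.e) := by
  simp only [vectorField_C, bracket, map_sub, map_mul, a, b]; ring

lemma flow_mul (P p q : K[X]) : S.flow P (p * q) = p * S.flow P q + q * S.flow P p :=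
  (S.flow P).leibniz p q

lemma flow_X (P : K[X]) : S.flow P X = P := by
  rw [flow_apply, vectorField_X, derivative_X, mul_one, sub_zero]

lemma flow_U (P : K[X]) : S.flow P S.U = C S.h * P - S.w := by
  rw [flow_apply, derivative_U, vectorField_U, mul_comm]

lemma flow_V (P : K[X]) : S.flow P S.V = C S.k * P - X * S.w := by
  rw [flow_apply, derivative_V, vectorField_V, mul_comm]

lemma flow_quad (P : K[X]) : S.flow P S.quad = 2 * S.U * P := by
  rw [flow_apply, derivative_quad, vectorField_quad, sub_zero, mul_comm]

lemma coeffDer_d₂_a : coeffDer S.d₂ S.a = coeffDer S.d₁ S.b := by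
  have h2 (d : Derivation ℤ K K) : coeffDer d (2 : K[X]) = 0 := (coeffDer d).map_natCast 2
  simp [a, b, Derivation.leibniz, h2, S.comm]

lemma two_mul_vectorField_w :
    2 * S.vectorField S.w = derivative S.sextic - 3 * S.quintic := by
  have hab : coeffDer S.d₂ (derivative S.a) = coeffDer S.d₁ (derivative S.b) := by
    rw [← derivative_coeffDer, coeffDer_d₂_a, derivative_coeffDer]
  rw [← vectorField_two_mul, ← wronskian_a_b, map_sub, vectorField_mul, vectorField_mul, sextic,
    quintic]
  simp only [vectorField_apply, derivative_sub, derivative_mul, derivative_coeffDer,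
    coeffDer_d₂_a, hab]
  ring

/-! ### Divisibility by the Wronskian -/

lemma natDegree_a_le : S.a.natDegree ≤ 2 := by
  rw [a]; compute_degree

lemma natDegree_b_le : S.b.natDegree ≤ 2 := by
  rw [b]; compute_degree

lemma natDegree_w_le : S.w.natDegree ≤ 2 := by
  rw [w]; compute_degree

lemma b_mul_quintic :
    S.b * S.quintic = derivative S.b * S.sextic - 2 * S.w * S.vectorField S.b := by
  rw [← wronskian_a_b, quintic, sextic]; ring

lemma a_mul_quintic :
    S.a * S.quintic = derivative S.a * S.sextic - 2 * S.w * S.vectorField S.a := by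
  rw [← wronskian_a_b, quintic, sextic]; ring

/-- The discriminant of `w` lies in the ideal generated by `w`, `a` and `b`. -/
lemma w_dvd_quintic_of_disc_ne_zero (hd : S.disc ≠ 0) (h : S.w ∣ S.sextic) : S.w ∣ S.quintic := by
  have ha : S.w ∣ S.a * S.quintic := by
    rw [a_mul_quintic]
    exact dvd_sub (h.mul_left _) ⟨2 * S.vectorField S.a, by ring⟩
  have hb : S.w ∣ S.b * S.quintic := by
    rw [b_mul_quintic]
    exact dvd_sub (h.mul_left _) ⟨2 * S.vectorField S.b, by ring⟩
  refine dvd_of_dvd_C_mul hd ?_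
  have : C S.disc * S.quintic = derivative S.w * (C (S.d₁ S.h) * (S.b * S.quintic)
      - C (S.d₂ S.h) * (S.a * S.quintic)) + S.w * (4 * C (S.bracket S.h S.k) * S.quintic) := by
    rw [C_disc]; nth_rewrite 1 [sq, derivative_w]; ring
  rw [this]
  exact dvd_add ((dvd_sub (hb.mul_left _) (ha.mul_left _)).mul_left _) (dvd_mul_right _ _)

section CommonFactor

variable {S} {l : K[X]}

lemma vectorField_eq_of_eq_mul {α β : K[X]} (ha : S.a = l * α) (hb : S.b = l * β) (p : K[X]) :
    S.vectorField p = l * (β * coeffDer S.d₁ p - α * coeffDer S.d₂ p) := by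
  rw [vectorField_apply, ha, hb]; ring

lemma pow_three_dvd_sextic (ha : l ∣ S.a) (hb : l ∣ S.b) : l ^ 3 ∣ S.sextic := by
  obtain ⟨α, ha⟩ := ha
  obtain ⟨β, hb⟩ := hb
  refine ⟨β * (β * coeffDer S.d₁ α - α * coeffDer S.d₂ α)
    - α * (β * coeffDer S.d₁ β - α * coeffDer S.d₂ β), ?_⟩
  rw [sextic, vectorField_eq_of_eq_mul ha hb, vectorField_eq_of_eq_mul ha hb, ha, hb]
  simp only [Derivation.leibniz, smul_eq_mul]
  ring

lemma sq_dvd_quintic (ha : l ∣ S.a) (hb : l ∣ S.b) : l ^ 2 ∣ S.quintic := by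
  obtain ⟨α, ha⟩ := ha
  obtain ⟨β, hb⟩ := hb
  refine ⟨derivative l * (β * (β * coeffDer S.d₁ α - α * coeffDer S.d₂ α)
      - α * (β * coeffDer S.d₁ β - α * coeffDer S.d₂ β))
    + l * (derivative β * (β * coeffDer S.d₁ α - α * coeffDer S.d₂ α)
      - derivative α * (β * coeffDer S.d₁ β - α * coeffDer S.d₂ β))
    + (derivative β * α - derivative α * β) * (β * coeffDer S.d₁ l - α * coeffDer S.d₂ l), ?_⟩
  rw [quintic, vectorField_eq_of_eq_mul ha hb, vectorField_eq_of_eq_mul ha hb, ha, hb]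
  simp only [Derivation.leibniz, smul_eq_mul, derivative_mul]
  ring

end CommonFactor

lemma derivative_w_dvd [CharZero K] (hd : S.disc = 0) (hhk : S.bracket S.h S.k ≠ 0) :
    derivative S.w ∣ S.a ∧ derivative S.w ∣ S.b := by
  have hw : derivative S.w = -(2 * C (S.bracket S.h S.k) * X + C (S.bracket S.h S.e)) := by
    rw [derivative_w]; simp only [a, b, bracket, map_sub, map_mul]; ring
  have hdC : C S.disc = (0 : K[X]) := by rw [hd, C_0]
  have key (x y z : K) (hxyz : x * S.bracket S.k S.e - y * S.bracket S.h S.e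
      + z * S.bracket S.h S.k = 0) :
      derivative S.w ∣ C x * X ^ 2 - 2 * C y * X - C z := by
    refine dvd_of_dvd_C_mul (c := 4 * S.bracket S.h S.k ^ 2) (by simp [hhk]) ?_
    refine ⟨C x * derivative S.w + 2 * C (x * S.bracket S.h S.e)
      + 4 * C (S.bracket S.h S.k * y), ?_⟩
    have hC := congrArg (C : K → K[X]) hxyz
    simp only [disc, map_add, map_mul, map_sub, map_pow, map_ofNat, map_zero] at hC hdC
    rw [hw]
    simp only [map_mul, map_pow, map_ofNat]
    linear_combination C x * hdC - 4 * C (S.bracket S.h S.k) * hC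
  constructor
  · exact key _ _ _ (by simp only [bracket]; ring)
  · exact key _ _ _ (by simp only [bracket]; ring)

lemma isUnit_w_or_exists_common_factor [CharZero K] (hw : S.w ≠ 0) (hd : S.disc = 0) :
    IsUnit S.w ∨ ∃ l, l ∣ S.a ∧ l ∣ S.b ∧ S.w ∣ l ^ 2 := by
  by_cases hhk : S.bracket S.h S.k = 0
  · have hhe : S.bracket S.h S.e = 0 := by simpa [disc, hhk] using hd
    have hwC : S.w = C (S.bracket S.k S.e) := by simp [w, hhk, hhe]
    rw [hwC] at hw ⊢
    exact .inl (isUnit_C.mpr (C_ne_zero.mp hw).isUnit)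
  · obtain ⟨ha, hb⟩ := S.derivative_w_dvd hd hhk
    refine .inr ⟨_, ha, hb, -(4 * C (S.bracket S.h S.k)), ?_⟩
    have := S.C_disc
    rw [hd, C_0] at this
    linear_combination -this

lemma w_dvd_sextic_of_disc_eq_zero [CharZero K] (hw : S.w ≠ 0) (hd : S.disc = 0) :
    S.w ∣ S.sextic := by
  obtain hu | ⟨l, ha, hb, hl⟩ := S.isUnit_w_or_exists_common_factor hw hd
  · exact hu.dvd
  · exact hl.trans ((pow_dvd_pow l (by norm_num)).trans (pow_three_dvd_sextic ha hb))

lemma w_dvd_quintic [CharZero K] (hw : S.w ≠ 0) (h : S.w ∣ S.sextic) : S.w ∣ S.quintic := by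
  by_cases hd : S.disc = 0
  · obtain hu | ⟨l, ha, hb, hl⟩ := S.isUnit_w_or_exists_common_factor hw hd
    · exact hu.dvd
    · exact hl.trans (sq_dvd_quintic ha hb)
  · exact S.w_dvd_quintic_of_disc_ne_zero hd h

lemma w_dvd_flow_w [CharZero K] {P : K[X]} (hw : S.w ≠ 0) (hP : S.sextic = 2 * S.w * P) :
    S.w ∣ S.flow P S.w := by
  have hq : S.w ∣ S.quintic := S.w_dvd_quintic hw ⟨2 * P, by rw [hP]; ring⟩
  refine dvd_of_dvd_two_mul ?_
  have : 2 * S.flow P S.w = 3 * S.quintic - S.w * (2 * derivative P) := by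
    have := S.two_mul_vectorField_w
    rw [hP, derivative_mul, derivative_mul, derivative_ofNat] at this
    rw [flow_apply]
    linear_combination -this
  rw [this]
  exact dvd_sub (hq.mul_left _) (dvd_mul_right _ _)

variable {S}

/-! ### Darboux polynomials -/

/-- The assertion that `flow P` has the rational first integral `Y² Q⁶ / (P² (U V X)³)`, where
`Q = quad` and `Y = flow P V`. -/
def HasFirstIntegral (S : DifferentialQuadratic K) (P : K[X]) : Prop :=
  (P ^ 2 * (S.U * S.V * X) ^ 3) * S.flow P ((S.flow P S.V) ^ 2 * S.quad ^ 6) =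
    ((S.flow P S.V) ^ 2 * S.quad ^ 6) * S.flow P (P ^ 2 * (S.U * S.V * X) ^ 3)

namespace Nondegenerate

variable (hS : S.Nondegenerate)
include hS

lemma natDegree_U : S.U.natDegree = 1 := by
  have := hS.h_ne_zero
  rw [U]; compute_degree!

lemma natDegree_V : S.V.natDegree = 1 := by
  have := hS.k_ne_zero
  rw [V]; compute_degree!

lemma natDegree_quad : S.quad.natDegree = 2 := by
  have := hS.h_ne_zero
  rw [quad]; compute_degree!

lemma U_ne_zero : S.U ≠ 0 := ne_zero_of_natDegree_gt (hS.natDegree_U.symm ▸ zero_lt_one)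

lemma V_ne_zero : S.V ≠ 0 := ne_zero_of_natDegree_gt (hS.natDegree_V.symm ▸ zero_lt_one)

lemma quad_ne_zero : S.quad ≠ 0 := ne_zero_of_natDegree_gt (hS.natDegree_quad.symm ▸ zero_lt_two)

lemma prime_U : Prime S.U :=
  prime_of_degree_eq_one ((degree_eq_iff_natDegree_eq_of_pos one_pos).mpr hS.natDegree_U)

lemma prime_V : Prime S.V :=
  prime_of_degree_eq_one ((degree_eq_iff_natDegree_eq_of_pos one_pos).mpr hS.natDegree_V)

lemma isCoprime_U_X : IsCoprime S.U X :=
  isCoprime_of_eq_C (-1) (C S.h) hS.k_ne_zero (by rw [U]; ring)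

lemma isCoprime_V_X : IsCoprime S.V X :=
  isCoprime_of_eq_C 1 (-C S.k) hS.e_ne_zero (by rw [V]; ring)

lemma isCoprime_U_V : IsCoprime S.U S.V :=
  isCoprime_of_eq_C (-C S.k) (C S.h) hS.Δ_ne_zero (by
    simp only [U, V, Δ, map_add, map_mul, map_pow]; ring)

lemma isCoprime_quad_X : IsCoprime S.quad X :=
  isCoprime_of_eq_C (-1) (C S.h * X - 2 * C S.k) hS.e_ne_zero (by rw [quad]; ring)

lemma isCoprime_quad_U : IsCoprime S.quad S.U :=
  isCoprime_of_eq_C (-C S.h) S.U hS.Δ_ne_zero (by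
    simp only [quad, U, Δ, map_add, map_mul, map_pow]; ring)

lemma isCoprime_quad_V : IsCoprime S.quad S.V := by
  have h : IsCoprime (X * S.U + S.V * (-1)) S.V :=
    (hS.isCoprime_V_X.symm.mul_left hS.isCoprime_U_V).add_mul_left_left (-1)
  rwa [mul_neg_one, ← sub_eq_add_neg, ← quad_eq] at h

lemma isCoprime_quad_mul : IsCoprime S.quad (S.U * S.V * X) :=
  (hS.isCoprime_quad_U.mul_right hS.isCoprime_quad_V).mul_right hS.isCoprime_quad_X

lemma squarefree_mul : Squarefree (S.U * S.V * X) := by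
  rw [squarefree_mul_iff, squarefree_mul_iff]
  exact ⟨(hS.isCoprime_U_X.mul_left hS.isCoprime_V_X).isRelPrime,
    ⟨hS.isCoprime_U_V.isRelPrime, hS.prime_U.squarefree, hS.prime_V.squarefree⟩,
    prime_X.squarefree⟩

lemma squarefree_quad [CharZero K] : Squarefree S.quad := by
  have h : discrim S.h (-2 * S.k) (-S.e) ≠ 0 := by
    have : discrim S.h (-2 * S.k) (-S.e) = 4 * S.Δ := by rw [discrim, Δ]; ring
    rw [this]
    exact mul_ne_zero (by norm_num) hS.Δ_ne_zero
  convert squarefree_quadratic _ _ _ h using 1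
  simp only [quad, map_neg, map_mul, map_ofNat]
  ring

section Darboux

variable [CharZero K] {P : K[X]} (hP : P ≠ 0) (hV : S.flow P S.V ≠ 0) (h : S.HasFirstIntegral P)
include hP hV h

lemma dvd_flow_self {π : K[X]} (hπ : Prime π) (hd : π ∣ S.U * S.V * X) : π ∣ S.flow P π :=
  dvd_derivation_of_dvd_denominator _ hP hV hS.squarefree_mul hS.isCoprime_quad_mul
    hS.quad_ne_zero h hπ hd

lemma X_dvd : X ∣ P := by
  simpa only [flow_X] using hS.dvd_flow_self hP hV h prime_X (dvd_mul_left X _)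

lemma U_dvd_flow_U : S.U ∣ S.flow P S.U :=
  hS.dvd_flow_self hP hV h hS.prime_U (dvd_mul_of_dvd_left (dvd_mul_right _ _) _)

lemma V_dvd_flow_V : S.V ∣ S.flow P S.V :=
  hS.dvd_flow_self hP hV h hS.prime_V (dvd_mul_of_dvd_left (dvd_mul_left _ _) _)

lemma quad_dvd : S.quad ∣ P := by
  refine dvd_of_squarefree_of_forall_prime_dvd hS.squarefree_quad fun π hπ hπQ => ?_
  have hden : S.U * S.V * X ≠ 0 := hS.squarefree_mul.ne_zero
  refine (dvd_or_dvd_derivation_of_dvd_numerator _ hP hV hS.squarefree_quad hden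
    hS.isCoprime_quad_mul h hπ hπQ).elim id fun hflow => ?_
  have hπU : ¬ π ∣ S.U := fun hπU => hπ.not_isUnit (hS.isCoprime_quad_U.isUnit_of_dvd' hπQ hπU)
  have hQ : π ∣ 2 * (S.U * P) := by
    obtain ⟨t, ht⟩ := hπQ
    rw [← mul_assoc, ← flow_quad, ht, flow_mul]
    exact dvd_add (dvd_mul_right _ _) (hflow.mul_left _)
  exact (hπ.dvd_or_dvd (dvd_of_dvd_two_mul hQ)).resolve_left hπU

end Darboux

end Nondegenerate

/-! ### The degree of the flow -/

lemma natDegree_vectorField_le (p : K[X]) : (S.vectorField p).natDegree ≤ p.natDegree + 2 := by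
  have ha := S.natDegree_a_le
  have hb := S.natDegree_b_le
  have h₁ := natDegree_coeffDer_le S.d₁ p
  have h₂ := natDegree_coeffDer_le S.d₂ p
  rw [vectorField_apply]
  exact (natDegree_sub_le _ _).trans
    (max_le (natDegree_mul_le.trans (by lia)) (natDegree_mul_le.trans (by lia)))

end DifferentialQuadratic

lemma coeff_mul_derivative {R : Type*} [CommRing R] (F G : R[X]) :
    (G * derivative F).coeff (F.natDegree + G.natDegree - 1) =
      F.natDegree * (F.leadingCoeff * G.leadingCoeff) := by
  rcases Nat.eq_zero_or_pos F.natDegree with hF | hF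
  · rw [eq_C_of_natDegree_eq_zero hF]; simp
  · rw [Nat.sub_add_comm hF, add_comm, coeff_mul_add_eq_of_natDegree_le le_rfl
      (natDegree_derivative_le F), coeff_derivative, ← Nat.cast_succ, Nat.succ_eq_add_one,
      Nat.sub_add_cancel hF, leadingCoeff, leadingCoeff]
    ring

lemma coeff_wronskian_ne_zero {K : Type*} [Field K] [CharZero K] {F G : K[X]}
    (hF : F ≠ 0) (hG : G ≠ 0) (h : F.natDegree ≠ G.natDegree) :
    (wronskian G F).coeff (F.natDegree + G.natDegree - 1) ≠ 0 := by
  have hcoeff : (wronskian G F).coeff (F.natDegree + G.natDegree - 1) =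
      ((F.natDegree : K) - G.natDegree) * (F.leadingCoeff * G.leadingCoeff) := by
    have := coeff_mul_derivative G F
    rw [add_comm] at this
    rw [wronskian, coeff_sub, mul_comm (derivative G), coeff_mul_derivative, this]
    ring
  rw [hcoeff]
  exact mul_ne_zero (sub_ne_zero.mpr (Nat.cast_injective.ne h))
    (mul_ne_zero (leadingCoeff_ne_zero.mpr hF) (leadingCoeff_ne_zero.mpr hG))

namespace DifferentialQuadratic

variable {K : Type*} [Field K] [CharZero K] {S : DifferentialQuadratic K}

lemma natDegree_le_three_of_first_integral {P F G : K[X]} (hP : P ≠ 0) (hF : F ≠ 0) (hG : G ≠ 0)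
    (hFG : F.natDegree ≠ G.natDegree) (h : G * S.flow P F = F * S.flow P G) :
    P.natDegree ≤ 3 := by
  have hcoeff := coeff_wronskian_ne_zero hF hG hFG
  have hwr := le_natDegree_of_ne_zero hcoeff
  have h0 : wronskian G F ≠ 0 := fun h0 => hcoeff (by rw [h0, coeff_zero])
  have heq : P * wronskian G F = G * S.vectorField F - F * S.vectorField G := by
    rw [flow_apply, flow_apply] at h
    rw [wronskian]
    linear_combination h
  have hle : (P * wronskian G F).natDegree ≤ F.natDegree + G.natDegree + 2 := by
    have h₁ := natDegree_vectorField_le (S := S) F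
    have h₂ := natDegree_vectorField_le (S := S) G
    rw [heq]
    exact (natDegree_sub_le _ _).trans
      (max_le (natDegree_mul_le.trans (by lia)) (natDegree_mul_le.trans (by lia)))
  rw [natDegree_mul hP h0] at hle
  lia

namespace Nondegenerate

variable (hS : S.Nondegenerate) {P : K[X]} (hP : P ≠ 0) (hV : S.flow P S.V ≠ 0)
  (h : S.HasFirstIntegral P)
include hS hP hV h

lemma natDegree_le_three : P.natDegree ≤ 3 := by
  by_contra! hlt
  have hQ := hS.quad_ne_zero
  have hden : S.U * S.V * X ≠ 0 := hS.squarefree_mul.ne_zero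
  have hflow : (S.flow P S.V).natDegree = P.natDegree := by
    have hw := S.natDegree_w_le
    have hXw : (X * S.w).natDegree < (C S.k * P).natDegree := by
      rw [natDegree_C_mul hS.k_ne_zero]
      exact (natDegree_mul_le.trans (by rw [natDegree_X]; lia)).trans_lt hlt
    rw [flow_V, natDegree_sub_eq_left_of_natDegree_lt hXw, natDegree_C_mul hS.k_ne_zero]
  refine hlt.not_ge (natDegree_le_three_of_first_integral hP
    (mul_ne_zero (pow_ne_zero 2 hV) (pow_ne_zero 6 hQ))
    (mul_ne_zero (pow_ne_zero 2 hP) (pow_ne_zero 3 hden)) ?_ h)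
  rw [natDegree_mul (pow_ne_zero 2 hV) (pow_ne_zero 6 hQ),
    natDegree_mul (pow_ne_zero 2 hP) (pow_ne_zero 3 hden), natDegree_pow, natDegree_pow,
    natDegree_pow, natDegree_pow, hflow, hS.natDegree_quad, mul_assoc,
    natDegree_mul hS.U_ne_zero (mul_ne_zero hS.V_ne_zero X_ne_zero),
    natDegree_mul hS.V_ne_zero X_ne_zero, hS.natDegree_U, hS.natDegree_V, natDegree_X]
  lia

lemma exists_eq_C_mul_X_mul_quad : ∃ c : K, c ≠ 0 ∧ P = C c * (X * S.quad) := by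
  obtain ⟨q, hq⟩ := hS.isCoprime_quad_X.symm.mul_dvd (hS.X_dvd hP hV h) (hS.quad_dvd hP hV h)
  have hXQ : X * S.quad ≠ 0 := mul_ne_zero X_ne_zero hS.quad_ne_zero
  have hq0 : q ≠ 0 := by rintro rfl; exact hP (by rw [hq, mul_zero])
  have hdeg := hS.natDegree_le_three hP hV h
  rw [hq, natDegree_mul hXQ hq0, natDegree_mul X_ne_zero hS.quad_ne_zero, natDegree_X,
    hS.natDegree_quad] at hdeg
  obtain ⟨c, rfl⟩ := natDegree_eq_zero.mp (show q.natDegree = 0 by lia)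
  exact ⟨c, C_ne_zero.mp hq0, by rw [hq, mul_comm]⟩

lemma exists_eq_C_mul_X_mul_quad_and_w_eq : ∃ c₂ c₃ : K, c₂ ≠ 0 ∧ c₃ ≠ 0 ∧
    P = C c₂ * (X * S.quad) ∧ S.w = C (c₂ * S.k) * S.quad - C c₃ * (S.U * S.V) := by
  obtain ⟨c₂, hc₂, hPc⟩ := hS.exists_eq_C_mul_X_mul_quad hP hV h
  set R := C (c₂ * S.k) * S.quad - S.w with hR
  have hflowV : S.flow P S.V = X * R := by
    rw [flow_V, hPc, hR, C_mul]; ring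
  have hV_dvd : S.V ∣ R :=
    hS.isCoprime_V_X.dvd_of_dvd_mul_left (hflowV ▸ hS.V_dvd_flow_V hP hV h)
  have hU_dvd : S.U ∣ R := by
    have hk : C S.k * S.flow P S.U = C S.h * S.flow P S.V + S.U * S.w := by
      rw [flow_U, flow_V, U]; ring
    have : S.U ∣ C S.h * (X * R) := by
      rw [← hflowV, eq_sub_of_add_eq hk.symm]
      exact dvd_sub ((hS.U_dvd_flow_U hP hV h).mul_left _) (dvd_mul_right _ _)
    exact hS.isCoprime_U_X.dvd_of_dvd_mul_left (dvd_of_dvd_C_mul hS.h_ne_zero this)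
  obtain ⟨q, hq⟩ := hS.isCoprime_U_V.mul_dvd hU_dvd hV_dvd
  have hq0 : q ≠ 0 := by
    rintro rfl; exact hV (by rw [hflowV, hq, mul_zero, mul_zero])
  have hdeg : R.natDegree ≤ 2 := by
    refine (natDegree_sub_le _ _).trans (max_le ?_ S.natDegree_w_le)
    exact (natDegree_C_mul_le _ _).trans hS.natDegree_quad.le
  rw [hq, natDegree_mul (mul_ne_zero hS.U_ne_zero hS.V_ne_zero) hq0,
    natDegree_mul hS.U_ne_zero hS.V_ne_zero, hS.natDegree_U, hS.natDegree_V] at hdeg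
  obtain ⟨c₃, rfl⟩ := natDegree_eq_zero.mp (show q.natDegree = 0 by lia)
  refine ⟨c₂, c₃, hc₂, C_ne_zero.mp hq0, hPc, ?_⟩
  linear_combination hR - hq

end Nondegenerate

end DifferentialQuadratic

namespace DifferentialQuadratic

variable {K : Type*} [Field K] {S : DifferentialQuadratic K} {P : K[X]} {c₂ c₃ : K}

lemma flow_mul_of_eq_mul {p q u v : K[X]} (hp : S.flow P p = p * u) (hq : S.flow P q = q * v) :
    S.flow P (p * q) = p * q * (u + v) := by
  rw [flow_mul, hp, hq]; ring

lemma flow_pow_of_eq_mul {p u : K[X]} (hp : S.flow P p = p * u) (n : ℕ) :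
    S.flow P (p ^ n) = p ^ n * (n * u) := by
  rw [Derivation.leibniz_pow, hp, smul_eq_mul, nsmul_eq_mul]
  rcases n with - | n
  · simp
  · rw [Nat.add_sub_cancel, pow_succ]; ring

lemma coeff_w_zero : S.w.coeff 0 = S.bracket S.k S.e := by
  simp [w]

lemma coeff_w_two : S.w.coeff 2 = -S.bracket S.h S.k := by
  simp [w]

section Brackets

variable (hw : S.w = C (c₂ * S.k) * S.quad - C c₃ * (S.U * S.V))
include hw

lemma bracket_h_k_eq : S.bracket S.h S.k = (c₃ - c₂) * (S.h * S.k) := by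
  rw [← neg_neg (S.bracket S.h S.k), ← coeff_w_two, hw]
  have : C (c₂ * S.k) * S.quad - C c₃ * (S.U * S.V) = C ((c₂ - c₃) * (S.h * S.k)) * X ^ 2
      - C (2 * c₂ * S.k ^ 2 + c₃ * (S.h * S.e - S.k ^ 2)) * X + C ((c₃ - c₂) * (S.k * S.e)) := by
    simp only [quad, U, V, map_sub, map_mul, map_add, map_pow, map_ofNat]; ring
  rw [this, coeff_add, coeff_sub, coeff_C_mul_X_pow, coeff_C_mul_X, coeff_C]
  simp only [↓reduceIte, OfNat.ofNat_ne_one, OfNat.ofNat_ne_zero]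
  ring

lemma bracket_k_e_eq : S.bracket S.k S.e = (c₃ - c₂) * (S.k * S.e) := by
  rw [← coeff_w_zero, hw]
  simp only [quad, U, V, map_mul, coeff_sub, coeff_add, mul_coeff_zero, coeff_C_zero, coeff_X_pow,
    coeff_ofNat_mul, coeff_X_zero, OfNat.zero_ne_ofNat, ↓reduceIte]
  ring

lemma flow_C_k_eq_mul :
    S.flow P (C S.k) = C S.k * ((C c₃ - C c₂) * (X * S.U + S.V)) := by
  rw [flow_apply, derivative_C, mul_zero, zero_sub, vectorField_C_k, bracket_h_k_eq hw,
    bracket_k_e_eq hw]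
  simp only [U, V, map_sub, map_mul]
  ring

end Brackets

/-! ### Logarithmic derivatives along the flow -/

section LogarithmicDerivatives

variable (hP : P = C c₂ * (X * S.quad))
include hP

lemma flow_X_eq_mul : S.flow P X = X * (C c₂ * S.quad) := by
  rw [flow_X, hP]; ring

lemma flow_quad_eq_mul : S.flow P S.quad = S.quad * (2 * C c₂ * (X * S.U)) := by
  rw [flow_quad, hP]; ring

variable (hw : S.w = C (c₂ * S.k) * S.quad - C c₃ * (S.U * S.V))
include hw

lemma flow_U_eq_mul : S.flow P S.U = S.U * (C c₂ * S.quad + C c₃ * S.V) := by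
  rw [flow_U, hP, hw, C_mul, U]; ring

lemma flow_V_eq_mul : S.flow P S.V = S.V * (C c₃ * (X * S.U)) := by
  rw [flow_V, hP, hw, C_mul]; ring

lemma flow_V_eq : S.flow P S.V = C c₃ * (S.U * S.V * X) := by
  rw [flow_V_eq_mul hP hw]; ring

variable {γ₂ γ₃ : K[X]} (h₂ : S.flow P (C c₂) = C c₂ * γ₂) (h₃ : S.flow P (C c₃) = C c₃ * γ₃)
include h₂ h₃

lemma two_mul_sub_eq_of_hasFirstIntegral (hS : S.Nondegenerate) (hc₂ : c₂ ≠ 0) (hc₃ : c₃ ≠ 0)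
    (h : S.HasFirstIntegral P) :
    2 * (γ₃ - γ₂) = C (c₃ - 4 * c₂) * (X * S.U + S.V) := by
  have hX := flow_X_eq_mul hP
  have hQ := flow_quad_eq_mul hP
  have hden := flow_mul_of_eq_mul
    (flow_mul_of_eq_mul (flow_U_eq_mul hP hw) (flow_V_eq_mul hP hw)) hX
  have hY := flow_mul_of_eq_mul h₃ hden
  have hflow := flow_mul_of_eq_mul h₂ (flow_mul_of_eq_mul hX hQ)
  have hden0 : S.U * S.V * X ≠ 0 := hS.squarefree_mul.ne_zero
  have hP0 : P ≠ 0 := hP ▸ mul_ne_zero (C_ne_zero.mpr hc₂) (mul_ne_zero X_ne_zero hS.quad_ne_zero)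
  have hY0 : C c₃ * (S.U * S.V * X) ≠ 0 := mul_ne_zero (C_ne_zero.mpr hc₃) hden0
  rw [← hP] at hflow
  rw [HasFirstIntegral, flow_V_eq hP hw,
    flow_mul_of_eq_mul (flow_pow_of_eq_mul hY 2) (flow_pow_of_eq_mul hQ 6),
    flow_mul_of_eq_mul (flow_pow_of_eq_mul hflow 2) (flow_pow_of_eq_mul hden 3),
    mul_left_comm] at h
  have := mul_left_cancel₀ (mul_ne_zero (pow_ne_zero 2 hP0) (pow_ne_zero 3 hden0))
    (mul_left_cancel₀ (mul_ne_zero (pow_ne_zero 2 hY0) (pow_ne_zero 6 hS.quad_ne_zero)) h)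
  simp only [quad_eq, map_sub, map_mul, map_ofNat] at this ⊢
  push_cast at this
  linear_combination this

lemma flow_w_eq : S.flow P S.w =
    S.w * (γ₂ + (C c₃ - C c₂) * (X * S.U + S.V) + 2 * C c₂ * (X * S.U))
      - C c₃ * (S.U * S.V) * (γ₃ - γ₂) := by
  have hQ := flow_mul_of_eq_mul (flow_mul_of_eq_mul h₂ (flow_C_k_eq_mul hw))
    (flow_quad_eq_mul hP)
  have hUV := flow_mul_of_eq_mul h₃
    (flow_mul_of_eq_mul (flow_U_eq_mul hP hw) (flow_V_eq_mul hP hw))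
  nth_rewrite 1 [hw]
  rw [C_mul, map_sub, hQ, hUV, hw, C_mul, quad_eq]
  ring

end LogarithmicDerivatives

namespace Nondegenerate

variable (hS : S.Nondegenerate) (hw : S.w = C (c₂ * S.k) * S.quad - C c₃ * (S.U * S.V))
include hS hw

lemma isCoprime_w_mul (hc₂ : c₂ ≠ 0) : IsCoprime S.w (S.U * S.V) := by
  have hu : IsUnit (C (c₂ * S.k)) := isUnit_C.mpr (mul_ne_zero hc₂ hS.k_ne_zero).isUnit
  have hQ : IsCoprime (C (c₂ * S.k) * S.quad + S.U * S.V * (-C c₃)) (S.U * S.V) :=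
    ((isCoprime_mul_unit_left_left hu _ _).mpr
      (hS.isCoprime_quad_U.mul_right hS.isCoprime_quad_V)).add_mul_left_left _
  convert hQ using 1
  rw [hw]; ring

lemma not_w_dvd [CharZero K] : ¬ S.w ∣ X * S.U + S.V := by
  rintro ⟨g, hg⟩
  have hXU : X * S.U + S.V = C S.h * X ^ 2 + C S.e := by rw [U, V]; ring
  have hw2 : S.w.coeff 2 = (c₂ - c₃) * (S.h * S.k) := by
    rw [coeff_w_two, bracket_h_k_eq hw]; ring
  have hw0 : S.w.coeff 0 = (c₃ - c₂) * (S.k * S.e) := by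
    rw [coeff_w_zero, bracket_k_e_eq hw]
  rw [hXU] at hg
  have hg0 : S.e = S.w.coeff 0 * g.coeff 0 := by
    simpa [mul_coeff_zero] using congrArg (coeff · 0) hg
  have hc : c₂ - c₃ ≠ 0 := fun hc => hS.e_ne_zero (by
    rw [hg0, hw0]; linear_combination (-S.k * S.e * g.coeff 0) * hc)
  have hdeg : 2 ≤ S.w.natDegree := le_natDegree_of_ne_zero
    (hw2 ▸ mul_ne_zero hc (mul_ne_zero hS.h_ne_zero hS.k_ne_zero))
  have hdeg' : (S.w * g).natDegree = 2 := by
    have := hS.h_ne_zero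
    rw [← hg]; compute_degree!
  have hw' : S.w ≠ 0 := ne_zero_of_natDegree_gt hdeg
  have hg' : g ≠ 0 := by rintro rfl; simp at hdeg'
  rw [natDegree_mul hw' hg'] at hdeg'
  obtain ⟨t, rfl⟩ := natDegree_eq_zero.mp (show g.natDegree = 0 by lia)
  have hg2 : S.h = S.w.coeff 2 * t := by
    simpa [coeff_C] using congrArg (coeff · 2) hg
  rw [coeff_C_zero, hw0] at hg0
  rw [hw2] at hg2
  refine mul_ne_zero two_ne_zero (mul_ne_zero hS.h_ne_zero hS.e_ne_zero) ?_
  linear_combination S.e * hg2 + S.h * hg0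

lemma eq_four_mul [CharZero K] (hP : P = C c₂ * (X * S.quad)) (hc₂ : c₂ ≠ 0) (hc₃ : c₃ ≠ 0)
    (h : S.HasFirstIntegral P) (hdvd : S.w ∣ S.flow P S.w) : c₃ = 4 * c₂ := by
  have hlog {c : K} (hc : c ≠ 0) : S.flow P (C c) = C c * (C c⁻¹ * S.flow P (C c)) := by
    rw [← mul_assoc, ← C_mul, mul_inv_cancel₀ hc, C_1, one_mul]
  have hγ := two_mul_sub_eq_of_hasFirstIntegral hP hw (hlog hc₂) (hlog hc₃) hS hc₂ hc₃ h
  have hD := flow_w_eq hP hw (hlog hc₂) (hlog hc₃)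
  set γ := C c₃⁻¹ * S.flow P (C c₃) - C c₂⁻¹ * S.flow P (C c₂)
  have hwγ : S.w ∣ γ := by
    have : S.w ∣ S.U * S.V * γ := by
      refine dvd_of_dvd_C_mul hc₃ ?_
      rw [← mul_assoc, ← dvd_sub_right (dvd_mul_right S.w _), ← hD]
      exact hdvd
    exact (hS.isCoprime_w_mul hw hc₂).dvd_of_dvd_mul_left this
  by_contra hne
  exact hS.not_w_dvd hw (dvd_of_dvd_C_mul (sub_ne_zero.mpr hne) (hγ ▸ hwγ.mul_left 2))

end Nondegenerate

lemma Nondegenerate.flow_V_mul_quad [CharZero K] (hS : S.Nondegenerate) (hw : S.w ≠ 0)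
    (hsextic : S.sextic = 2 * S.w * P) (hP : P ≠ 0) (hV : S.flow P S.V ≠ 0)
    (h : S.HasFirstIntegral P) : S.flow P S.V * S.quad = 4 * (S.U * S.V * P) := by
  obtain ⟨c₂, c₃, hc₂, hc₃, hPc, hwc⟩ := hS.exists_eq_C_mul_X_mul_quad_and_w_eq hP hV h
  have hc := hS.eq_four_mul hwc hPc hc₂ hc₃ h (S.w_dvd_flow_w hw hsextic)
  rw [flow_V_eq hPc hwc, hPc, hc, C_mul, map_ofNat]
  ring

end DifferentialQuadratic

namespace DifferentialQuadratic

section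

variable {K : Type*} [Field K] (S : DifferentialQuadratic K)

lemma C_mul_a_eq {u : K} (hh : S.bracket u S.h = 0) (hk : S.bracket u S.k = 0)
    (he : S.bracket u S.e = 0) : C (S.d₂ u) * S.a = C (S.d₁ u) * S.b := by
  have hh' := congrArg (C : K → K[X]) hh
  have hk' := congrArg (C : K → K[X]) hk
  have he' := congrArg (C : K → K[X]) he
  simp only [bracket, map_sub, map_mul, map_zero] at hh' hk' he'
  rw [a, b]
  linear_combination -X ^ 2 * hh' + 2 * X * hk' + he'

lemma bracket_eq_zero_of_w_eq_zero (hw : S.w = 0) :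
    S.bracket S.h S.k = 0 ∧ S.bracket S.h S.e = 0 ∧ S.bracket S.k S.e = 0 := by
  have hcoeff (i : ℕ) : S.w.coeff i = 0 := by rw [hw, coeff_zero]
  refine ⟨?_, ?_, ?_⟩
  · simpa [w] using hcoeff 2
  · simpa [w, coeff_X, coeff_C] using hcoeff 1
  · simpa [w] using hcoeff 0

lemma isCoprime_w_derivative_w (hd : S.disc ≠ 0) : IsCoprime S.w (derivative S.w) :=
  isCoprime_of_eq_C (4 * C (S.bracket S.h S.k)) (derivative S.w) hd (by rw [C_disc]; ring)

/-! ### Polynomials in the slope `s` -/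

/-- The derivative of the constant `u` along `d₁ + s d₂`, as a polynomial in `s`. -/
def lin (u : K) : K[X] := C (S.d₁ u) + C (S.d₂ u) * X

/-- A quarter of the discriminant of `a + s b`, as a polynomial in `s`. -/
def radicand : K[X] := S.lin S.k ^ 2 + S.lin S.h * S.lin S.e

/-- The derivation `d₁ + s d₂` on polynomials in `s`, with `s` constant. -/
def derS : Derivation ℤ K[X] K[X] := coeffDer S.d₁ + (X : K[X]) • coeffDer S.d₂

lemma derS_apply (p : K[X]) : S.derS p = coeffDer S.d₁ p + X * coeffDer S.d₂ p := rfl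

lemma natDegree_derS_le (p : K[X]) : (S.derS p).natDegree ≤ p.natDegree + 1 := by
  have h₁ := natDegree_coeffDer_le S.d₁ p
  have h₂ := natDegree_coeffDer_le S.d₂ p
  have hX : (X : K[X]).natDegree ≤ 1 := natDegree_X_le
  rw [derS_apply]
  exact (natDegree_add_le _ _).trans (max_le (by lia) (natDegree_mul_le.trans (by lia)))

lemma exists_radicand_eq : ∃ α β γ : K,
    S.radicand = C α * X ^ 2 + C β * X + C γ ∧ discrim α β γ = S.disc := by
  refine ⟨S.d₂ S.k ^ 2 + S.d₂ S.h * S.d₂ S.e,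
    2 * S.d₁ S.k * S.d₂ S.k + S.d₁ S.h * S.d₂ S.e + S.d₂ S.h * S.d₁ S.e,
    S.d₁ S.k ^ 2 + S.d₁ S.h * S.d₁ S.e, ?_, ?_⟩
  · simp only [radicand, lin, map_add, map_mul, map_pow, map_ofNat]
    ring
  · simp only [discrim, disc, bracket]
    ring

lemma squarefree_radicand (hd : S.disc ≠ 0) : Squarefree S.radicand := by
  obtain ⟨α, β, γ, h, hdisc⟩ := S.exists_radicand_eq
  exact h ▸ squarefree_quadratic α β γ (hdisc ▸ hd)

lemma not_isUnit_radicand (hd : S.disc ≠ 0) : ¬ IsUnit S.radicand := by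
  obtain ⟨α, β, γ, h, hdisc⟩ := S.exists_radicand_eq
  rw [Polynomial.isUnit_iff, h]
  rintro ⟨c, -, hc⟩
  have hα : 0 = α := by simpa [coeff_C, coeff_X] using congrArg (coeff · 2) hc
  have hβ : 0 = β := by simpa [coeff_C] using congrArg (coeff · 1) hc
  exact hd (by rw [← hdisc, discrim, ← hα, ← hβ]; ring)

lemma eq_zero_of_sq_eq_sq_mul_radicand (hd : S.disc ≠ 0) {α β : K[X]}
    (h : α ^ 2 = β ^ 2 * S.radicand) : β = 0 := by
  by_contra hβ
  obtain ⟨γ, rfl⟩ := (IsIntegrallyClosed.pow_dvd_pow_iff two_ne_zero).mp (Dvd.intro _ h.symm)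
  have hγ : S.radicand = γ * γ :=
    mul_left_cancel₀ (pow_ne_zero 2 hβ) (by rw [← h]; ring)
  have hunit : IsUnit γ := S.squarefree_radicand hd γ (hγ ▸ dvd_rfl)
  exact S.not_isUnit_radicand hd (hγ ▸ hunit.mul hunit)

lemma radicand_dvd_derS [CharZero K] (hd : S.disc ≠ 0) {β γ : K[X]} (hβ : β ≠ 0) (hγ : γ ≠ 0)
    (h : γ ^ 2 * S.derS (β ^ 2 * S.radicand) = (β ^ 2 * S.radicand) * S.derS (γ ^ 2)) :
    S.radicand ∣ S.derS S.radicand := by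
  have hsq := S.squarefree_radicand hd
  refine dvd_of_squarefree_of_forall_prime_dvd hsq fun π hπ hπr => ?_
  have hdvd : π ∣ S.derS π := by
    refine dvd_derivation_of_emultiplicity_ne S.derS hπ
      (mul_ne_zero (pow_ne_zero 2 hβ) hsq.ne_zero) (pow_ne_zero 2 hγ) h ?_
    rw [emultiplicity_mul hπ, emultiplicity_pow hπ, emultiplicity_pow hπ,
      emultiplicity_eq_one_of_squarefree hsq hπ hπr,
      (FiniteMultiplicity.of_prime_left hπ hβ).emultiplicity_eq_multiplicity,
      (FiniteMultiplicity.of_prime_left hπ hγ).emultiplicity_eq_multiplicity]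
    norm_cast
    lia
  obtain ⟨q, hq⟩ := hπr
  rw [hq, Derivation.leibniz]
  exact dvd_add (dvd_mul_right _ _) (hdvd.mul_left _)

end

/-! ### Extensions by a root of `a + s b` -/

/-- A field extension of `K` containing a constant `s` and a root `n` of `a + s b`, both
transcendental over `K`, with a derivation `Z` that acts on `K` as `d₁ + s d₂`. -/
structure RootExtension {K : Type*} [Field K] (S : DifferentialQuadratic K) (E : Type*) [Field E]
    [Algebra K E] where
  Z : Derivation ℤ E E
  s : E
  n : E
  Z_algebraMap : ∀ u : K,
    Z (algebraMap K E u) = algebraMap K E (S.d₁ u) + s * algebraMap K E (S.d₂ u)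
  Z_s : Z s = 0
  transcendental_s : Transcendental K s
  transcendental_n : Transcendental K n
  aeval_a : aeval n S.a + s * aeval n S.b = 0
  Z_n_ne_zero : Z n ≠ 0

namespace RootExtension

section

variable {K : Type*} [Field K] {S : DifferentialQuadratic K} {E : Type*} [Field E] [Algebra K E]
  (R : RootExtension S E)
include R

lemma eq_zero_of_aeval_s {p : K[X]} (h : aeval R.s p = 0) : p = 0 :=
  transcendental_iff.mp R.transcendental_s p h

lemma eq_zero_of_aeval_n {p : K[X]} (h : aeval R.n p = 0) : p = 0 :=
  transcendental_iff.mp R.transcendental_n p h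

lemma aeval_n_ne_zero {p : K[X]} (hp : p ≠ 0) : aeval R.n p ≠ 0 :=
  fun h => hp (R.eq_zero_of_aeval_n h)

lemma Z_aeval_n (p : K[X]) :
    aeval R.n S.b * R.Z (aeval R.n p) =
      aeval R.n (S.vectorField p) + aeval R.n (derivative p) * (aeval R.n S.b * R.Z R.n) := by
  rw [derivation_aeval R.Z S.d₁ S.d₂ R.s R.Z_algebraMap, S.vectorField_apply, map_sub, map_mul,
    map_mul]
  linear_combination (aeval R.n (coeffDer S.d₂ p)) * R.aeval_a

lemma Z_aeval_s (p : K[X]) : R.Z (aeval R.s p) = aeval R.s (S.derS p) := by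
  rw [derivation_aeval R.Z S.d₁ S.d₂ R.s R.Z_algebraMap, S.derS_apply, R.Z_s, map_add, map_mul,
    aeval_X, mul_zero, add_zero]

lemma aeval_lin (u : K) : aeval R.s (S.lin u) = R.Z (algebraMap K E u) := by
  rw [R.Z_algebraMap, lin, map_add, map_mul, aeval_C, aeval_C, aeval_X, mul_comm]

lemma aeval_sextic :
    aeval R.n S.sextic + 2 * aeval R.n S.w * (aeval R.n S.b * R.Z R.n) = 0 := by
  have hroot := congrArg R.Z R.aeval_a
  simp only [map_add, Derivation.leibniz, R.Z_s, smul_eq_mul, map_zero] at hroot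
  have ha := R.Z_aeval_n S.a
  have hb := R.Z_aeval_n S.b
  have hw := congrArg (aeval R.n) S.wronskian_a_b
  simp only [map_sub, map_mul, map_ofNat] at hw
  simp only [sextic, map_sub, map_mul]
  linear_combination (aeval R.n S.b) ^ 2 * hroot - aeval R.n S.b * ha + aeval R.n S.a * hb
    - (aeval R.n S.b * R.Z R.n) * hw - (aeval R.n S.b * R.Z (aeval R.n S.b)) * R.aeval_a

lemma d_eq_zero_of_C_mul_a_eq (hb : S.b ≠ 0) {u : K}
    (hu : C (S.d₂ u) * S.a = C (S.d₁ u) * S.b) : S.d₁ u = 0 ∧ S.d₂ u = 0 := by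
  have hlin : S.lin u = 0 := by
    refine R.eq_zero_of_aeval_s (mul_right_cancel₀ (R.aeval_n_ne_zero hb) ?_)
    have := congrArg (aeval R.n) hu
    simp only [map_mul, aeval_C] at this
    rw [R.aeval_lin, R.Z_algebraMap]
    linear_combination algebraMap K E (S.d₂ u) * R.aeval_a - this
  constructor
  · simpa [lin] using congrArg (coeff · 0) hlin
  · simpa [lin, coeff_C] using congrArg (coeff · 1) hlin

lemma b_eq_zero_of_w_eq_zero (hw : S.w = 0) : S.b = 0 := by
  obtain ⟨hhk, hhe, hke⟩ := S.bracket_eq_zero_of_w_eq_zero hw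
  have hself (u : K) : S.bracket u u = 0 := by rw [bracket]; ring
  have hswap {u v : K} (h : S.bracket u v = 0) : S.bracket v u = 0 := by
    rw [bracket] at h ⊢; linear_combination -h
  by_contra hb
  have hh := R.d_eq_zero_of_C_mul_a_eq hb (S.C_mul_a_eq (hself S.h) hhk hhe)
  have hk := R.d_eq_zero_of_C_mul_a_eq hb (S.C_mul_a_eq (hswap hhk) (hself S.k) hke)
  have he := R.d_eq_zero_of_C_mul_a_eq hb (S.C_mul_a_eq (hswap hhe) (hswap hke) (hself S.e))
  exact hb (by simp [b, hh.2, hk.2, he.2])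

lemma a_eq_zero_of_b_eq_zero (hb : S.b = 0) : S.a = 0 :=
  R.eq_zero_of_aeval_n (by simpa [hb] using R.aeval_a)

lemma b_ne_zero [CharZero K] (hw : S.w ≠ 0) : S.b ≠ 0 := by
  intro hb
  have := S.wronskian_a_b
  rw [R.a_eq_zero_of_b_eq_zero hb, hb, mul_zero, zero_mul, sub_zero] at this
  exact hw ((mul_eq_zero.mp this.symm).resolve_left two_ne_zero)

/-! ### The case `w ∣ sextic` -/

lemma exists_sextic_eq [CharZero K] (hw : S.w ≠ 0) (hdvd : S.w ∣ S.sextic) :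
    ∃ P, S.sextic = 2 * S.w * P ∧ aeval R.n P = -(aeval R.n S.b * R.Z R.n) := by
  obtain ⟨q, hq⟩ := hdvd
  have hP : S.sextic = 2 * S.w * (C (1 / 2) * q) := by
    have : (2 : K[X]) * C (1 / 2) = 1 := by
      rw [← map_ofNat C, ← C_mul, mul_one_div_cancel two_ne_zero, C_1]
    rw [hq]; linear_combination -S.w * q * this
  refine ⟨_, hP, ?_⟩
  have hsextic := R.aeval_sextic
  rw [hP, map_mul, map_mul, map_ofNat] at hsextic
  have : CharZero E := charZero_of_injective_algebraMap (algebraMap K E).injective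
  exact mul_left_cancel₀ (mul_ne_zero two_ne_zero (R.aeval_n_ne_zero hw))
    (by linear_combination hsextic)

section

variable {R} {P : K[X]} (hP : aeval R.n P = -(aeval R.n S.b * R.Z R.n))
include hP

lemma aeval_flow (p : K[X]) :
    aeval R.n (S.flow P p) = -(aeval R.n S.b * R.Z (aeval R.n p)) := by
  rw [R.Z_aeval_n p, S.flow_apply, map_sub, map_mul, hP]
  ring

lemma aeval_flow_V {Y : E} (hY : R.Z (aeval R.n S.V) = Y * R.Z R.n) :
    aeval R.n (S.flow P S.V) = Y * aeval R.n P := by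
  rw [aeval_flow hP, hY, hP]; ring

lemma mul_flow_eq_mul_flow {F G : K[X]} {c r : E} (hr : r ≠ 0) (hc : R.Z c = 0) (hr' : R.Z r = 0)
    (h : c * aeval R.n F = r * aeval R.n G) : G * S.flow P F = F * S.flow P G := by
  rw [← sub_eq_zero]
  refine R.eq_zero_of_aeval_n ?_
  have hZ := congrArg R.Z h
  simp only [Derivation.leibniz, hc, hr', smul_eq_mul, mul_zero, add_zero] at hZ
  rw [map_sub, map_mul, map_mul, aeval_flow hP, aeval_flow hP]
  refine mul_left_cancel₀ hr ?_
  linear_combination aeval R.n S.b * (R.Z (aeval R.n F) * h - aeval R.n F * hZ)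

end

lemma eq_of_w_dvd_sextic [CharZero K] (hS : S.Nondegenerate) (hw : S.w ≠ 0)
    (hdvd : S.w ∣ S.sextic) {Y c : E} (hY : R.Z (aeval R.n S.V) = Y * R.Z R.n)
    (hY0 : Y ≠ 0) (hc : R.Z c = 0)
    (hcY : c * Y ^ 2 * (aeval R.n S.quad) ^ 6 =
      -64 * (aeval R.n S.U * aeval R.n S.V * R.n) ^ 3) :
    Y * aeval R.n S.quad = 4 * aeval R.n S.U * aeval R.n S.V := by
  have : CharZero E := charZero_of_injective_algebraMap (algebraMap K E).injective
  obtain ⟨P, hsextic, hPn⟩ := R.exists_sextic_eq hw hdvd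
  have hPn0 : aeval R.n P ≠ 0 := by
    rw [hPn]
    exact neg_ne_zero.mpr (mul_ne_zero (R.aeval_n_ne_zero (R.b_ne_zero hw)) R.Z_n_ne_zero)
  have hflow := aeval_flow_V hPn hY
  have hV : S.flow P S.V ≠ 0 := by
    intro h
    rw [h, map_zero] at hflow
    exact mul_ne_zero hY0 hPn0 hflow.symm
  have hint : S.HasFirstIntegral P := by
    have h64 : R.Z (-64 : E) = 0 := by exact_mod_cast R.Z.map_intCast (-64)
    refine mul_flow_eq_mul_flow hPn (c := c) (r := -64) (by norm_num) hc h64 ?_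
    simp only [map_mul, map_pow, aeval_X, hflow]
    linear_combination (aeval R.n P) ^ 2 * hcY
  have hP0 : P ≠ 0 := by rintro rfl; exact hPn0 (map_zero _)
  have key := congrArg (aeval R.n) (hS.flow_V_mul_quad hw hsextic hP0 hV hint)
  simp only [map_mul, map_ofNat, hflow] at key
  exact mul_left_cancel₀ hPn0 (by linear_combination key)

end

/-! ### Galois conjugation over `K(s)` -/

section Conjugation

variable {K : Type*} [Field K] {S : DifferentialQuadratic K} {E : Type*} [Field E] [Algebra K E]
  (R : RootExtension S E)

/-- `n Zh - Zk`, a square root of the radicand. -/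
def root : E := R.n * R.Z (algebraMap K E S.h) - R.Z (algebraMap K E S.k)

/-- The Galois conjugate of `n` over the field of rational functions of `s`. -/
def conjN : E := (R.Z (algebraMap K E S.k) - R.root) / R.Z (algebraMap K E S.h)

lemma root_sq : R.root ^ 2 = aeval R.s S.radicand := by
  have hquad := R.aeval_a
  simp only [a, b, map_sub, map_mul, map_pow, aeval_C, aeval_X, map_ofNat] at hquad
  simp only [radicand, map_add, map_mul, map_pow, R.aeval_lin, root, R.Z_algebraMap]
  linear_combination (algebraMap K E (S.d₁ S.h) + R.s * algebraMap K E (S.d₂ S.h)) * hquad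

lemma aeval_b_mul_root : aeval R.n S.b * R.root = aeval R.n S.w := by
  rw [← S.vectorField_U, U, map_sub, vectorField_mul, vectorField_X, vectorField_C, vectorField_C,
    root, R.Z_algebraMap, R.Z_algebraMap]
  simp only [map_sub, map_add, map_mul, map_zero, aeval_C, aeval_X]
  linear_combination
    (R.n * algebraMap K E (S.d₂ S.h) - algebraMap K E (S.d₂ S.k)) * R.aeval_a

lemma Z_h_ne_zero (hd : S.disc ≠ 0) : R.Z (algebraMap K E S.h) ≠ 0 := by
  intro hZh
  have hlin : S.lin S.h = 0 := R.eq_zero_of_aeval_s (by rw [R.aeval_lin, hZh])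
  have h₁ : S.d₁ S.h = 0 := by simpa [lin] using congrArg (coeff · 0) hlin
  have h₂ : S.d₂ S.h = 0 := by simpa [lin, coeff_C] using congrArg (coeff · 1) hlin
  exact hd (by simp [disc, bracket, h₁, h₂])

lemma eq_zero_of_add_mul_root (hd : S.disc ≠ 0) {α β : K[X]}
    (h : aeval R.s α + aeval R.s β * R.root = 0) : α = 0 ∧ β = 0 := by
  have hsq : α ^ 2 = β ^ 2 * S.radicand := by
    rw [← sub_eq_zero]
    refine R.eq_zero_of_aeval_s ?_
    simp only [map_sub, map_mul, map_pow, ← R.root_sq]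
    linear_combination (aeval R.s α - aeval R.s β * R.root) * h
  obtain rfl := S.eq_zero_of_sq_eq_sq_mul_radicand hd hsq
  exact ⟨R.eq_zero_of_aeval_s (by simpa using h), rfl⟩

lemma root_ne_zero (hd : S.disc ≠ 0) : R.root ≠ 0 := by
  intro h
  exact one_ne_zero (R.eq_zero_of_add_mul_root hd (α := 0) (β := 1) (by simp [h])).2

/-- `u` and `v` are Galois conjugate over the field of rational functions of `s`. -/
def IsConj (u v : E) : Prop :=
  ∃ α β γ : K[X], γ ≠ 0 ∧ aeval R.s γ * u = aeval R.s α + aeval R.s β * R.root ∧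
    aeval R.s γ * v = aeval R.s α - aeval R.s β * R.root

namespace IsConj

variable {R} {u v u' v' : E}

lemma add (h : R.IsConj u v) (h' : R.IsConj u' v') : R.IsConj (u + u') (v + v') := by
  obtain ⟨α, β, γ, hγ, hu, hv⟩ := h
  obtain ⟨α', β', γ', hγ', hu', hv'⟩ := h'
  refine ⟨γ' * α + γ * α', γ' * β + γ * β', γ * γ', mul_ne_zero hγ hγ', ?_, ?_⟩ <;>
    simp only [map_add, map_mul]
  · linear_combination aeval R.s γ' * hu + aeval R.s γ * hu'
  · linear_combination aeval R.s γ' * hv + aeval R.s γ * hv'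

lemma mul (h : R.IsConj u v) (h' : R.IsConj u' v') : R.IsConj (u * u') (v * v') := by
  obtain ⟨α, β, γ, hγ, hu, hv⟩ := h
  obtain ⟨α', β', γ', hγ', hu', hv'⟩ := h'
  refine ⟨α * α' + β * β' * S.radicand, α * β' + α' * β, γ * γ', mul_ne_zero hγ hγ', ?_, ?_⟩ <;>
    simp only [map_add, map_mul, ← R.root_sq]
  · linear_combination aeval R.s γ' * u' * hu + (aeval R.s α + aeval R.s β * R.root) * hu'
  · linear_combination aeval R.s γ' * v' * hv + (aeval R.s α - aeval R.s β * R.root) * hv'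

lemma inv (h : R.IsConj u v) (hu₀ : u ≠ 0) (hv₀ : v ≠ 0) : R.IsConj u⁻¹ v⁻¹ := by
  obtain ⟨α, β, γ, hγ, hu, hv⟩ := h
  have hγ₀ : aeval R.s γ ≠ 0 := fun h => hγ (R.eq_zero_of_aeval_s h)
  have hnorm : aeval R.s (α ^ 2 - β ^ 2 * S.radicand) = (aeval R.s γ) ^ 2 * (u * v) := by
    simp only [map_sub, map_mul, map_pow, ← R.root_sq]
    linear_combination -aeval R.s γ * v * hu - (aeval R.s α + aeval R.s β * R.root) * hv
  refine ⟨γ * α, -(γ * β), α ^ 2 - β ^ 2 * S.radicand, ?_, ?_, ?_⟩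
  · intro h
    rw [h, map_zero] at hnorm
    exact mul_ne_zero (pow_ne_zero 2 hγ₀) (mul_ne_zero hu₀ hv₀) hnorm.symm
  · rw [hnorm]; simp only [map_mul, map_neg]; field_simp
    linear_combination hv
  · rw [hnorm]; simp only [map_mul, map_neg]; field_simp
    linear_combination hu

/-- Galois conjugation commutes with `Z` up to a logarithmic derivative of the radicand, so a
constant of `Z` is fixed by it unless that logarithmic derivative is a polynomial. -/
lemma eq_or_radicand_dvd [CharZero K] (hd : S.disc ≠ 0) (h : R.IsConj u v) (hu₀ : R.Z u = 0) :
    u = v ∨ S.radicand ∣ S.derS S.radicand := by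
  have : CharZero E := charZero_of_injective_algebraMap (algebraMap K E).injective
  obtain ⟨α, β, γ, hγ, hu, hv⟩ := h
  by_cases hβ : β = 0
  · left
    have hγ₀ : aeval R.s γ ≠ 0 := fun h => hγ (R.eq_zero_of_aeval_s h)
    exact mul_left_cancel₀ hγ₀ (by rw [hu, hv, hβ]; simp)
  right
  apply S.radicand_dvd_derS hd hβ hγ
  have hZu := congrArg R.Z hu
  simp only [map_add, Derivation.leibniz, hu₀, R.Z_aeval_s, smul_eq_mul, mul_zero, zero_add] at hZu
  have hZroot : 2 * R.root * R.Z R.root = aeval R.s (S.derS S.radicand) := by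
    have := congrArg R.Z R.root_sq
    rw [R.Z_aeval_s, sq, Derivation.leibniz, smul_eq_mul] at this
    linear_combination this
  have hcoeff := (R.eq_zero_of_add_mul_root hd
    (α := 2 * S.radicand * S.derS γ * α - 2 * S.radicand * γ * S.derS α)
    (β := 2 * S.radicand * S.derS γ * β - 2 * S.radicand * γ * S.derS β
      - γ * β * S.derS S.radicand) (by
        simp only [map_sub, map_mul, map_ofNat, ← hZroot, ← R.root_sq]
        linear_combination 2 * R.root ^ 2 * (aeval R.s γ * hZu - aeval R.s (S.derS γ) * hu))).2
  simp only [sq, Derivation.leibniz, smul_eq_mul]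
  linear_combination -γ * β * hcoeff

end IsConj

lemma isConj_n_conjN (hd : S.disc ≠ 0) : R.IsConj R.n R.conjN := by
  have hZh := R.Z_h_ne_zero hd
  refine ⟨S.lin S.k, 1, S.lin S.h, fun h => hZh (by rw [← R.aeval_lin, h, map_zero]), ?_, ?_⟩
  · simp only [R.aeval_lin, map_one, root]; ring
  · simp only [R.aeval_lin, map_one, conjN]; field_simp

lemma isConj_algebraMap (u : K) : R.IsConj (algebraMap K E u) (algebraMap K E u) :=
  ⟨C u, 0, 1, one_ne_zero, by simp, by simp⟩

lemma isConj_aeval (hd : S.disc ≠ 0) (p : K[X]) : R.IsConj (aeval R.n p) (aeval R.conjN p) := by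
  induction p using Polynomial.induction_on' with
  | add p q hp hq => simpa only [map_add] using hp.add hq
  | monomial i c =>
    have hpow : R.IsConj (R.n ^ i) (R.conjN ^ i) := by
      induction i with
      | zero => simpa using R.isConj_algebraMap 1
      | succ i ih => simpa only [pow_succ] using ih.mul (R.isConj_n_conjN hd)
    simpa only [aeval_monomial] using (R.isConj_algebraMap c).mul hpow

lemma eq_zero_of_aeval_conjN (hd : S.disc ≠ 0) {p : K[X]} (h : aeval R.conjN p = 0) : p = 0 := by
  obtain ⟨α, β, γ, hγ, hn, hm⟩ := R.isConj_aeval hd p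
  rw [h, mul_zero] at hm
  obtain ⟨rfl, hβ⟩ := R.eq_zero_of_add_mul_root hd (α := α) (β := -β)
    (by rw [map_neg]; linear_combination -hm)
  rw [neg_eq_zero.mp hβ, map_zero, zero_mul, add_zero] at hn
  refine R.eq_zero_of_aeval_n ((mul_eq_zero.mp hn).resolve_left ?_)
  exact fun h => hγ (R.eq_zero_of_aeval_s h)

lemma n_ne_conjN [CharZero K] (hd : S.disc ≠ 0) : R.n ≠ R.conjN := by
  have : CharZero E := charZero_of_injective_algebraMap (algebraMap K E).injective
  rw [conjN, ne_eq, eq_div_iff (R.Z_h_ne_zero hd)]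
  intro h
  refine R.root_ne_zero hd ((mul_eq_zero.mp (?_ : 2 * R.root = 0)).resolve_left two_ne_zero)
  rw [root] at h ⊢
  linear_combination h

lemma mul_aeval_conjN_eq [CharZero K] (hd : S.disc ≠ 0) (hrad : ¬ S.radicand ∣ S.derS S.radicand)
    {g : E} (hg : R.Z g = 0) {G H : K[X]} (hH : H ≠ 0) (h : g * aeval R.n H = aeval R.n G) :
    g * aeval R.conjN H = aeval R.conjN G := by
  have hn := R.aeval_n_ne_zero hH
  have hm : aeval R.conjN H ≠ 0 := fun h => hH (R.eq_zero_of_aeval_conjN hd h)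
  have hconj := (R.isConj_aeval hd G).mul ((R.isConj_aeval hd H).inv hn hm)
  rw [← h, mul_inv_cancel_right₀ hn] at hconj
  rw [(hconj.eq_or_radicand_dvd hd hg).resolve_right hrad, inv_mul_cancel_right₀ hm]

lemma exists_two_mul_Z_root (hd : S.disc ≠ 0) (h : S.radicand ∣ S.derS S.radicand) :
    ∃ c₁ c₀ : K, 2 * R.Z R.root = (algebraMap K E c₁ * R.s + algebraMap K E c₀) * R.root := by
  obtain ⟨q, hq⟩ := h
  have hrad : S.radicand ≠ 0 := (S.squarefree_radicand hd).ne_zero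
  have hdeg : q.natDegree ≤ 1 := by
    rcases eq_or_ne q 0 with rfl | hq₀
    · simp
    · have := S.natDegree_derS_le S.radicand
      rw [hq, natDegree_mul hrad hq₀] at this
      lia
  obtain ⟨c₁, c₀, hc⟩ := exists_eq_X_add_C_of_natDegree_le_one hdeg
  refine ⟨c₁, c₀, mul_left_cancel₀ (R.root_ne_zero hd) ?_⟩
  have hZ := congrArg R.Z R.root_sq
  rw [R.Z_aeval_s, sq, Derivation.leibniz, smul_eq_mul, hq, map_mul, ← R.root_sq, hc] at hZ
  simp only [map_add, map_mul, aeval_C, aeval_X] at hZ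
  linear_combination hZ

include R in
lemma w_dvd_sextic_of_radicand_dvd [CharZero K] (hd : S.disc ≠ 0) (hw : S.w ≠ 0)
    (h : S.radicand ∣ S.derS S.radicand) : S.w ∣ S.sextic := by
  obtain ⟨c₁, c₀, hZroot⟩ := R.exists_two_mul_Z_root hd h
  set ℓ : K[X] := C c₀ * S.b - C c₁ * S.a with hℓ
  have hZroot' : 2 * aeval R.n S.b * R.Z R.root = aeval R.n ℓ * R.root := by
    simp only [hℓ, map_sub, map_mul, aeval_C]
    linear_combination aeval R.n S.b * hZroot + algebraMap K E c₁ * R.root * R.aeval_a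
  have hZw := congrArg R.Z R.aeval_b_mul_root
  rw [Derivation.leibniz, smul_eq_mul, smul_eq_mul] at hZw
  have hpoly : S.b * (derivative S.w * S.sextic) =
      S.b * (S.w * (S.quintic + 2 * S.vectorField S.w - ℓ * S.w)) := by
    rw [← sub_eq_zero]
    refine R.eq_zero_of_aeval_n ?_
    have hquintic := congrArg (aeval R.n) S.b_mul_quintic
    simp only [map_sub, map_add, map_mul, map_ofNat] at hquintic ⊢
    set β := aeval R.n S.b
    set ω := aeval R.n S.w
    linear_combination -ω * hquintic + 2 * β * ω * R.Z_aeval_n S.w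
      - 2 * ω ^ 2 * R.Z_aeval_n S.b + 2 * β ^ 2 * ω * hZw - β ^ 2 * ω * hZroot'
      + (β * aeval R.n (derivative S.w) - ω * aeval R.n (derivative S.b)) * R.aeval_sextic
      - (2 * β * ω * R.Z β + β * ω * aeval R.n ℓ) * R.aeval_b_mul_root
  exact (S.isCoprime_w_derivative_w hd).dvd_of_dvd_mul_left
    (Dvd.intro _ (mul_left_cancel₀ (R.b_ne_zero hw) hpoly).symm)

end Conjugation

end RootExtension

end DifferentialQuadratic

/-! ### The conjugate quartic -/

section Quartic

variable {E : Type*} [Field E] [CharZero E]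

lemma cubic_eq_zero_of_double_roots {n m r₀ r₁ r₂ r₃ : E} (hnm : n ≠ m)
    (hn : r₃ * n ^ 3 + r₂ * n ^ 2 + r₁ * n + r₀ = 0)
    (hm : r₃ * m ^ 3 + r₂ * m ^ 2 + r₁ * m + r₀ = 0)
    (hn' : 3 * r₃ * n ^ 2 + 2 * r₂ * n + r₁ = 0) (hm' : 3 * r₃ * m ^ 2 + 2 * r₂ * m + r₁ = 0) :
    r₀ = 0 ∧ r₁ = 0 ∧ r₂ = 0 ∧ r₃ = 0 := by
  have hd : n - m ≠ 0 := sub_ne_zero.mpr hnm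
  obtain rfl : r₃ = 0 := by
    refine (mul_eq_zero.mp (?_ : (n - m) ^ 3 * r₃ = 0)).resolve_left (pow_ne_zero 3 hd)
    linear_combination (n - m) * (hn' + hm') - 2 * (hn - hm)
  obtain rfl : r₂ = 0 := by
    refine (mul_eq_zero.mp (?_ : (2 * (n - m)) * r₂ = 0)).resolve_left
      (mul_ne_zero two_ne_zero hd)
    linear_combination hn' - hm'
  obtain rfl : r₁ = 0 := by linear_combination hn'
  exact ⟨by linear_combination hn, rfl, rfl, rfl⟩

/-- The polynomial `4 ν² + 2 (h' ν² - e') Q - D Q²`, where `Q = h ν² - 2 k ν - e`, equals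
`l (ν² - σ ν + π)²`, expressed through coefficients. -/
def QuarticEqSq {E : Type*} [CommRing E] (h k e h' e' D l σ π : E) : Prop :=
  2 * h' * h - D * h ^ 2 = l ∧
  -4 * h' * k + 4 * D * h * k = -2 * l * σ ∧
  4 - 2 * (h' * e + e' * h) - D * (4 * k ^ 2 - 2 * h * e) = l * (σ ^ 2 + 2 * π) ∧
  4 * e' * k - 4 * D * k * e = -2 * l * σ * π ∧
  2 * e' * e - D * e ^ 2 = l * π ^ 2

/-- The quartic of `QuarticEqSq` vanishes to second order at `ν`. -/
def QuarticDoubleRoot (h k e h' e' D ν : E) : Prop :=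
  4 * ν ^ 2 + 2 * (h' * ν ^ 2 - e') * (h * ν ^ 2 - 2 * k * ν - e)
      - D * (h * ν ^ 2 - 2 * k * ν - e) ^ 2 = 0 ∧
    8 * ν + 4 * h' * ν * (h * ν ^ 2 - 2 * k * ν - e) + 4 * (h' * ν ^ 2 - e') * (h * ν - k)
      - 4 * D * (h * ν ^ 2 - 2 * k * ν - e) * (h * ν - k) = 0

omit [CharZero E] in
lemma quarticDoubleRoot_of_eq {ν U V Q P M h k e h' e' c : E} (hQ : Q = h * ν ^ 2 - 2 * k * ν - e)
    (hU : U = h * ν - k) (hV : V = k * ν + e) (hQ₀ : Q ≠ 0) (hM : M ≠ 0)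
    (hh' : h' * (M * Q ^ 3) = -2 * (M * Q ^ 2 - 4 * U ^ 2 * V * ν * P))
    (he' : e' * (M * Q ^ 3) = 2 * (ν ^ 2 * M * Q ^ 2 + 4 * U * V ^ 2 * ν ^ 2 * P))
    (hc : c * (M ^ 2 * Q ^ 6) = -64 * ((U * V * ν) ^ 3 * P ^ 2)) :
    QuarticDoubleRoot h k e h' e' (c + h' * e') ν := by
  obtain ⟨g, hg⟩ : ∃ g, g * (M * Q ^ 2) = 4 * U * V * ν * P :=
    ⟨4 * U * V * ν * P / (M * Q ^ 2), by field_simp⟩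
  have hMQ : M * Q ^ 2 ≠ 0 := mul_ne_zero hM (pow_ne_zero 2 hQ₀)
  have hh'g : h' * Q = -2 * (1 - U * g) := mul_right_cancel₀ hMQ (by
    linear_combination hh' - 2 * U * hg)
  have he'g : e' * Q = 2 * (ν ^ 2 + V * ν * g) := mul_right_cancel₀ hMQ (by
    linear_combination he' - 2 * V * ν * hg)
  have hcg : c * Q ^ 2 = -4 * (U * V * ν * g ^ 2) := mul_right_cancel₀ (pow_ne_zero 2 hMQ) (by
    linear_combination hc + 4 * U * V * ν * (g * (M * Q ^ 2) + 4 * U * V * ν * P) * hg)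
  have hQUV : Q = ν * U - V := by rw [hQ, hU, hV]; ring
  rw [QuarticDoubleRoot, ← hQ, ← hU]
  constructor
  · linear_combination (2 * ν ^ 2 - e' * Q) * hh'g + (-2 + 2 * (1 - U * g)) * he'g - hcg
  · refine mul_right_cancel₀ hQ₀ ?_
    linear_combination (4 * ν * Q + 4 * ν ^ 2 * U - 4 * U * e' * Q) * hh'g
      + (-4 * U + 8 * U * (1 - U * g)) * he'g - 4 * U * hcg + 8 * ν * U * g * hQUV

lemma QuarticDoubleRoot.quarticEqSq {h k e h' e' D n m : E} (hn : QuarticDoubleRoot h k e h' e' D n)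
    (hm : QuarticDoubleRoot h k e h' e' D m) (hnm : n ≠ m) :
    QuarticEqSq h k e h' e' D (2 * h' * h - D * h ^ 2) (n + m) (n * m) := by
  set l := 2 * h' * h - D * h ^ 2 with hl
  obtain ⟨hr₀, hr₁, hr₂, hr₃⟩ := cubic_eq_zero_of_double_roots hnm
    (r₃ := -4 * h' * k + 4 * D * h * k + 2 * l * (n + m))
    (r₂ := 4 - 2 * (h' * e + e' * h) - D * (4 * k ^ 2 - 2 * h * e)
      - l * ((n + m) ^ 2 + 2 * n * m))
    (r₁ := 4 * e' * k - 4 * D * k * e + 2 * l * (n * m) * (n + m))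
    (r₀ := 2 * e' * e - D * e ^ 2 - l * (n * m) ^ 2)
    (by rw [hl]; linear_combination hn.1) (by rw [hl]; linear_combination hm.1)
    (by rw [hl]; linear_combination hn.2) (by rw [hl]; linear_combination hm.2)
  exact ⟨rfl, by linear_combination hr₃, by linear_combination hr₂, by linear_combination hr₁,
    by linear_combination hr₀⟩

end Quartic

namespace DifferentialQuadratic

variable {K : Type*} [Field K] {S : DifferentialQuadratic K}

variable (S) in
/-- The polynomial whose value at the root `n` of a `RootExtension` is the product of those of
`Z V / Z n` and `sextic`. -/
def slopeNum : K[X] := C S.k * S.sextic - 2 * X * S.w ^ 2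

namespace RootExtension

variable {E : Type*} [Field E] [Algebra K E] (R : RootExtension S E)

/-- First integrals `h'`, `e'`, `c` of `Z` that are given by rational functions of `n` and of
`Y = Z V / Z n`. -/
structure FirstIntegrals (Y h' e' c : E) : Prop where
  Y_ne_zero : Y ≠ 0
  Z_V : R.Z (aeval R.n S.V) = Y * R.Z R.n
  Z_h' : R.Z h' = 0
  Z_e' : R.Z e' = 0
  Z_c : R.Z c = 0
  h'_mul : h' * (Y * (aeval R.n S.quad) ^ 3) =
    -2 * (Y * (aeval R.n S.quad) ^ 2 - 4 * (aeval R.n S.U) ^ 2 * aeval R.n S.V * R.n)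
  e'_mul : e' * (Y * (aeval R.n S.quad) ^ 3) =
    2 * (R.n ^ 2 * Y * (aeval R.n S.quad) ^ 2
      + 4 * aeval R.n S.U * (aeval R.n S.V) ^ 2 * R.n ^ 2)
  c_mul : c * Y ^ 2 * (aeval R.n S.quad) ^ 6 = -64 * (aeval R.n S.U * aeval R.n S.V * R.n) ^ 3

variable {R}

lemma mul_aeval_sextic {Y : E} (hY : R.Z (aeval R.n S.V) = Y * R.Z R.n) :
    Y * aeval R.n S.sextic = aeval R.n S.slopeNum := by
  have hZV := R.Z_aeval_n S.V
  rw [S.vectorField_V, S.derivative_V, hY] at hZV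
  simp only [map_mul, aeval_C, aeval_X] at hZV
  simp only [slopeNum, map_sub, map_mul, map_pow, map_ofNat, aeval_C, aeval_X]
  linear_combination (Y - algebraMap K E S.k) * R.aeval_sextic - 2 * aeval R.n S.w * hZV

lemma quarticDoubleRoot_of_aeval_eq (S : DifferentialQuadratic K) {ν h' e' c : E}
    (hQ : aeval ν S.quad ≠ 0) (hM : aeval ν S.slopeNum ≠ 0)
    (hh' : h' * aeval ν (S.slopeNum * S.quad ^ 3) =
      aeval ν (-2 * (S.slopeNum * S.quad ^ 2 - 4 * S.U ^ 2 * S.V * X * S.sextic)))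
    (he' : e' * aeval ν (S.slopeNum * S.quad ^ 3) =
      aeval ν (2 * (X ^ 2 * S.slopeNum * S.quad ^ 2 + 4 * S.U * S.V ^ 2 * X ^ 2 * S.sextic)))
    (hc : c * aeval ν (S.slopeNum ^ 2 * S.quad ^ 6) =
      aeval ν (-64 * ((S.U * S.V * X) ^ 3 * S.sextic ^ 2))) :
    QuarticDoubleRoot (algebraMap K E S.h) (algebraMap K E S.k) (algebraMap K E S.e) h' e'
      (c + h' * e') ν := by
  simp only [map_mul, map_sub, map_add, map_pow, map_neg, map_ofNat, aeval_X] at hh' he' hc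
  refine quarticDoubleRoot_of_eq ?_ ?_ ?_ hQ hM hh' he' hc <;>
    simp only [quad, U, V, map_sub, map_add, map_mul, map_pow, map_ofNat, aeval_C, aeval_X]

variable {Y h' e' c : E}

lemma FirstIntegrals.exists_quarticEqSq [CharZero K] (hI : R.FirstIntegrals Y h' e' c)
    (hQ : S.quad ≠ 0) (hsextic : S.sextic ≠ 0) (hd : S.disc ≠ 0)
    (hrad : ¬ S.radicand ∣ S.derS S.radicand) :
    ∃ l σ π : E, QuarticEqSq (algebraMap K E S.h) (algebraMap K E S.k) (algebraMap K E S.e)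
      h' e' (c + h' * e') l σ π := by
  have : CharZero E := charZero_of_injective_algebraMap (algebraMap K E).injective
  have hYM := mul_aeval_sextic hI.Z_V
  have hM : S.slopeNum ≠ 0 := fun h =>
    mul_ne_zero hI.Y_ne_zero (R.aeval_n_ne_zero hsextic) (by rw [hYM, h, map_zero])
  have hMQ : S.slopeNum * S.quad ^ 3 ≠ 0 := mul_ne_zero hM (pow_ne_zero _ hQ)
  have hMQ' : S.slopeNum ^ 2 * S.quad ^ 6 ≠ 0 := mul_ne_zero (pow_ne_zero _ hM) (pow_ne_zero _ hQ)
  have hh' : h' * aeval R.n (S.slopeNum * S.quad ^ 3) = aeval R.n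
      (-2 * (S.slopeNum * S.quad ^ 2 - 4 * S.U ^ 2 * S.V * X * S.sextic)) := by
    simp only [map_mul, map_sub, map_pow, map_neg, map_ofNat, aeval_X, ← hYM]
    linear_combination aeval R.n S.sextic * hI.h'_mul
  have he' : e' * aeval R.n (S.slopeNum * S.quad ^ 3) = aeval R.n
      (2 * (X ^ 2 * S.slopeNum * S.quad ^ 2 + 4 * S.U * S.V ^ 2 * X ^ 2 * S.sextic)) := by
    simp only [map_mul, map_add, map_pow, map_ofNat, aeval_X, ← hYM]
    linear_combination aeval R.n S.sextic * hI.e'_mul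
  have hc : c * aeval R.n (S.slopeNum ^ 2 * S.quad ^ 6) = aeval R.n
      (-64 * ((S.U * S.V * X) ^ 3 * S.sextic ^ 2)) := by
    simp only [map_mul, map_pow, map_neg, map_ofNat, aeval_X, ← hYM]
    linear_combination (aeval R.n S.sextic) ^ 2 * hI.c_mul
  have hn := quarticDoubleRoot_of_aeval_eq S (R.aeval_n_ne_zero hQ) (R.aeval_n_ne_zero hM)
    hh' he' hc
  have hm := quarticDoubleRoot_of_aeval_eq S (fun h => hQ (R.eq_zero_of_aeval_conjN hd h))
    (fun h => hM (R.eq_zero_of_aeval_conjN hd h)) (R.mul_aeval_conjN_eq hd hrad hI.Z_h' hMQ hh')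
    (R.mul_aeval_conjN_eq hd hrad hI.Z_e' hMQ he') (R.mul_aeval_conjN_eq hd hrad hI.Z_c hMQ' hc)
  exact ⟨_, _, _, hn.quarticEqSq hm (R.n_ne_conjN hd)⟩

theorem FirstIntegrals.eq_or_exists_quarticEqSq [CharZero K] (hI : R.FirstIntegrals Y h' e' c)
    (hS : S.Nondegenerate) (hw : S.w ≠ 0) :
    Y * aeval R.n S.quad = 4 * aeval R.n S.U * aeval R.n S.V ∨
    ∃ l σ π : E, QuarticEqSq (algebraMap K E S.h) (algebraMap K E S.k) (algebraMap K E S.e)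
      h' e' (c + h' * e') l σ π := by
  by_cases hdvd : S.w ∣ S.sextic
  · exact Or.inl (R.eq_of_w_dvd_sextic hS hw hdvd hI.Z_V hI.Y_ne_zero hI.Z_c hI.c_mul)
  have hd : S.disc ≠ 0 := fun h => hdvd (S.w_dvd_sextic_of_disc_eq_zero hw h)
  exact Or.inr (hI.exists_quarticEqSq hS.quad_ne_zero (fun h => hdvd (h ▸ dvd_zero _)) hd
    fun h => hdvd (R.w_dvd_sextic_of_radicand_dvd hd hw h))

end RootExtension

end DifferentialQuadratic

/-! ### Fields with the derivations of the Heisenberg group -/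

/-- A field with the derivations `Z`, `Z̄`, `T` of the Heisenberg group and complex conjugation;
`s` plays the role of `2 i z̄`. -/
structure HeisenbergField (E : Type*) [Field E] where
  Z : Derivation ℤ E E
  Zb : Derivation ℤ E E
  T : Derivation ℤ E E
  conj : E →+* E
  s : E
  conj_conj : ∀ u, conj (conj u) = u
  conj_Z : ∀ u, conj (Z u) = Zb (conj u)
  Z_T : ∀ u, Z (T u) = T (Z u)
  Zb_T : ∀ u, Zb (T u) = T (Zb u)
  Zb_Z : ∀ u, Zb (Z u) = Z (Zb u) + Zb s * T u
  Z_s : Z s = 0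
  T_s : T s = 0
  Zb_s : Zb s ≠ 0

lemma transcendental_of_derivation_ne_zero {K E : Type*} [Field K] [CharZero K] [Field E]
    [Algebra K E] (D : Derivation ℤ E E) (hD : ∀ u : K, D (algebraMap K E u) = 0) {n : E}
    (hn : D n ≠ 0) : Transcendental K n := by
  let D' : Derivation K E E := Derivation.mk'
    { toFun := D
      map_add' := D.map_add
      map_smul' := fun c u => by simp [Algebra.smul_def, hD] } D.leibniz
  intro halg
  have hD' := D'.map_aeval (minpoly K n) n
  rw [minpoly.aeval, map_zero, eq_comm, smul_eq_mul] at hD'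
  exact (mul_ne_zero ((minpoly.irreducible halg.isIntegral).separable.aeval_derivative_ne_zero
    (minpoly.aeval K n)) hn) hD'

namespace HeisenbergField

variable {E : Type*} [Field E] (H : HeisenbergField E)

lemma conj_Zb (u : E) : H.conj (H.Zb u) = H.Z (H.conj u) := by
  rw [← H.conj_conj (H.Z (H.conj u)), H.conj_Z, H.conj_conj]

/-- The field of constants of `Z̄`, the Cauchy–Riemann functions. -/
def CR : Subfield E where
  carrier := {u | H.Zb u = 0}
  mul_mem' {a b} (ha : H.Zb a = 0) (hb : H.Zb b = 0) :=
    show H.Zb (a * b) = 0 by rw [Derivation.leibniz, ha, hb, smul_zero, smul_zero, add_zero]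
  one_mem' := H.Zb.map_one_eq_zero
  add_mem' {a b} (ha : H.Zb a = 0) (hb : H.Zb b = 0) :=
    show H.Zb (a + b) = 0 by rw [map_add, ha, hb, add_zero]
  zero_mem' := map_zero H.Zb
  neg_mem' {a} (ha : H.Zb a = 0) := show H.Zb (-a) = 0 by rw [map_neg, ha, neg_zero]
  inv_mem' a (ha : H.Zb a = 0) :=
    show H.Zb a⁻¹ = 0 by rw [Derivation.leibniz_inv, ha, smul_zero]

lemma mem_CR {u : E} : u ∈ H.CR ↔ H.Zb u = 0 := Iff.rfl

lemma CR_algebraMap (u : H.CR) : algebraMap H.CR E u = u := rfl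

/-- The restriction of a derivation to the constants of `Z̄`. -/
def restrict (D : Derivation ℤ E E) (hD : ∀ u ∈ H.CR, D u ∈ H.CR) : Derivation ℤ H.CR H.CR :=
  Derivation.mk' (AddMonoidHom.toIntLinearMap
    { toFun := fun u => ⟨D u, hD u u.2⟩
      map_zero' := by ext; simp
      map_add' := fun u v => by ext; simp })
    (fun u v => by ext; simp [Derivation.leibniz])

lemma restrict_coe (D : Derivation ℤ E E) (hD : ∀ u ∈ H.CR, D u ∈ H.CR) (u : H.CR) :
    (H.restrict D hD u : E) = D u := rfl

lemma T_mem_CR (u : E) (hu : u ∈ H.CR) : H.T u ∈ H.CR := by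
  rw [mem_CR] at *
  rw [H.Zb_T, hu, map_zero]

lemma Z_sub_mem_CR (u : E) (hu : u ∈ H.CR) : (H.Z - H.s • H.T) u ∈ H.CR := by
  have hT := H.mem_CR.mp (H.T_mem_CR u hu)
  rw [mem_CR] at *
  rw [Derivation.sub_apply, Derivation.smul_apply, smul_eq_mul, map_sub, H.Zb_Z, hu,
    Derivation.leibniz, hT, map_zero, smul_zero, smul_eq_mul]
  ring

variable (h k e : H.CR)

/-- The quadratic `h X² - 2 k X - e` over the Cauchy–Riemann functions, on which `Z` acts as
`d₁ + s d₂` with `d₁ = Z - s T` and `d₂ = T`. -/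
def quadratic : DifferentialQuadratic H.CR where
  d₁ := H.restrict (H.Z - H.s • H.T) H.Z_sub_mem_CR
  d₂ := H.restrict H.T H.T_mem_CR
  comm u := by
    apply Subtype.ext
    simp only [restrict_coe, Derivation.sub_apply, Derivation.smul_apply, smul_eq_mul, map_sub,
      Derivation.leibniz, H.Z_T, H.T_s]
    ring
  h := h
  k := k
  e := e

lemma quadratic_h : (H.quadratic h k e).h = h := rfl

lemma quadratic_k : (H.quadratic h k e).k = k := rfl

lemma quadratic_e : (H.quadratic h k e).e = e := rfl

lemma Z_coe (u : H.CR) :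
    H.Z u = (H.quadratic h k e).d₁ u + H.s * (H.quadratic h k e).d₂ u := by
  change H.Z u = (H.Z - H.s • H.T) u + H.s * H.T u
  rw [Derivation.sub_apply, Derivation.smul_apply, smul_eq_mul, sub_add_cancel]

/-- The extension of the Cauchy–Riemann functions generated by a root `n` of the quadratic with
coefficients `Z h`, `Z k`, `Z e`. -/
def rootExtension [CharZero E] (n : E) (hZb : H.Zb n ≠ 0) (hZ : H.Z n ≠ 0)
    (hroot : n ^ 2 * H.Z h - 2 * n * H.Z k - H.Z e = 0) :
    (H.quadratic h k e).RootExtension E where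
  Z := H.Z
  s := H.s
  n := n
  Z_algebraMap := H.Z_coe h k e
  Z_s := H.Z_s
  transcendental_s := transcendental_of_derivation_ne_zero H.Zb (fun u => u.2) H.Zb_s
  transcendental_n := transcendental_of_derivation_ne_zero H.Zb (fun u => u.2) hZb
  aeval_a := by
    rw [H.Z_coe h k e, H.Z_coe h k e, H.Z_coe h k e] at hroot
    simp only [DifferentialQuadratic.a, DifferentialQuadratic.b, map_sub, map_mul, map_pow,
      aeval_C, aeval_X, map_ofNat, CR_algebraMap, quadratic_h, quadratic_k, quadratic_e]
    linear_combination hroot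
  Z_n_ne_zero := hZ

end HeisenbergField

/-- The algebraic relations between the affine normalisation `x` of `F`, a square root `n` of the
denominator of the inversion, and the first integrals `k`, `h`, `e` of `Z̄` built from them. -/
structure ConjRelations {E : Type*} [Field E] (conj : E →+* E) (x n k h e : E) : Prop where
  x_ne_zero : x ≠ 0
  n_ne_zero : n ≠ 0
  n_sq_add : n ^ 2 + conj n ^ 2 = -2 * x * conj x
  h_mul : h * conj x * n = n + k * conj x
  e_mul : e * conj x = -n * k * conj x - conj n ^ 2

namespace ConjRelations

variable {E : Type*} [Field E] {conj : E →+* E} {x n k h e : E} (hE : ConjRelations conj x n k h e)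
include hE

lemma conj_x_ne_zero : conj x ≠ 0 := (map_ne_zero conj).mpr hE.x_ne_zero

lemma conj_n_ne_zero : conj n ≠ 0 := (map_ne_zero conj).mpr hE.n_ne_zero

lemma U_eq : h * n - k = n / conj x := by
  have := hE.conj_x_ne_zero
  field_simp
  linear_combination hE.h_mul

lemma V_eq : k * n + e = -conj n ^ 2 / conj x := by
  have := hE.conj_x_ne_zero
  field_simp
  linear_combination hE.e_mul

lemma quad_eq : h * n ^ 2 - 2 * k * n - e = -2 * x := by
  apply mul_right_cancel₀ hE.conj_x_ne_zero
  linear_combination n * hE.h_mul - hE.e_mul + hE.n_sq_add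

variable (hconj : ∀ u, conj (conj u) = u)
include hconj

lemma conj_h_eq : conj h = 1 / x + conj k / conj n := by
  have := hE.x_ne_zero
  have := hE.conj_n_ne_zero
  have h_mul := congrArg conj hE.h_mul
  simp only [map_mul, map_add, hconj] at h_mul
  field_simp
  linear_combination h_mul

lemma conj_e_eq : conj e = -conj n * conj k - n ^ 2 / x := by
  have := hE.x_ne_zero
  have e_mul := congrArg conj hE.e_mul
  simp only [map_mul, map_sub, map_neg, map_pow, hconj] at e_mul
  field_simp
  linear_combination e_mul

end ConjRelations

namespace HeisenbergField

variable {E : Type*} [Field E] (H : HeisenbergField E)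

/-- The differential relations that express that the inversion preserves the Schwarzian: `n ^ 2` is
the denominator of the inversion, and `k` is the first integral of `Z̄` which equality of the two
Schwarzians produces. -/
structure IsInversionSolution (x n k h e : E) : Prop extends ConjRelations H.conj x n k h e where
  Z_x_ne_zero : H.Z x ≠ 0
  Z_conj_x_ne_zero : H.Z (H.conj x) ≠ 0
  n_mul_Z_n : n * H.Z n = -H.conj x * H.Z x
  n_mul_Zb_n : n * H.Zb n = -H.conj x * H.Zb x
  k_mul : k * H.Zb x * H.conj x ^ 3 = n ^ 3 * H.Zb (H.conj x)
  Zb_k : H.Zb k = 0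

/-- The value of `Z V / Z n`, where `V = k n + e`, for an inversion solution. -/
def slope (x n : E) : E :=
  H.Z (H.conj x) * n ^ 3 / (H.Z x * H.conj x ^ 3)

namespace IsInversionSolution

variable {H} {x n k h e : E} (hE : H.IsInversionSolution x n k h e)
include hE

lemma Zb_x_ne_zero : H.Zb x ≠ 0 := by
  rw [← H.conj_conj x, ← H.conj_Z]
  exact (map_ne_zero H.conj).mpr hE.Z_conj_x_ne_zero

lemma Zb_conj_x_ne_zero : H.Zb (H.conj x) ≠ 0 := by
  rw [← H.conj_Z]
  exact (map_ne_zero H.conj).mpr hE.Z_x_ne_zero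

lemma k_ne_zero : k ≠ 0 := by
  rintro rfl
  refine mul_ne_zero (pow_ne_zero 3 hE.n_ne_zero) hE.Zb_conj_x_ne_zero ?_
  rw [← hE.k_mul, zero_mul, zero_mul]

lemma Z_n_ne_zero : H.Z n ≠ 0 := by
  refine right_ne_zero_of_mul (a := n) ?_
  rw [hE.n_mul_Z_n]
  exact mul_ne_zero (neg_ne_zero.mpr hE.conj_x_ne_zero) hE.Z_x_ne_zero

lemma Zb_n_ne_zero : H.Zb n ≠ 0 := by
  refine right_ne_zero_of_mul (a := n) ?_
  rw [hE.n_mul_Zb_n]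
  exact mul_ne_zero (neg_ne_zero.mpr hE.conj_x_ne_zero) hE.Zb_x_ne_zero

lemma conj_n_mul_Zb : H.conj n * H.Zb (H.conj n) = -x * H.Zb (H.conj x) := by
  simpa only [map_mul, map_neg, H.conj_Z, H.conj_conj] using congrArg H.conj hE.n_mul_Z_n

lemma conj_n_mul_Z : H.conj n * H.Z (H.conj n) = -x * H.Z (H.conj x) := by
  simpa only [map_mul, map_neg, H.conj_Zb, H.conj_conj] using congrArg H.conj hE.n_mul_Zb_n

lemma conj_k_eq : H.conj k = H.conj n ^ 3 * H.Z x / (H.Z (H.conj x) * x ^ 3) := by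
  have := hE.x_ne_zero
  have := hE.Z_conj_x_ne_zero
  have k_mul := congrArg H.conj hE.k_mul
  simp only [map_mul, map_pow, H.conj_Zb, H.conj_conj] at k_mul
  field_simp
  linear_combination k_mul

lemma Zb_h : H.Zb h = 0 := by
  have hZb := congrArg H.Zb hE.h_mul
  simp only [Derivation.leibniz, map_add, hE.Zb_k, smul_eq_mul] at hZb
  apply (mul_eq_zero.mp (?_ : (n ^ 3 * H.conj x ^ 2) * H.Zb h = 0)).resolve_left
    (mul_ne_zero (pow_ne_zero 3 hE.n_ne_zero) (pow_ne_zero 2 hE.conj_x_ne_zero))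
  linear_combination (n ^ 2 * H.conj x) * hZb
    - (n * H.conj x * H.Zb n + n ^ 2 * H.Zb (H.conj x)) * hE.h_mul
    - k * H.conj x ^ 2 * hE.n_mul_Zb_n + hE.k_mul

lemma Zb_e : H.Zb e = 0 := by
  have hZb := congrArg H.Zb hE.e_mul
  simp only [Derivation.leibniz, map_sub, map_neg, hE.Zb_k, smul_eq_mul, sq] at hZb
  apply (mul_eq_zero.mp (?_ : (n * H.conj x ^ 2) * H.Zb e = 0)).resolve_left
    (mul_ne_zero hE.n_ne_zero (pow_ne_zero 2 hE.conj_x_ne_zero))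
  linear_combination (n * H.conj x) * hZb - n * H.Zb (H.conj x) * hE.e_mul
    - k * H.conj x ^ 2 * hE.n_mul_Zb_n - 2 * n * H.conj x * hE.conj_n_mul_Zb + hE.k_mul
    + n * H.Zb (H.conj x) * hE.n_sq_add

lemma root_eq_zero : n ^ 2 * H.Z h - 2 * n * H.Z k - H.Z e = 0 := by
  have hZ := congrArg H.Z hE.quad_eq
  have hZ₂ : H.Z 2 = 0 := H.Z.map_natCast 2
  simp only [Derivation.leibniz, map_sub, map_neg, hZ₂, smul_eq_mul, sq] at hZ
  apply (mul_eq_zero.mp (?_ : H.conj x * _ = 0)).resolve_left hE.conj_x_ne_zero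
  linear_combination H.conj x * hZ - 2 * H.Z n * hE.h_mul - 2 * hE.n_mul_Z_n

/-- The three first integrals, as elements of the field of Cauchy–Riemann functions. -/
def toQuadratic : DifferentialQuadratic H.CR :=
  H.quadratic ⟨h, hE.Zb_h⟩ ⟨k, hE.Zb_k⟩ ⟨e, hE.Zb_e⟩

/-- The extension of the Cauchy–Riemann functions generated by `n`. -/
def toRootExtension [CharZero E] : hE.toQuadratic.RootExtension E :=
  H.rootExtension _ _ _ n hE.Zb_n_ne_zero hE.Z_n_ne_zero hE.root_eq_zero

lemma aeval_U : aeval n hE.toQuadratic.U = n / H.conj x := by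
  rw [← hE.U_eq]
  simp only [DifferentialQuadratic.U, map_sub, map_mul, aeval_C, aeval_X]
  rfl

lemma aeval_V : aeval n hE.toQuadratic.V = -H.conj n ^ 2 / H.conj x := by
  rw [← hE.V_eq]
  simp only [DifferentialQuadratic.V, map_add, map_mul, aeval_C, aeval_X]
  rfl

lemma aeval_quad : aeval n hE.toQuadratic.quad = -2 * x := by
  rw [← hE.quad_eq]
  simp only [DifferentialQuadratic.quad, map_sub, map_mul, map_pow, map_ofNat, aeval_C, aeval_X]
  rfl

lemma jacobian_eq_zero (hZh : H.Z h = 0) (hZk : H.Z k = 0) :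
    H.Z x * H.Zb (H.conj x) = H.Z (H.conj x) * H.Zb x := by
  have hZ := congrArg H.Z hE.h_mul
  simp only [Derivation.leibniz, map_add, hZh, hZk, smul_eq_mul] at hZ
  apply mul_left_cancel₀ (mul_ne_zero hE.conj_x_ne_zero (pow_ne_zero 3 hE.n_ne_zero))
  linear_combination -H.conj x * H.Z x * hE.k_mul + k * H.conj x ^ 3 * H.Zb x * hE.n_mul_Z_n
    - H.conj x ^ 2 * n ^ 2 * H.Zb x * hZ
    + H.conj x * (H.conj x * n * H.Z n * H.Zb x + n ^ 2 * H.Z (H.conj x) * H.Zb x) * hE.h_mul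

lemma w_ne_zero [CharZero E] (hJ : H.Z x * H.Zb (H.conj x) ≠ H.Z (H.conj x) * H.Zb x) :
    hE.toQuadratic.w ≠ 0 := by
  intro hw
  have hb := hE.toRootExtension.b_eq_zero_of_w_eq_zero hw
  have ha := hE.toRootExtension.a_eq_zero_of_b_eq_zero hb
  have coeff_eq_zero {u v t : H.CR} (h₀ : C u * X ^ 2 - 2 * C v * X - C t = 0) :
      u = 0 ∧ v = 0 := by
    rw [← C_ofNat, ← C_mul] at h₀
    exact ⟨by simpa [coeff_C] using congrArg (coeff · 2) h₀,
      by simpa [coeff_C] using congrArg (coeff · 1) h₀⟩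
  obtain ⟨hah, hak⟩ := coeff_eq_zero ha
  obtain ⟨hbh, hbk⟩ := coeff_eq_zero hb
  have Z_eq_zero (u : H.CR) (h₁ : hE.toQuadratic.d₁ u = 0) (h₂ : hE.toQuadratic.d₂ u = 0) :
      H.Z u = 0 := by
    have hZ := hE.toRootExtension.Z_algebraMap u
    rwa [h₁, h₂, map_zero, mul_zero, add_zero] at hZ
  exact hJ (hE.jacobian_eq_zero (Z_eq_zero _ hah hbh) (Z_eq_zero _ hak hbk))

lemma Z_V_eq : H.Z (-H.conj n ^ 2 / H.conj x) = H.slope x n * H.Z n := by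
  have hx := hE.conj_x_ne_zero
  have hZ := congrArg H.Z (div_mul_cancel₀ (-H.conj n ^ 2) hx)
  have hV := div_mul_cancel₀ (-H.conj n ^ 2) hx
  rw [slope, div_mul_eq_mul_div, eq_div_iff (mul_ne_zero hE.Z_x_ne_zero (pow_ne_zero 3 hx))]
  generalize -H.conj n ^ 2 / H.conj x = v at hZ hV ⊢
  simp only [Derivation.leibniz, map_neg, smul_eq_mul, sq] at hZ
  linear_combination H.conj x ^ 2 * H.Z x * hZ - H.conj x * H.Z x * H.Z (H.conj x) * hV
    - 2 * H.conj x ^ 2 * H.Z x * hE.conj_n_mul_Z + H.conj x * H.Z x * H.Z (H.conj x) * hE.n_sq_add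
    - n ^ 2 * H.Z (H.conj x) * hE.n_mul_Z_n

lemma firstIntegrals [CharZero E] :
    hE.toRootExtension.FirstIntegrals (H.slope x n) (H.conj h) (H.conj e) (H.conj k ^ 2) := by
  have hx := hE.x_ne_zero
  have hn := hE.n_ne_zero
  have hx' := hE.conj_x_ne_zero
  have hn' := hE.conj_n_ne_zero
  have hA := hE.Z_x_ne_zero
  have hB := hE.Z_conj_x_ne_zero
  have aeval_U : aeval hE.toRootExtension.n hE.toQuadratic.U = n / H.conj x := hE.aeval_U
  have aeval_V : aeval hE.toRootExtension.n hE.toQuadratic.V = -H.conj n ^ 2 / H.conj x :=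
    hE.aeval_V
  have aeval_quad : aeval hE.toRootExtension.n hE.toQuadratic.quad = -2 * x := hE.aeval_quad
  refine
    { Y_ne_zero := div_ne_zero (mul_ne_zero hB (pow_ne_zero 3 hn))
        (mul_ne_zero hA (pow_ne_zero 3 hx'))
      Z_V := by rw [aeval_V]; exact hE.Z_V_eq
      Z_h' := show H.Z _ = 0 by rw [← H.conj_Zb, hE.Zb_h, map_zero]
      Z_e' := show H.Z _ = 0 by rw [← H.conj_Zb, hE.Zb_e, map_zero]
      Z_c := show H.Z _ = 0 by rw [← map_pow, ← H.conj_Zb, Derivation.leibniz_pow, hE.Zb_k,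
        smul_zero, smul_zero, map_zero]
      h'_mul := ?_
      e'_mul := ?_
      c_mul := ?_ } <;>
  rw [aeval_U, aeval_V, aeval_quad, show hE.toRootExtension.n = n from rfl, slope]
  · rw [hE.conj_h_eq H.conj_conj, hE.conj_k_eq]
    field_simp
    ring
  · rw [hE.conj_e_eq H.conj_conj, hE.conj_k_eq]
    field_simp
    ring
  · rw [hE.conj_k_eq]
    field_simp
    ring

theorem eq_or_exists_quarticEqSq [CharZero E] (hh : h ≠ 0) (he : e ≠ 0) (hΔ : k ^ 2 + h * e ≠ 0)
    (hJ : H.Z x * H.Zb (H.conj x) ≠ H.Z (H.conj x) * H.Zb x) :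
    H.Z (H.conj x) * n ^ 2 * x = 2 * H.Z x * H.conj n ^ 2 * H.conj x ∨
    ∃ l σ π : E, QuarticEqSq h k e (H.conj h) (H.conj e)
      (H.conj k ^ 2 + H.conj h * H.conj e) l σ π := by
  have hS : hE.toQuadratic.Nondegenerate :=
    ⟨fun h₀ => hh (congrArg Subtype.val h₀), fun h₀ => hE.k_ne_zero (congrArg Subtype.val h₀),
      fun h₀ => he (congrArg Subtype.val h₀), fun h₀ => hΔ (congrArg Subtype.val h₀)⟩
  refine (hE.firstIntegrals.eq_or_exists_quarticEqSq hS (hE.w_ne_zero hJ)).imp_left fun hYQ => ?_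
  change H.slope x n * aeval n hE.toQuadratic.quad
    = 4 * aeval n hE.toQuadratic.U * aeval n hE.toQuadratic.V at hYQ
  rw [hE.aeval_U, hE.aeval_V, hE.aeval_quad, slope] at hYQ
  have := hE.conj_x_ne_zero
  have := hE.Z_x_ne_zero
  have := hE.n_ne_zero
  field_simp at hYQ
  linear_combination (-1 / 2) * hYQ

end IsInversionSolution

end HeisenbergField

end Algebra

/-! ### The relations at a point -/

section Pointwise

namespace QuarticEqSq

variable {E : Type*} [Field E] [CharZero E] {h k e h' e' D l σ π : E}

lemma l_ne_zero (hQ : QuarticEqSq h k e h' e' D l σ π) (hh : h ≠ 0) (hk : k ≠ 0)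
    (hh' : h' ≠ 0) : l ≠ 0 := by
  obtain ⟨q₄, q₃, -⟩ := hQ
  rintro rfl
  have hD : D * h = 2 * h' := by
    apply mul_right_cancel₀ hh
    linear_combination -q₄
  apply mul_ne_zero hk hh'
  linear_combination q₃ / 4 - k * hD

-- Write `l (X ^ 2 - σ X + π) ^ 2 = L (Q + α X + γ) ^ 2` with `Q = h X ^ 2 - 2 k X - e`. Then `Q`
-- divides `L (α X + γ) ^ 2 - 4 X ^ 2`, and the constant quotient is `ε`.
lemma exists_normal_form (hQ : QuarticEqSq h k e h' e' D l σ π) (hh : h ≠ 0) (hk : k ≠ 0)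
    (hh' : h' ≠ 0) : ∃ L G α γ ε : E, L ≠ 0 ∧ G * h = 2 * h' ∧ G * k = L * α ∧
      ε = G * e - 2 * e' - 2 * L * γ ∧ L * α ^ 2 - 4 = ε * h ∧ L * α * γ = -k * ε ∧
      L * γ ^ 2 = -e * ε := by
  have hl := hQ.l_ne_zero hh hk hh'
  obtain ⟨q₄, q₃, q₂, q₁, q₀⟩ := hQ
  obtain ⟨L, rfl⟩ : ∃ L, l = L * h ^ 2 := ⟨l / h ^ 2, by field_simp⟩
  obtain ⟨α, rfl⟩ : ∃ α, σ = (2 * k - α) / h := ⟨2 * k - h * σ, by field_simp; ring⟩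
  obtain ⟨γ, rfl⟩ : ∃ γ, π = (γ - e) / h := ⟨e + h * π, by field_simp; ring⟩
  obtain ⟨G, rfl⟩ : ∃ G, D = G - L := ⟨D + L, by ring⟩
  field_simp at q₃ q₂ q₁ q₀
  have hG : G * h = 2 * h' := by
    apply mul_right_cancel₀ hh
    linear_combination -q₄
  have hα : G * k = L * α := by
    apply mul_left_cancel₀ hh
    linear_combination q₃ / 2 - k * hG
  refine ⟨L, G, α, γ, _, left_ne_zero_of_mul hl, hG, hα, rfl, ?_, ?_, ?_⟩
  · linear_combination -q₂ + e * hG - 4 * k * hα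
  · linear_combination -q₁ / 2 - e * hα
  · linear_combination -q₀

lemma cross_eq_of_normal_form {L G α γ ε : E} (hk : k ≠ 0)
    (hL : L ≠ 0) (hG : G * h = 2 * h') (hα : G * k = L * α) (hε : ε = G * e - 2 * e' - 2 * L * γ)
    (h₂ : L * α ^ 2 - 4 = ε * h) (h₁ : L * α * γ = -k * ε) (h₀ : L * γ ^ 2 = -e * ε) :
    h' * e = h * e' ∨ (k ^ 2 + h * e) * (h' * e + e' * h) = 2 * h * e := by
  by_cases hε₀ : ε = 0
  · left
    have hγ : γ = 0 := by simpa [hε₀, hL] using h₀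
    rw [hγ, hε₀] at hε
    linear_combination -h / 2 * hε - e / 2 * hG
  right
  have hεΔ : ε * (k ^ 2 + h * e) = -4 * e := by
    apply mul_left_cancel₀ hε₀
    linear_combination -(L * α * γ - k * ε) * h₁ + L * γ ^ 2 * h₂ + (4 + ε * h) * h₀
  have hGγ : G * γ = -ε := by
    apply mul_left_cancel₀ hk
    linear_combination h₁ + γ * hα
  have hL_eq : 4 * L = G ^ 2 * (k ^ 2 + h * e) := by
    apply mul_left_cancel₀ (pow_ne_zero 2 hk)
    linear_combination -L * h * hεΔ - L * (k ^ 2 + h * e) * h₂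
      - (k ^ 2 + h * e) * (G * k + L * α) * hα
  have hLγ : L * γ = G * e := by
    linear_combination γ / 4 * hL_eq + G * (k ^ 2 + h * e) / 4 * hGγ - G / 4 * hεΔ
  linear_combination -h / 2 * hεΔ + (k ^ 2 + h * e) * (h / 2 * hε - e / 2 * hG - h * hLγ)

theorem cross_eq (hQ : QuarticEqSq h k e h' e' D l σ π) (hh : h ≠ 0) (hk : k ≠ 0)
    (hh' : h' ≠ 0) :
    h' * e = h * e' ∨ (k ^ 2 + h * e) * (h' * e + e' * h) = 2 * h * e := by
  obtain ⟨L, G, α, γ, ε, hL, hG, hα, hε, h₂, h₁, h₀⟩ := hQ.exists_normal_form hh hk hh'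
  exact cross_eq_of_normal_form hk hL hG hα hε h₂ h₁ h₀

end QuarticEqSq

open scoped ComplexConjugate

/-- The relations `ConjRelations` over `ℂ` in terms of `c = |x|² / |n|²` and `lam = n̄ / (k x̄)`,
together with the bound on `lam` that positivity of the Jacobian gives. -/
structure PolarRelations (c : ℝ) (lam n k h e : ℂ) : Prop where
  c_pos : 0 < c
  c_le_one : c ≤ 1
  norm_lam_lt : ‖lam‖ < c
  n_ne_zero : n ≠ 0
  k_ne_zero : k ≠ 0
  n_sq_add : n ^ 2 + conj n ^ 2 = -2 * c * n * conj n
  h_mul : h * (n * conj n) = k * (conj n + lam * n)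
  e_eq : e = -k * (n + lam * conj n)
  c_mul : c * (k * conj k) * (lam * conj lam) = 1

variable {x n k h e lam : ℂ} {c : ℝ}

lemma ConjRelations.polarRelations (hE : ConjRelations conj x n k h e)
    (hk : ‖n‖ ^ 3 < ‖k‖ * ‖x‖ ^ 3) :
    PolarRelations (‖x‖ ^ 2 / ‖n‖ ^ 2) (conj n / (k * conj x)) n k h e := by
  have hx := hE.x_ne_zero
  have hn := hE.n_ne_zero
  have hx' := hE.conj_x_ne_zero
  have hn' := hE.conj_n_ne_zero
  have hk₀ : k ≠ 0 := by
    rintro rfl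
    rw [norm_zero, zero_mul] at hk
    exact hk.not_ge (by positivity)
  have hk' : conj k ≠ 0 := (map_ne_zero _).mpr hk₀
  have hc : ((‖x‖ ^ 2 / ‖n‖ ^ 2 : ℝ) : ℂ) = x * conj x / (n * conj n) := by
    rw [Complex.mul_conj', Complex.mul_conj']
    push_cast
    rfl
  refine
    { c_pos := by positivity
      c_le_one := ?_
      norm_lam_lt := ?_
      n_ne_zero := hn
      k_ne_zero := hk₀
      n_sq_add := by rw [hc, hE.n_sq_add]; field_simp
      h_mul := ?_
      e_eq := ?_
      c_mul := by rw [hc]; simp only [map_div₀, map_mul, Complex.conj_conj]; field_simp }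
  · have hle := norm_add_le (n ^ 2) (conj n ^ 2)
    rw [hE.n_sq_add] at hle
    simp only [norm_mul, norm_neg, norm_pow, RCLike.norm_conj, RCLike.norm_ofNat] at hle
    rw [div_le_one (by positivity)]
    linarith
  · simp only [norm_div, norm_mul, RCLike.norm_conj]
    rw [div_lt_div_iff₀ (by positivity) (by positivity)]
    linarith
  · apply mul_left_cancel₀ hx'
    field_simp
    linear_combination hE.h_mul
  · apply mul_left_cancel₀ hx'
    field_simp
    linear_combination hE.e_mul

namespace PolarRelations

variable (hP : PolarRelations c lam n k h e)
include hP

lemma norm_lam_lt_one : ‖lam‖ < 1 := hP.norm_lam_lt.trans_le hP.c_le_one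

lemma conj_n_ne_zero : conj n ≠ 0 := (map_ne_zero _).mpr hP.n_ne_zero

lemma conj_k_ne_zero : conj k ≠ 0 := (map_ne_zero _).mpr hP.k_ne_zero

lemma ne_neg_lam_mul {u v : ℂ} (hv : v ≠ 0) (huv : ‖u‖ = ‖v‖) : u + lam * v ≠ 0 := fun h₀ => by
  have hu := congrArg norm (eq_neg_of_add_eq_zero_left h₀)
  rw [norm_neg, norm_mul, huv] at hu
  nlinarith [norm_pos_iff.mpr hv, hP.norm_lam_lt_one]

lemma h_ne_zero : h ≠ 0 := by
  rintro rfl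
  refine mul_ne_zero hP.k_ne_zero (hP.ne_neg_lam_mul hP.n_ne_zero (RCLike.norm_conj n)) ?_
  rw [← hP.h_mul, zero_mul]

lemma e_ne_zero : e ≠ 0 := by
  rw [hP.e_eq]
  exact mul_ne_zero (neg_ne_zero.mpr hP.k_ne_zero)
    (hP.ne_neg_lam_mul hP.conj_n_ne_zero (RCLike.norm_conj n).symm)

lemma disc_mul :
    n * conj n * (k ^ 2 + h * e) = k ^ 2 * (n * conj n) * (lam * (2 * c - lam)) := by
  linear_combination e * hP.h_mul + k * (conj n + lam * n) * hP.e_eq - k ^ 2 * lam * hP.n_sq_add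

lemma lam_ne_zero : lam ≠ 0 := by
  rintro rfl
  simpa using hP.c_mul

lemma disc_ne_zero : k ^ 2 + h * e ≠ 0 := by
  have hlam : 2 * (c : ℂ) - lam ≠ 0 := fun h₀ => by
    have hlt := hP.norm_lam_lt
    rw [← sub_eq_zero.mp h₀, norm_mul, Complex.norm_ofNat, Complex.norm_real,
      Real.norm_of_nonneg hP.c_pos.le] at hlt
    linarith [hP.c_pos]
  refine right_ne_zero_of_mul (a := n * conj n) ?_
  rw [hP.disc_mul]
  exact mul_ne_zero (mul_ne_zero (pow_ne_zero 2 hP.k_ne_zero)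
    (mul_ne_zero hP.n_ne_zero hP.conj_n_ne_zero)) (mul_ne_zero hP.lam_ne_zero hlam)

lemma conj_h_mul : conj h * (n * conj n) = conj k * (n + conj lam * conj n) := by
  have := congrArg conj hP.h_mul
  simp only [map_mul, map_add, Complex.conj_conj] at this
  linear_combination this

lemma conj_e_eq : conj e = -conj k * (conj n + conj lam * n) := by
  simpa only [map_mul, map_add, map_neg, Complex.conj_conj] using congrArg conj hP.e_eq

lemma conj_h_mul_e_ne (hn : n ^ 2 ≠ conj n ^ 2) : conj h * e ≠ h * conj e := by
  intro hcross
  rw [hP.conj_e_eq, hP.e_eq] at hcross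
  have hmul : (k * conj k) * ((n ^ 2 - conj n ^ 2) * (1 - lam * conj lam)) = 0 := by
    linear_combination -n * conj n * hcross - k * (n + lam * conj n) * hP.conj_h_mul
      + conj k * (conj n + conj lam * n) * hP.h_mul
  refine mul_ne_zero (mul_ne_zero hP.k_ne_zero hP.conj_k_ne_zero)
    (mul_ne_zero (sub_ne_zero.mpr hn) ?_) hmul
  rw [Complex.mul_conj', sub_ne_zero]
  have hlt : ‖lam‖ ^ 2 < 1 := pow_lt_one₀ (norm_nonneg lam) hP.norm_lam_lt_one two_ne_zero
  exact_mod_cast hlt.ne'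

lemma normSq_mul_eq (hcross : (k ^ 2 + h * e) * (conj h * e + conj e * h) = 2 * h * e) :
    (k * conj k) * (lam * (2 * c - lam)) * (-c * (1 + lam * conj lam) + lam + conj lam)
      = 1 - lam * (2 * c - lam) := by
  have hsum : n * conj n * (conj h * e + conj e * h) = -2 * (k * conj k) * (n * conj n) *
      (-c * (1 + lam * conj lam) + lam + conj lam) := by
    rw [hP.conj_e_eq, hP.e_eq]
    linear_combination -k * (n + lam * conj n) * hP.conj_h_mul
      - conj k * (conj n + conj lam * n) * hP.h_mul
      - k * conj k * (1 + lam * conj lam) * hP.n_sq_add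
  apply mul_left_cancel₀ (mul_ne_zero (pow_ne_zero 2 hP.k_ne_zero)
    (pow_ne_zero 2 (mul_ne_zero hP.n_ne_zero hP.conj_n_ne_zero)))
  linear_combination -(n * conj n) ^ 2 / 2 * hcross
    + n * conj n * (conj h * e + conj e * h) / 2 * hP.disc_mul
    + k ^ 2 * (n * conj n) * (lam * (2 * c - lam)) / 2 * hsum - n * conj n * hP.disc_mul

omit hP in
lemma false_of_real_relations {a b κ : ℝ} (hac : a < c) (hκ : c * κ * (a ^ 2 + b ^ 2) = 1)
    (hre : (a * (2 * c - a) + b ^ 2) * (κ * (-c * (1 + a ^ 2 + b ^ 2) + 2 * a) + 1) = 1)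
    (him : 2 * b * (c - a) * (κ * (-c * (1 + a ^ 2 + b ^ 2) + 2 * a) + 1) = 0) : False := by
  have hM : κ * (-c * (1 + a ^ 2 + b ^ 2) + 2 * a) + 1 ≠ 0 := right_ne_zero_of_mul_eq_one hre
  have hb : b = 0 := by simpa [(sub_pos.mpr hac).ne'] using (mul_eq_zero.mp him).resolve_right hM
  subst hb
  have ha : a * (c - a) ^ 2 = 0 := by
    linear_combination -c * a ^ 2 / 2 * hre
      + a * (2 * c - a) * (-c * (1 + a ^ 2) + 2 * a) / 2 * hκ
  have ha₀ : a = 0 := by simpa [(sub_pos.mpr hac).ne'] using ha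
  simp [ha₀] at hκ

lemma disc_mul_ne : (k ^ 2 + h * e) * (conj h * e + conj e * h) ≠ 2 * h * e := by
  intro hcross
  have hrel := hP.normSq_mul_eq hcross
  have hκ := hP.c_mul
  have hac : lam.re < c := (Complex.re_le_norm lam).trans_lt hP.norm_lam_lt
  rw [Complex.mul_conj k, Complex.mul_conj lam] at hκ
  rw [Complex.mul_conj k, Complex.mul_conj lam, add_assoc _ lam, Complex.add_conj] at hrel
  have hM : lam * ((2 * c : ℝ) - lam) *
      ((Complex.normSq k * (-c * (1 + Complex.normSq lam) + 2 * lam.re) + 1 : ℝ) : ℂ) = 1 := by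
    push_cast at hrel ⊢
    linear_combination hrel
  have hre := congrArg Complex.re hM
  have him := congrArg Complex.im hM
  rw [Complex.re_mul_ofReal, Complex.one_re, Complex.mul_re] at hre
  rw [Complex.im_mul_ofReal, Complex.one_im, Complex.mul_im] at him
  simp only [Complex.sub_re, Complex.sub_im, Complex.ofReal_re, Complex.ofReal_im,
    Complex.normSq_apply lam] at hre him
  refine false_of_real_relations (a := lam.re) (b := lam.im) (κ := Complex.normSq k) hac ?_ ?_ ?_
  · rw [← Complex.ofReal_inj]
    push_cast [Complex.normSq_apply lam] at hκ ⊢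
    linear_combination hκ
  · linear_combination hre
  · linear_combination him

theorem not_quarticEqSq (hn : n ^ 2 ≠ conj n ^ 2) (l σ π : ℂ) :
    ¬ QuarticEqSq h k e (conj h) (conj e) (conj k ^ 2 + conj h * conj e) l σ π := fun hQ =>
  (hQ.cross_eq hP.h_ne_zero hP.k_ne_zero ((map_ne_zero _).mpr hP.h_ne_zero)).elim
    (hP.conj_h_mul_e_ne hn) hP.disc_mul_ne

end PolarRelations

end Pointwise

/-! ### The Heisenberg vector fields -/

section Calculus

open scoped ContDiff ComplexConjugate Topology

variable {W : Set Heis} {u v : Heis → ℂ} {p : Heis} {V V' : Heis → Heis}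

lemma differentiableAt_of_contDiffOn {E : Type*} [NormedAddCommGroup E] [NormedSpace ℝ E]
    {u : Heis → E} (hW : IsOpen W) (hu : ContDiffOn ℝ ∞ u W) (hp : p ∈ W) :
    DifferentiableAt ℝ u p :=
  (hu.contDiffAt (hW.mem_nhds hp)).differentiableAt (by simp)

lemma contDiffOn_conj (hu : ContDiffOn ℝ ∞ u W) : ContDiffOn ℝ ∞ (fun p => conj (u p)) W :=
  (Complex.conjCLE.contDiff (n := ∞)).comp_contDiffOn hu

lemma fderiv_comp_holomorphic {φ : ℂ → ℂ} {φ' : ℂ} (hφ : HasDerivAt φ φ' (u p))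
    (hu : DifferentiableAt ℝ u p) (w : Heis) :
    fderiv ℝ (fun q => φ (u q)) p w = φ' * fderiv ℝ u p w := by
  have hcomp := ((hφ.hasFDerivAt.restrictScalars ℝ).comp p hu.hasFDerivAt).fderiv
  rw [show (fun q => φ (u q)) = φ ∘ u from rfl, hcomp]
  simp [mul_comm]

lemma fderiv_conj (u : Heis → ℂ) (p w : Heis) :
    fderiv ℝ (fun q => conj (u q)) p w = conj (fderiv ℝ u p w) := by
  rw [show (fun q => conj (u q)) = Complex.conjCLE ∘ u from rfl, Complex.conjCLE.comp_fderiv]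
  simp

/-- Differentiation of complex functions along the vector field `V`. -/
def fieldDeriv (V : Heis → Heis) (u : Heis → ℂ) (p : Heis) : ℂ := fderiv ℝ u p (V p)

/-- The coefficient vector of `X`. -/
def fieldX (p : Heis) : Heis := (1, 0, 2 * p.2.1)

/-- The coefficient vector of `Y`. -/
def fieldY (p : Heis) : Heis := (0, 1, -(2 * p.1))

/-- The coefficient vector of `T`. -/
def fieldT (_ : Heis) : Heis := (0, 0, 1)

lemma contDiff_fieldX : ContDiff ℝ ∞ fieldX := by unfold fieldX; fun_prop

lemma contDiff_fieldY : ContDiff ℝ ∞ fieldY := by unfold fieldY; fun_prop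

lemma contDiff_fieldT : ContDiff ℝ ∞ fieldT := by unfold fieldT; fun_prop

/-- The rules shared by the derivations `Z`, `Z̄` and `T`; `comp` is the chain rule for
holomorphic functions. -/
structure IsFirstOrder (D : (Heis → ℂ) → Heis → ℂ) : Prop where
  contDiffOn : ∀ {W : Set Heis} {u : Heis → ℂ}, IsOpen W → ContDiffOn ℝ ∞ u W →
    ContDiffOn ℝ ∞ (D u) W
  congr : ∀ {u v : Heis → ℂ} {p : Heis}, u =ᶠ[𝓝 p] v → D u p = D v p
  add : ∀ {u v : Heis → ℂ} {p : Heis}, DifferentiableAt ℝ u p → DifferentiableAt ℝ v p →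
    D (fun q => u q + v q) p = D u p + D v p
  mul : ∀ {u v : Heis → ℂ} {p : Heis}, DifferentiableAt ℝ u p → DifferentiableAt ℝ v p →
    D (fun q => u q * v q) p = u p * D v p + v p * D u p
  const : ∀ (c : ℂ) (p : Heis), D (fun _ => c) p = 0
  comp : ∀ {φ : ℂ → ℂ} {φ' : ℂ} {u : Heis → ℂ} {p : Heis}, HasDerivAt φ φ' (u p) →
    DifferentiableAt ℝ u p → D (fun q => φ (u q)) p = φ' * D u p

lemma isFirstOrder_fieldDeriv (hV : ContDiff ℝ ∞ V) : IsFirstOrder (fieldDeriv V) where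
  contDiffOn hW hu := (hu.fderiv_of_isOpen hW (m := ∞) (by simp)).clm_apply hV.contDiffOn
  congr h := by simp only [fieldDeriv, h.fderiv_eq]
  add hu hv := by simp only [fieldDeriv, fderiv_fun_add hu hv, add_apply]
  mul hu hv := by
    simp only [fieldDeriv, fderiv_fun_mul hu hv, add_apply, smul_apply, smul_eq_mul]
  const c p := by simp [fieldDeriv]
  comp hφ hu := fderiv_comp_holomorphic hφ hu _

namespace IsFirstOrder

variable {D D' : (Heis → ℂ) → Heis → ℂ}

lemma const_mul (hD : IsFirstOrder D) (c : ℂ) (hu : DifferentiableAt ℝ u p) :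
    D (fun q => c * u q) p = c * D u p :=
  hD.comp (φ := fun w => c * w) (by simpa using (hasDerivAt_id (u p)).const_mul c) hu

lemma affine (hD : IsFirstOrder D) (c d : ℂ) (hu : DifferentiableAt ℝ u p) :
    D (fun q => c * u q + d) p = c * D u p :=
  hD.comp (φ := fun w => c * w + d)
    (by simpa using ((hasDerivAt_id (u p)).const_mul c).add_const d) hu

lemma div (hD : IsFirstOrder D) (hu : DifferentiableAt ℝ u p) (hv : DifferentiableAt ℝ v p)
    (hvp : v p ≠ 0) :
    D (fun q => u q / v q) p = D u p / v p - u p * D v p / v p ^ 2 := by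
  simp only [div_eq_mul_inv]
  rw [hD.mul hu (hv.fun_inv hvp), hD.comp (φ := fun w => w⁻¹) (hasDerivAt_inv hvp) hv]
  field_simp
  ring

lemma congr_of_eqOn (hD : IsFirstOrder D) (hW : IsOpen W) (huv : Set.EqOn u v W) (hp : p ∈ W) :
    D u p = D v p :=
  hD.congr (huv.eventuallyEq_of_mem (hW.mem_nhds hp))

lemma linear_combination (hD : IsFirstOrder D) (a b : ℂ) (hu : DifferentiableAt ℝ u p)
    (hv : DifferentiableAt ℝ v p) :
    D (fun q => a * u q + b * v q) p = a * D u p + b * D v p := by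
  rw [hD.add (hu.const_mul a) (hv.const_mul b), hD.const_mul a hu, hD.const_mul b hv]

lemma combine (hD : IsFirstOrder D) (hD' : IsFirstOrder D') (a b : ℂ) :
    IsFirstOrder fun u p => a * D u p + b * D' u p where
  contDiffOn hW hu := (contDiffOn_const.mul (hD.contDiffOn hW hu)).add
    (contDiffOn_const.mul (hD'.contDiffOn hW hu))
  congr h := by rw [hD.congr h, hD'.congr h]
  add hu hv := by rw [hD.add hu hv, hD'.add hu hv]; ring
  mul hu hv := by rw [hD.mul hu hv, hD'.mul hu hv]; ring
  const c p := by rw [hD.const, hD'.const]; ring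
  comp hφ hu := by rw [hD.comp hφ hu, hD'.comp hφ hu]; ring

end IsFirstOrder

lemma isFirstOrder_XD : IsFirstOrder (XD (E := ℂ)) := isFirstOrder_fieldDeriv contDiff_fieldX

lemma isFirstOrder_YD : IsFirstOrder (YD (E := ℂ)) := isFirstOrder_fieldDeriv contDiff_fieldY

lemma isFirstOrder_TD : IsFirstOrder (TD (E := ℂ)) := isFirstOrder_fieldDeriv contDiff_fieldT

lemma ZD_eq : ZD = fun u q => 1 / 2 * XD u q + -I / 2 * YD u q := by
  ext u q
  rw [ZD]
  ring

lemma ZbD_eq : ZbD = fun u q => 1 / 2 * XD u q + I / 2 * YD u q := by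
  ext u q
  rw [ZbD]
  ring

lemma isFirstOrder_ZD : IsFirstOrder ZD := ZD_eq ▸ isFirstOrder_XD.combine isFirstOrder_YD _ _

lemma isFirstOrder_ZbD : IsFirstOrder ZbD := ZbD_eq ▸ isFirstOrder_XD.combine isFirstOrder_YD _ _

lemma ZD_conj (u : Heis → ℂ) (p : Heis) : ZD (fun q => conj (u q)) p = conj (ZbD u p) := by
  simp only [ZD, ZbD, XD, YD, fderiv_conj, map_div₀, map_add, map_mul, Complex.conj_I, map_ofNat]
  ring

lemma ZbD_conj (u : Heis → ℂ) (p : Heis) : ZbD (fun q => conj (u q)) p = conj (ZD u p) := by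
  simp only [ZD, ZbD, XD, YD, fderiv_conj, map_div₀, map_sub, map_mul, Complex.conj_I, map_ofNat]
  ring

lemma fieldDeriv_fieldDeriv (hV : ContDiff ℝ ∞ V) (hW : IsOpen W)
    (hu : ContDiffOn ℝ ∞ u W) (hp : p ∈ W) :
    fieldDeriv V' (fieldDeriv V u) p =
      fderiv ℝ (fderiv ℝ u) p (V' p) (V p) + fderiv ℝ u p (fderiv ℝ V p (V' p)) := by
  have hu' : DifferentiableAt ℝ (fderiv ℝ u) p :=
    differentiableAt_of_contDiffOn hW (hu.fderiv_of_isOpen hW (m := ∞) (by simp)) hp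
  change fderiv ℝ (fun q => fderiv ℝ u q (V q)) p (V' p) = _
  rw [fderiv_clm_apply hu' (hV.differentiable (by simp) p)]
  simp [add_comm]

lemma fieldDeriv_comm (hV : ContDiff ℝ ∞ V) (hV' : ContDiff ℝ ∞ V')
    (hW : IsOpen W) (hu : ContDiffOn ℝ ∞ u W) (hp : p ∈ W) :
    fieldDeriv V' (fieldDeriv V u) p = fieldDeriv V (fieldDeriv V' u) p +
      fderiv ℝ u p (fderiv ℝ V p (V' p) - fderiv ℝ V' p (V p)) := by
  have hsymm : IsSymmSndFDerivAt ℝ u p :=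
    (hu.contDiffAt (hW.mem_nhds hp)).isSymmSndFDerivAt (by
      rw [minSmoothness_of_isRCLikeNormedField]
      exact WithTop.coe_le_coe.mpr le_top)
  rw [fieldDeriv_fieldDeriv hV hW hu hp, fieldDeriv_fieldDeriv hV' hW hu hp, map_sub,
    hsymm.eq (V' p) (V p)]
  ring

lemma fderiv_fieldX (p w : Heis) : fderiv ℝ fieldX p w = (0, 0, 2 * w.2.1) := by
  have h : HasFDerivAt fieldX (ContinuousLinearMap.prod 0 (ContinuousLinearMap.prod 0
      ((2 : ℝ) • (ContinuousLinearMap.fst ℝ ℝ ℝ).comp (ContinuousLinearMap.snd ℝ ℝ (ℝ × ℝ))))) p :=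
    (hasFDerivAt_const _ _).prodMk ((hasFDerivAt_const _ _).prodMk
      (((ContinuousLinearMap.fst ℝ ℝ ℝ).comp
        (ContinuousLinearMap.snd ℝ ℝ (ℝ × ℝ))).hasFDerivAt.const_smul (2 : ℝ)))
  rw [h.fderiv]
  simp

lemma fderiv_fieldY (p w : Heis) : fderiv ℝ fieldY p w = (0, 0, -(2 * w.1)) := by
  have h : HasFDerivAt fieldY (ContinuousLinearMap.prod 0 (ContinuousLinearMap.prod 0
      (-((2 : ℝ) • (ContinuousLinearMap.fst ℝ ℝ (ℝ × ℝ)))))) p :=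
    (hasFDerivAt_const _ _).prodMk ((hasFDerivAt_const _ _).prodMk
      (((ContinuousLinearMap.fst ℝ ℝ (ℝ × ℝ)).hasFDerivAt.const_smul (2 : ℝ)).neg))
  rw [h.fderiv]
  simp

lemma fderiv_fieldT (p w : Heis) : fderiv ℝ fieldT p w = 0 := by
  rw [show fieldT = fun _ => ((0, 0, 1) : Heis) from rfl]
  simp

lemma XD_TD (hW : IsOpen W) (hu : ContDiffOn ℝ ∞ u W) (hp : p ∈ W) :
    XD (TD u) p = TD (XD u) p := by
  refine (fieldDeriv_comm contDiff_fieldT contDiff_fieldX hW hu hp).trans ?_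
  rw [fderiv_fieldT, fderiv_fieldX]
  simp only [fieldT, mul_zero, zero_sub, Prod.mk_zero_zero, neg_zero, map_zero, add_zero]
  rfl

lemma YD_TD (hW : IsOpen W) (hu : ContDiffOn ℝ ∞ u W) (hp : p ∈ W) :
    YD (TD u) p = TD (YD u) p := by
  refine (fieldDeriv_comm contDiff_fieldT contDiff_fieldY hW hu hp).trans ?_
  rw [fderiv_fieldT, fderiv_fieldY]
  simp only [fieldT, mul_zero, zero_sub, Prod.mk_zero_zero, neg_zero, map_zero, add_zero]
  rfl

lemma YD_XD (hW : IsOpen W) (hu : ContDiffOn ℝ ∞ u W) (hp : p ∈ W) :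
    YD (XD u) p = XD (YD u) p + 4 * TD u p := by
  refine (fieldDeriv_comm contDiff_fieldX contDiff_fieldY hW hu hp).trans ?_
  have hbracket : fderiv ℝ fieldX p (fieldY p) - fderiv ℝ fieldY p (fieldX p) =
      (4 : ℝ) • fieldT p := by
    rw [fderiv_fieldX, fderiv_fieldY]
    simp only [fieldX, fieldY, fieldT, Prod.mk_sub_mk, Prod.smul_mk, smul_eq_mul, sub_self,
      mul_zero, mul_one]
    norm_num
  rw [hbracket, map_smul, Complex.real_smul]
  norm_num
  rfl

lemma ZD_TD (hW : IsOpen W) (hu : ContDiffOn ℝ ∞ u W) (hp : p ∈ W) :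
    ZD (TD u) p = TD (ZD u) p := by
  simp only [ZD_eq]
  rw [isFirstOrder_TD.linear_combination _ _
      (differentiableAt_of_contDiffOn hW (isFirstOrder_XD.contDiffOn hW hu) hp)
      (differentiableAt_of_contDiffOn hW (isFirstOrder_YD.contDiffOn hW hu) hp),
    XD_TD hW hu hp, YD_TD hW hu hp]

lemma ZbD_TD (hW : IsOpen W) (hu : ContDiffOn ℝ ∞ u W) (hp : p ∈ W) :
    ZbD (TD u) p = TD (ZbD u) p := by
  simp only [ZbD_eq]
  rw [isFirstOrder_TD.linear_combination _ _
      (differentiableAt_of_contDiffOn hW (isFirstOrder_XD.contDiffOn hW hu) hp)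
      (differentiableAt_of_contDiffOn hW (isFirstOrder_YD.contDiffOn hW hu) hp),
    XD_TD hW hu hp, YD_TD hW hu hp]

lemma ZbD_ZD (hW : IsOpen W) (hu : ContDiffOn ℝ ∞ u W) (hp : p ∈ W) :
    ZbD (ZD u) p = ZD (ZbD u) p + 2 * I * TD u p := by
  have hX := differentiableAt_of_contDiffOn hW (isFirstOrder_XD.contDiffOn hW hu) hp
  have hY := differentiableAt_of_contDiffOn hW (isFirstOrder_YD.contDiffOn hW hu) hp
  simp only [ZbD_eq, ZD_eq]
  rw [isFirstOrder_XD.linear_combination _ _ hX hY, isFirstOrder_XD.linear_combination _ _ hX hY,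
    isFirstOrder_YD.linear_combination _ _ hX hY, isFirstOrder_YD.linear_combination _ _ hX hY,
    YD_XD hW hu hp]
  ring

end Calculus

/-! ### Germs along a generic ultrafilter -/

section Germs

open scoped ContDiff Topology
open Filter

variable {l : Ultrafilter Heis} {u v : Heis → ℂ}

/-- `u` is smooth on an open set of the ultrafilter `l`. -/
def SmoothAlong (l : Ultrafilter Heis) (u : Heis → ℂ) : Prop :=
  ∃ W : Set Heis, IsOpen W ∧ W ∈ l ∧ ContDiffOn ℝ ∞ u W

namespace SmoothAlong

lemma const (c : ℂ) : SmoothAlong l fun _ => c :=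
  ⟨Set.univ, isOpen_univ, univ_mem, contDiffOn_const⟩

lemma exists_common (hu : SmoothAlong l u) (hv : SmoothAlong l v) :
    ∃ W : Set Heis, IsOpen W ∧ W ∈ l ∧ ContDiffOn ℝ ∞ u W ∧ ContDiffOn ℝ ∞ v W := by
  obtain ⟨W, hW, hWl, hu⟩ := hu
  obtain ⟨W', hW', hWl', hv⟩ := hv
  exact ⟨W ∩ W', hW.inter hW', inter_mem hWl hWl', hu.mono Set.inter_subset_left,
    hv.mono Set.inter_subset_right⟩

lemma add (hu : SmoothAlong l u) (hv : SmoothAlong l v) : SmoothAlong l fun p => u p + v p := by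
  obtain ⟨W, hW, hWl, hu, hv⟩ := hu.exists_common hv
  exact ⟨W, hW, hWl, hu.add hv⟩

lemma mul (hu : SmoothAlong l u) (hv : SmoothAlong l v) : SmoothAlong l fun p => u p * v p := by
  obtain ⟨W, hW, hWl, hu, hv⟩ := hu.exists_common hv
  exact ⟨W, hW, hWl, hu.mul hv⟩

lemma neg (hu : SmoothAlong l u) : SmoothAlong l fun p => -u p :=
  let ⟨W, hW, hWl, hu⟩ := hu
  ⟨W, hW, hWl, hu.neg⟩

lemma pow (hu : SmoothAlong l u) (m : ℕ) : SmoothAlong l fun p => u p ^ m :=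
  let ⟨W, hW, hWl, hu⟩ := hu
  ⟨W, hW, hWl, hu.pow m⟩

lemma inv (hu : SmoothAlong l u) (hu₀ : ∀ᶠ p in (l : Filter Heis), u p ≠ 0) :
    SmoothAlong l fun p => (u p)⁻¹ :=
  let ⟨W, hW, hWl, hu⟩ := hu
  ⟨W ∩ u ⁻¹' {0}ᶜ, hu.continuousOn.isOpen_inter_preimage hW isOpen_compl_singleton,
    inter_mem hWl hu₀, (hu.mono Set.inter_subset_left).inv fun _ hp => hp.2⟩

lemma conj (hu : SmoothAlong l u) : SmoothAlong l fun p => starRingEnd ℂ (u p) :=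
  let ⟨W, hW, hWl, hu⟩ := hu
  ⟨W, hW, hWl, contDiffOn_conj hu⟩

lemma eventually_differentiableAt (hu : SmoothAlong l u) :
    ∀ᶠ p in (l : Filter Heis), DifferentiableAt ℝ u p :=
  let ⟨_, hW, hWl, hu⟩ := hu
  mem_of_superset hWl fun _ hp => differentiableAt_of_contDiffOn hW hu hp

end SmoothAlong

/-- The field of germs along an ultrafilter `l` of the functions that are smooth along `l`. -/
def smoothGerms (l : Ultrafilter Heis) : Subfield (Germ (l : Filter Heis) ℂ) where
  carrier := {g | ∃ u, SmoothAlong l u ∧ (u : Germ (l : Filter Heis) ℂ) = g}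
  mul_mem' := by
    rintro _ _ ⟨u, hu, rfl⟩ ⟨v, hv, rfl⟩
    exact ⟨_, hu.mul hv, rfl⟩
  one_mem' := ⟨_, .const 1, rfl⟩
  add_mem' := by
    rintro _ _ ⟨u, hu, rfl⟩ ⟨v, hv, rfl⟩
    exact ⟨_, hu.add hv, rfl⟩
  zero_mem' := ⟨_, .const 0, rfl⟩
  neg_mem' := by
    rintro _ ⟨u, hu, rfl⟩
    exact ⟨_, hu.neg, rfl⟩
  inv_mem' := by
    rintro _ ⟨u, hu, rfl⟩
    by_cases h : (u : Germ (l : Filter Heis) ℂ) = 0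
    · rw [h, inv_zero]
      exact ⟨_, .const 0, rfl⟩
    · exact ⟨_, hu.inv (Ultrafilter.eventually_not.mpr fun hu₀ => h (Germ.coe_eq.mpr hu₀)), rfl⟩

/-- The germ of a function that is smooth along `l`. -/
def smoothGerm (hu : SmoothAlong l u) : smoothGerms l := ⟨u, u, hu, rfl⟩

lemma smoothGerm_eq_iff {hu : SmoothAlong l u} {hv : SmoothAlong l v} :
    smoothGerm hu = smoothGerm hv ↔ ∀ᶠ p in (l : Filter Heis), u p = v p :=
  Subtype.ext_iff.trans Germ.coe_eq

lemma exists_eq_smoothGerm (g : smoothGerms l) :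
    ∃ (u : Heis → ℂ) (hu : SmoothAlong l u), smoothGerm hu = g :=
  let ⟨u, hu, hug⟩ := g.2
  ⟨u, hu, Subtype.ext hug⟩

section

variable {hu : SmoothAlong l u} {hv : SmoothAlong l v}

lemma smoothGerm_zero : smoothGerm (.const 0) = (0 : smoothGerms l) := rfl

lemma smoothGerm_one : smoothGerm (.const 1) = (1 : smoothGerms l) := rfl

lemma smoothGerm_add : smoothGerm hu + smoothGerm hv = smoothGerm (hu.add hv) := rfl

lemma smoothGerm_mul : smoothGerm hu * smoothGerm hv = smoothGerm (hu.mul hv) := rfl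

lemma smoothGerm_neg : -smoothGerm hu = smoothGerm hu.neg := rfl

lemma smoothGerm_pow (m : ℕ) : smoothGerm hu ^ m = smoothGerm (hu.pow m) := by
  induction m with
  | zero => simp only [pow_zero, smoothGerm_one]
  | succ m ih => simp only [pow_succ, ih, smoothGerm_mul]

lemma smoothGerm_ofNat (m : ℕ) [m.AtLeastTwo] :
    smoothGerm (.const (OfNat.ofNat m)) = (OfNat.ofNat m : smoothGerms l) := rfl

lemma smoothGerm_eq_zero_iff :
    smoothGerm hu = 0 ↔ ∀ᶠ p in (l : Filter Heis), u p = 0 := by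
  rw [← smoothGerm_zero, smoothGerm_eq_iff]

lemma smoothGerm_ne_zero_iff :
    smoothGerm hu ≠ 0 ↔ ∀ᶠ p in (l : Filter Heis), u p ≠ 0 := by
  rw [Ne, smoothGerm_eq_zero_iff, Ultrafilter.eventually_not]

end

instance : CharZero (smoothGerms l) :=
  charZero_of_injective_ringHom (f := ((Germ.coeRingHom (l : Filter Heis)).comp
    (Pi.constRingHom Heis ℂ)).codRestrict (smoothGerms l) fun c => ⟨_, .const c, rfl⟩)
    (RingHom.injective _)

/-- Complex conjugation on the field of germs. -/
def conjGerm : smoothGerms l →+* smoothGerms l where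
  toFun g := ⟨Germ.map (starRingEnd ℂ) (g : Germ (l : Filter Heis) ℂ), by
    obtain ⟨u, hu, rfl⟩ := exists_eq_smoothGerm g
    exact ⟨_, hu.conj, rfl⟩⟩
  map_zero' := smoothGerm_eq_zero_iff (hu := (SmoothAlong.const 0).conj).mpr
    (.of_forall fun _ => map_zero _)
  map_one' := smoothGerm_eq_iff (hu := (SmoothAlong.const 1).conj) (hv := .const 1).mpr
    (.of_forall fun _ => map_one _)
  map_add' a b := by
    obtain ⟨u, hu, rfl⟩ := exists_eq_smoothGerm a
    obtain ⟨v, hv, rfl⟩ := exists_eq_smoothGerm b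
    exact smoothGerm_eq_iff (hu := (hu.add hv).conj) (hv := hu.conj.add hv.conj).mpr
      (.of_forall fun _ => map_add _ _ _)
  map_mul' a b := by
    obtain ⟨u, hu, rfl⟩ := exists_eq_smoothGerm a
    obtain ⟨v, hv, rfl⟩ := exists_eq_smoothGerm b
    exact smoothGerm_eq_iff (hu := (hu.mul hv).conj) (hv := hu.conj.mul hv.conj).mpr
      (.of_forall fun _ => map_mul _ _ _)

lemma conjGerm_smoothGerm (hu : SmoothAlong l u) :
    conjGerm (smoothGerm hu) = smoothGerm hu.conj := rfl

/-- An ultrafilter that contains all dense open sets. An equality of continuous functions along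
such an ultrafilter holds near almost every point, so that differential operators act on germs. -/
def IsGeneric (l : Ultrafilter Heis) : Prop := (l : Filter Heis) ≤ residual Heis

lemma exists_isGeneric {V : Set Heis} (hV : IsOpen V) (hne : V.Nonempty) :
    ∃ l : Ultrafilter Heis, V ∈ l ∧ IsGeneric l := by
  have : NeBot (residual Heis ⊓ 𝓟 V) := by
    rw [inf_principal_neBot_iff]
    intro U hU
    exact ((dense_of_mem_residual hU).inter_open_nonempty V hV hne).mono fun p hp => ⟨hp.2, hp.1⟩
  obtain ⟨l, hl⟩ := Ultrafilter.exists_le (residual Heis ⊓ 𝓟 V)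
  exact ⟨l, hl (mem_inf_of_right (mem_principal_self V)), hl.trans inf_le_left⟩

lemma IsGeneric.eventually_eventuallyEq_nhds (hl : IsGeneric l) (hu : SmoothAlong l u)
    (hv : SmoothAlong l v) (huv : ∀ᶠ p in (l : Filter Heis), u p = v p) :
    ∀ᶠ p in (l : Filter Heis), u =ᶠ[𝓝 p] v := by
  obtain ⟨W, hW, hWl, hu, hv⟩ := hu.exists_common hv
  set N : Set Heis := W ∩ (fun p => u p - v p) ⁻¹' {0}ᶜ
  have hN : IsOpen N :=
    (hu.continuousOn.sub hv.continuousOn).isOpen_inter_preimage hW isOpen_compl_singleton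
  have hfrontier : (frontier N)ᶜ ∈ l := by
    refine hl (residual_of_dense_open isClosed_frontier.isOpen_compl ?_)
    rw [← interior_eq_empty_iff_dense_compl, ← frontier_compl]
    exact interior_frontier hN.isClosed_compl
  filter_upwards [huv, hWl, hfrontier] with p huvp hpW hpN
  have hp : p ∉ closure N := fun hpc => by
    rw [hN.frontier_eq] at hpN
    exact hpN ⟨hpc, fun h => h.2 (sub_eq_zero.mpr huvp)⟩
  filter_upwards [hW.mem_nhds hpW, isClosed_closure.isOpen_compl.mem_nhds hp] with q hqW hqN
  by_contra huvq
  exact hqN (subset_closure ⟨hqW, sub_ne_zero.mpr huvq⟩)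

namespace IsFirstOrder

variable {D : (Heis → ℂ) → Heis → ℂ}

lemma smoothAlong (hD : IsFirstOrder D) (hu : SmoothAlong l u) : SmoothAlong l (D u) :=
  let ⟨W, hW, hWl, hu⟩ := hu
  ⟨W, hW, hWl, hD.contDiffOn hW hu⟩

/-- The action of a first order operator on germs. It is well defined only along a generic
ultrafilter; in general it is computed on a chosen representative. -/
def onGerm (hD : IsFirstOrder D) (g : smoothGerms l) : smoothGerms l :=
  smoothGerm (hD.smoothAlong (exists_eq_smoothGerm g).choose_spec.choose)

lemma onGerm_smoothGerm (hD : IsFirstOrder D) (hl : IsGeneric l) (hu : SmoothAlong l u) :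
    hD.onGerm (smoothGerm hu) = smoothGerm (hD.smoothAlong hu) := by
  obtain ⟨hv, hvu⟩ := (exists_eq_smoothGerm (smoothGerm hu)).choose_spec
  exact smoothGerm_eq_iff.mpr
    ((hl.eventually_eventuallyEq_nhds hv hu (smoothGerm_eq_iff.mp hvu)).mono fun _ => hD.congr)

/-- The derivation of the field of germs defined by a first order operator. -/
def derivation (hD : IsFirstOrder D) (hl : IsGeneric l) :
    Derivation ℤ (smoothGerms l) (smoothGerms l) :=
  Derivation.mk' (AddMonoidHom.toIntLinearMap (AddMonoidHom.mk' hD.onGerm (by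
    intro a b
    obtain ⟨u, hu, rfl⟩ := exists_eq_smoothGerm a
    obtain ⟨v, hv, rfl⟩ := exists_eq_smoothGerm b
    simp only [smoothGerm_add, hD.onGerm_smoothGerm hl, smoothGerm_eq_iff]
    filter_upwards [hu.eventually_differentiableAt, hv.eventually_differentiableAt] with p hup hvp
    exact hD.add hup hvp)))
  (by
    intro a b
    obtain ⟨u, hu, rfl⟩ := exists_eq_smoothGerm a
    obtain ⟨v, hv, rfl⟩ := exists_eq_smoothGerm b
    change hD.onGerm _ = _ * hD.onGerm _ + _ * hD.onGerm _
    simp only [smoothGerm_mul, smoothGerm_add, hD.onGerm_smoothGerm hl, smoothGerm_eq_iff]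
    filter_upwards [hu.eventually_differentiableAt, hv.eventually_differentiableAt] with p hup hvp
    exact hD.mul hup hvp)

lemma derivation_smoothGerm (hD : IsFirstOrder D) (hl : IsGeneric l) (hu : SmoothAlong l u) :
    hD.derivation hl (smoothGerm hu) = smoothGerm (hD.smoothAlong hu) :=
  hD.onGerm_smoothGerm hl hu

end IsFirstOrder

lemma contDiff_two_I_conj : ContDiff ℝ ∞ fun p : Heis => 2 * I * (p.1 - p.2.1 * I) := by
  have h : ContDiff ℝ ∞ (fun x : ℝ => (x : ℂ)) := Complex.ofRealCLM.contDiff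
  fun_prop

lemma fderiv_two_I_conj (p w : Heis) :
    fderiv ℝ (fun p : Heis => 2 * I * ((p.1 : ℂ) - p.2.1 * I)) p w =
      2 * I * (w.1 - w.2.1 * I) := by
  have hre : HasFDerivAt (fun p : Heis => (p.1 : ℂ))
      (Complex.ofRealCLM.comp (ContinuousLinearMap.fst ℝ ℝ (ℝ × ℝ))) p :=
    (Complex.ofRealCLM.comp (ContinuousLinearMap.fst ℝ ℝ (ℝ × ℝ))).hasFDerivAt
  have him : HasFDerivAt (fun p : Heis => (p.2.1 : ℂ))
      (Complex.ofRealCLM.comp ((ContinuousLinearMap.fst ℝ ℝ ℝ).comp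
        (ContinuousLinearMap.snd ℝ ℝ (ℝ × ℝ)))) p :=
    (Complex.ofRealCLM.comp ((ContinuousLinearMap.fst ℝ ℝ ℝ).comp
      (ContinuousLinearMap.snd ℝ ℝ (ℝ × ℝ)))).hasFDerivAt
  rw [((hre.fun_sub (him.mul_const I)).const_mul (2 * I)).fderiv]
  simp only [smul_apply, sub_apply,
    ContinuousLinearMap.comp_apply, ContinuousLinearMap.coe_fst', ofRealCLM_apply,
    ContinuousLinearMap.coe_snd', smul_eq_mul]
  ring

lemma ZD_two_I_conj (p : Heis) : ZD (fun p => 2 * I * (p.1 - p.2.1 * I)) p = 0 := by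
  simp only [ZD, XD, YD, fderiv_two_I_conj, ofReal_one, ofReal_zero]
  linear_combination I * I_sq

lemma ZbD_two_I_conj (p : Heis) : ZbD (fun p => 2 * I * (p.1 - p.2.1 * I)) p = 2 * I := by
  simp only [ZbD, XD, YD, fderiv_two_I_conj, ofReal_one, ofReal_zero]
  linear_combination -I * I_sq

lemma TD_two_I_conj (p : Heis) : TD (fun p : Heis => 2 * I * (p.1 - p.2.1 * I)) p = 0 := by
  simp only [TD, fderiv_two_I_conj, ofReal_zero, zero_mul, sub_zero, mul_zero]

lemma smoothAlong_two_I_conj : SmoothAlong l fun p => 2 * I * (p.1 - p.2.1 * I) :=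
  ⟨Set.univ, isOpen_univ, univ_mem, contDiff_two_I_conj.contDiffOn⟩

/-- The Heisenberg field of germs of smooth functions along a generic ultrafilter. -/
def heisenbergGerms (hl : IsGeneric l) : HeisenbergField (smoothGerms l) where
  Z := isFirstOrder_ZD.derivation hl
  Zb := isFirstOrder_ZbD.derivation hl
  T := isFirstOrder_TD.derivation hl
  conj := conjGerm
  s := smoothGerm smoothAlong_two_I_conj
  conj_conj g := by
    obtain ⟨u, hu, rfl⟩ := exists_eq_smoothGerm g
    simp only [conjGerm_smoothGerm, smoothGerm_eq_iff]
    exact .of_forall fun p => Complex.conj_conj _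
  conj_Z g := by
    obtain ⟨u, hu, rfl⟩ := exists_eq_smoothGerm g
    simp only [IsFirstOrder.derivation_smoothGerm, conjGerm_smoothGerm, smoothGerm_eq_iff]
    exact .of_forall fun p => (ZbD_conj u p).symm
  Z_T g := by
    obtain ⟨u, hu, rfl⟩ := exists_eq_smoothGerm g
    simp only [IsFirstOrder.derivation_smoothGerm, smoothGerm_eq_iff]
    obtain ⟨W, hW, hWl, hu⟩ := hu
    filter_upwards [hWl] with p hp using ZD_TD hW hu hp
  Zb_T g := by
    obtain ⟨u, hu, rfl⟩ := exists_eq_smoothGerm g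
    simp only [IsFirstOrder.derivation_smoothGerm, smoothGerm_eq_iff]
    obtain ⟨W, hW, hWl, hu⟩ := hu
    filter_upwards [hWl] with p hp using ZbD_TD hW hu hp
  Zb_Z g := by
    obtain ⟨u, hu, rfl⟩ := exists_eq_smoothGerm g
    simp only [IsFirstOrder.derivation_smoothGerm, smoothGerm_eq_iff, smoothGerm_mul,
      smoothGerm_add, ZbD_two_I_conj]
    obtain ⟨W, hW, hWl, hu⟩ := hu
    filter_upwards [hWl] with p hp using ZbD_ZD hW hu hp
  Z_s := by
    rw [IsFirstOrder.derivation_smoothGerm, smoothGerm_eq_zero_iff]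
    exact .of_forall ZD_two_I_conj
  T_s := by
    rw [IsFirstOrder.derivation_smoothGerm, smoothGerm_eq_zero_iff]
    exact .of_forall TD_two_I_conj
  Zb_s := by
    rw [IsFirstOrder.derivation_smoothGerm, Ne, smoothGerm_eq_zero_iff]
    intro h
    obtain ⟨p, hp⟩ := h.exists
    simp [ZbD_two_I_conj] at hp

section

variable (hl : IsGeneric l) (hu : SmoothAlong l u)

lemma heisenbergGerms_Z :
    (heisenbergGerms hl).Z (smoothGerm hu) = smoothGerm (isFirstOrder_ZD.smoothAlong hu) :=
  isFirstOrder_ZD.derivation_smoothGerm hl hu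

lemma heisenbergGerms_Zb :
    (heisenbergGerms hl).Zb (smoothGerm hu) = smoothGerm (isFirstOrder_ZbD.smoothAlong hu) :=
  isFirstOrder_ZbD.derivation_smoothGerm hl hu

lemma heisenbergGerms_conj : (heisenbergGerms hl).conj (smoothGerm hu) = smoothGerm hu.conj := rfl

end

end Germs

/-! ### Rigidity -/

section Rigidity

open scoped ContDiff ComplexConjugate Topology
open Filter

lemma contDiffOn_div {u v : Heis → ℂ} {W : Set Heis} (hu : ContDiffOn ℝ ∞ u W)
    (hv : ContDiffOn ℝ ∞ v W) (hv₀ : ∀ p ∈ W, v p ≠ 0) :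
    ContDiffOn ℝ ∞ (fun p => u p / v p) W := by
  simp only [div_eq_mul_inv]
  exact hu.mul (hv.inv hv₀)

variable {l : Ultrafilter Heis}

lemma conjRelations_smoothGerm {x n k h e : Heis → ℂ} {hx : SmoothAlong l x}
    {hn : SmoothAlong l n} {hk : SmoothAlong l k} {hh : SmoothAlong l h} {he : SmoothAlong l e}
    (hE : ∀ᶠ p in (l : Filter Heis), ConjRelations conj (x p) (n p) (k p) (h p) (e p)) :
    ConjRelations conjGerm (smoothGerm hx) (smoothGerm hn) (smoothGerm hk) (smoothGerm hh)
      (smoothGerm he) where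
  x_ne_zero := smoothGerm_ne_zero_iff.mpr (hE.mono fun _ h => h.x_ne_zero)
  n_ne_zero := smoothGerm_ne_zero_iff.mpr (hE.mono fun _ h => h.n_ne_zero)
  n_sq_add := by
    simp only [conjGerm_smoothGerm, smoothGerm_pow, smoothGerm_mul, smoothGerm_add, smoothGerm_neg,
      ← smoothGerm_ofNat, smoothGerm_eq_iff]
    exact hE.mono fun _ h => h.n_sq_add
  h_mul := by
    simp only [conjGerm_smoothGerm, smoothGerm_mul, smoothGerm_add, smoothGerm_eq_iff]
    exact hE.mono fun _ h => h.h_mul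
  e_mul := by
    simp only [conjGerm_smoothGerm, smoothGerm_pow, smoothGerm_mul, smoothGerm_neg,
      sub_eq_add_neg, smoothGerm_add, smoothGerm_eq_iff]
    exact hE.mono fun _ h => by simpa only [sub_eq_add_neg] using h.e_mul

lemma eventually_quarticEqSq {h k e h' e' D m σ π : Heis → ℂ} {hh : SmoothAlong l h}
    {hk : SmoothAlong l k} {he : SmoothAlong l e} {hh' : SmoothAlong l h'}
    {he' : SmoothAlong l e'} {hD : SmoothAlong l D} {hm : SmoothAlong l m}
    {hσ : SmoothAlong l σ} {hπ : SmoothAlong l π}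
    (hQ : QuarticEqSq (smoothGerm hh) (smoothGerm hk) (smoothGerm he) (smoothGerm hh')
      (smoothGerm he') (smoothGerm hD) (smoothGerm hm) (smoothGerm hσ) (smoothGerm hπ)) :
    ∀ᶠ p in (l : Filter Heis),
      QuarticEqSq (h p) (k p) (e p) (h' p) (e' p) (D p) (m p) (σ p) (π p) := by
  simp only [QuarticEqSq, sub_eq_add_neg, smoothGerm_mul, smoothGerm_add, smoothGerm_neg,
    smoothGerm_pow, ← smoothGerm_ofNat, smoothGerm_eq_iff] at hQ
  obtain ⟨h₁, h₂, h₃, h₄, h₅⟩ := hQ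
  filter_upwards [h₁, h₂, h₃, h₄, h₅] with p h₁ h₂ h₃ h₄ h₅
  simp only [QuarticEqSq, sub_eq_add_neg]
  exact ⟨h₁, h₂, h₃, h₄, h₅⟩

/-- The Cauchy–Riemann function `k = n³ conj (Z x) / (Z̄ x · x̄³)` of a solution. -/
def solutionK (x n : Heis → ℂ) (p : Heis) : ℂ :=
  n p ^ 3 * conj (ZD x p) / (ZbD x p * conj (x p) ^ 3)

/-- The Cauchy–Riemann function `h = 1 / x̄ + k / n` of a solution. -/
def solutionH (x n : Heis → ℂ) (p : Heis) : ℂ :=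
  (n p + solutionK x n p * conj (x p)) / (conj (x p) * n p)

/-- The Cauchy–Riemann function `e = -(n k + n̄² / x̄)` of a solution. -/
def solutionE (x n : Heis → ℂ) (p : Heis) : ℂ :=
  (-n p * solutionK x n p * conj (x p) - conj (n p) ^ 2) / conj (x p)

/-- A non-conformal solution of the equality of Schwarzians on `V`: `x` is the affine normalisation
of `F`, and `n` is a square root of the denominator of the inversion. -/
structure IsNonconformalSolution (V : Set Heis) (x n : Heis → ℂ) : Prop where
  isOpen : IsOpen V
  contDiffOn_x : ContDiffOn ℝ ∞ x V
  contDiffOn_n : ContDiffOn ℝ ∞ n V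
  x_ne_zero : ∀ p ∈ V, x p ≠ 0
  n_ne_zero : ∀ p ∈ V, n p ≠ 0
  ZbD_x_ne_zero : ∀ p ∈ V, ZbD x p ≠ 0
  norm_lt : ∀ p ∈ V, ‖ZbD x p‖ < ‖ZD x p‖
  n_sq_add : ∀ p ∈ V, n p ^ 2 + conj (n p) ^ 2 = -2 * x p * conj (x p)
  n_mul_ZD_n : ∀ p ∈ V, n p * ZD n p = -conj (x p) * ZD x p
  n_mul_ZbD_n : ∀ p ∈ V, n p * ZbD n p = -conj (x p) * ZbD x p
  ZbD_solutionK : ∀ p ∈ V, ZbD (solutionK x n) p = 0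

namespace IsNonconformalSolution

variable {V : Set Heis} {x n : Heis → ℂ} {p : Heis} (hS : IsNonconformalSolution V x n)
include hS

lemma conj_x_ne_zero (hp : p ∈ V) : conj (x p) ≠ 0 := (map_ne_zero _).mpr (hS.x_ne_zero p hp)

lemma ZD_x_ne_zero (hp : p ∈ V) : ZD x p ≠ 0 :=
  norm_pos_iff.mp ((norm_nonneg _).trans_lt (hS.norm_lt p hp))

lemma contDiffOn_solutionK : ContDiffOn ℝ ∞ (solutionK x n) V :=
  contDiffOn_div
    ((hS.contDiffOn_n.pow 3).mul
      (contDiffOn_conj (isFirstOrder_ZD.contDiffOn hS.isOpen hS.contDiffOn_x)))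
    ((isFirstOrder_ZbD.contDiffOn hS.isOpen hS.contDiffOn_x).mul
      ((contDiffOn_conj hS.contDiffOn_x).pow 3))
    fun p hp => mul_ne_zero (hS.ZbD_x_ne_zero p hp) (pow_ne_zero 3 (hS.conj_x_ne_zero hp))

lemma contDiffOn_solutionH : ContDiffOn ℝ ∞ (solutionH x n) V :=
  contDiffOn_div
    (hS.contDiffOn_n.add (hS.contDiffOn_solutionK.mul (contDiffOn_conj hS.contDiffOn_x)))
    ((contDiffOn_conj hS.contDiffOn_x).mul hS.contDiffOn_n)
    fun p hp => mul_ne_zero (hS.conj_x_ne_zero hp) (hS.n_ne_zero p hp)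

lemma contDiffOn_solutionE : ContDiffOn ℝ ∞ (solutionE x n) V :=
  contDiffOn_div
    (((hS.contDiffOn_n.neg.mul hS.contDiffOn_solutionK).mul (contDiffOn_conj hS.contDiffOn_x)).sub
      ((contDiffOn_conj hS.contDiffOn_n).pow 2))
    (contDiffOn_conj hS.contDiffOn_x) fun _ => hS.conj_x_ne_zero

lemma solutionK_mul (hp : p ∈ V) :
    solutionK x n p * ZbD x p * conj (x p) ^ 3 = n p ^ 3 * conj (ZD x p) := by
  rw [mul_assoc, solutionK, div_mul_cancel₀]
  exact mul_ne_zero (hS.ZbD_x_ne_zero p hp) (pow_ne_zero 3 (hS.conj_x_ne_zero hp))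

lemma conjRelations (hp : p ∈ V) : ConjRelations conj (x p) (n p)
    (solutionK x n p) (solutionH x n p) (solutionE x n p) where
  x_ne_zero := hS.x_ne_zero p hp
  n_ne_zero := hS.n_ne_zero p hp
  n_sq_add := hS.n_sq_add p hp
  h_mul := by
    rw [mul_assoc, solutionH,
      div_mul_cancel₀ _ (mul_ne_zero (hS.conj_x_ne_zero hp) (hS.n_ne_zero p hp))]
  e_mul := by rw [solutionE, div_mul_cancel₀ _ (hS.conj_x_ne_zero hp)]

lemma norm_n_pow_lt (hp : p ∈ V) : ‖n p‖ ^ 3 < ‖solutionK x n p‖ * ‖x p‖ ^ 3 := by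
  have hnorm := congrArg norm (hS.solutionK_mul hp)
  simp only [norm_mul, norm_pow, RCLike.norm_conj] at hnorm
  have hB : 0 < ‖ZbD x p‖ := norm_pos_iff.mpr (hS.ZbD_x_ne_zero p hp)
  have hn : 0 < ‖n p‖ ^ 3 := pow_pos (norm_pos_iff.mpr (hS.n_ne_zero p hp)) 3
  refine lt_of_mul_lt_mul_left ?_ hB.le
  calc ‖ZbD x p‖ * ‖n p‖ ^ 3 < ‖ZD x p‖ * ‖n p‖ ^ 3 :=
        mul_lt_mul_of_pos_right (hS.norm_lt p hp) hn
    _ = ‖ZbD x p‖ * (‖solutionK x n p‖ * ‖x p‖ ^ 3) := by linear_combination -hnorm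

lemma polarRelations (hp : p ∈ V) : PolarRelations (‖x p‖ ^ 2 / ‖n p‖ ^ 2)
    (conj (n p) / (solutionK x n p * conj (x p))) (n p)
    (solutionK x n p) (solutionH x n p) (solutionE x n p) :=
  (hS.conjRelations hp).polarRelations (hS.norm_n_pow_lt hp)

lemma jacobian_ne (hp : p ∈ V) :
    ZD x p * conj (ZD x p) ≠ conj (ZbD x p) * ZbD x p := fun heq => by
  have hnorm := congrArg norm heq
  simp only [norm_mul, RCLike.norm_conj] at hnorm
  exact (mul_self_lt_mul_self (norm_nonneg _) (hS.norm_lt p hp)).ne' hnorm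

lemma first_alternative_ne (hp : p ∈ V) :
    conj (ZbD x p) * n p ^ 2 * x p ≠ 2 * ZD x p * conj (n p) ^ 2 * conj (x p) := fun heq => by
  have hnorm := congrArg norm heq
  simp only [norm_mul, norm_pow, RCLike.norm_conj, Complex.norm_ofNat] at hnorm
  have hpos : 0 < ‖n p‖ ^ 2 * ‖x p‖ := mul_pos
    (pow_pos (norm_pos_iff.mpr (hS.n_ne_zero p hp)) 2) (norm_pos_iff.mpr (hS.x_ne_zero p hp))
  have hBA : ‖ZbD x p‖ = 2 * ‖ZD x p‖ := by
    apply mul_right_cancel₀ hpos.ne'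
    linear_combination hnorm
  linarith [hS.norm_lt p hp, norm_nonneg (ZD x p)]

-- Where `n² = n̄²` holds on an open set, `n² = -x x̄` there; applying `Z` gives `|Z̄ x| = |Z x|`.
lemma not_eventually_n_sq_eq (hp : p ∈ V) : ¬ ∀ᶠ q in 𝓝 p, n q ^ 2 = conj (n q) ^ 2 := by
  intro h
  have hnx : (fun q => n q * n q) =ᶠ[𝓝 p] fun q => -1 * (x q * conj (x q)) := by
    filter_upwards [h, hS.isOpen.mem_nhds hp] with q hq hqV
    linear_combination hS.n_sq_add q hqV / 2 + hq / 2
  have hxp := differentiableAt_of_contDiffOn hS.isOpen hS.contDiffOn_x hp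
  have hnp := differentiableAt_of_contDiffOn hS.isOpen hS.contDiffOn_n hp
  have hxp' := differentiableAt_of_contDiffOn hS.isOpen (contDiffOn_conj hS.contDiffOn_x) hp
  have hZ := isFirstOrder_ZD.congr hnx
  rw [isFirstOrder_ZD.mul hnp hnp, isFirstOrder_ZD.const_mul _ (hxp.fun_mul hxp'),
    isFirstOrder_ZD.mul hxp hxp', ZD_conj] at hZ
  have hAB : x p * conj (ZbD x p) = conj (x p) * ZD x p := by
    linear_combination hZ - 2 * hS.n_mul_ZD_n p hp
  have hnorm := congrArg norm hAB
  simp only [norm_mul, RCLike.norm_conj] at hnorm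
  exact (hS.norm_lt p hp).ne (mul_left_cancel₀ (norm_ne_zero_iff.mpr (hS.x_ne_zero p hp)) hnorm)

section Germs

variable (hVl : V ∈ l)
include hVl

lemma smoothAlong_x : SmoothAlong l x := ⟨V, hS.isOpen, hVl, hS.contDiffOn_x⟩

lemma smoothAlong_n : SmoothAlong l n := ⟨V, hS.isOpen, hVl, hS.contDiffOn_n⟩

lemma smoothAlong_solutionK : SmoothAlong l (solutionK x n) :=
  ⟨V, hS.isOpen, hVl, hS.contDiffOn_solutionK⟩

lemma smoothAlong_solutionH : SmoothAlong l (solutionH x n) :=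
  ⟨V, hS.isOpen, hVl, hS.contDiffOn_solutionH⟩

lemma smoothAlong_solutionE : SmoothAlong l (solutionE x n) :=
  ⟨V, hS.isOpen, hVl, hS.contDiffOn_solutionE⟩

lemma isInversionSolution (hl : IsGeneric l) :
    (heisenbergGerms hl).IsInversionSolution (smoothGerm (hS.smoothAlong_x hVl))
      (smoothGerm (hS.smoothAlong_n hVl)) (smoothGerm (hS.smoothAlong_solutionK hVl))
      (smoothGerm (hS.smoothAlong_solutionH hVl)) (smoothGerm (hS.smoothAlong_solutionE hVl)) where
  toConjRelations := conjRelations_smoothGerm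
    (mem_of_superset hVl fun _ => hS.conjRelations)
  Z_x_ne_zero := by
    rw [heisenbergGerms_Z, smoothGerm_ne_zero_iff]
    exact mem_of_superset hVl fun _ => hS.ZD_x_ne_zero
  Z_conj_x_ne_zero := by
    rw [heisenbergGerms_conj, heisenbergGerms_Z, smoothGerm_ne_zero_iff]
    refine mem_of_superset hVl fun p hp => ?_
    rw [Set.mem_ofPred_eq, ZD_conj]
    exact (map_ne_zero _).mpr (hS.ZbD_x_ne_zero p hp)
  n_mul_Z_n := by
    simp only [heisenbergGerms_Z, heisenbergGerms_conj, smoothGerm_mul, smoothGerm_neg,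
      smoothGerm_eq_iff]
    exact mem_of_superset hVl hS.n_mul_ZD_n
  n_mul_Zb_n := by
    simp only [heisenbergGerms_Zb, heisenbergGerms_conj, smoothGerm_mul, smoothGerm_neg,
      smoothGerm_eq_iff]
    exact mem_of_superset hVl hS.n_mul_ZbD_n
  k_mul := by
    simp only [heisenbergGerms_Zb, heisenbergGerms_conj, smoothGerm_mul, smoothGerm_pow,
      smoothGerm_eq_iff, ZbD_conj]
    exact mem_of_superset hVl fun _ => hS.solutionK_mul
  Zb_k := by
    rw [heisenbergGerms_Zb, smoothGerm_eq_zero_iff]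
    exact mem_of_superset hVl hS.ZbD_solutionK

lemma eq_or_exists_quarticEqSq (hl : IsGeneric l) :
    (∀ᶠ p in (l : Filter Heis),
      conj (ZbD x p) * n p ^ 2 * x p = 2 * ZD x p * conj (n p) ^ 2 * conj (x p)) ∨
    ∃ m σ π : Heis → ℂ, ∀ᶠ p in (l : Filter Heis),
      QuarticEqSq (solutionH x n p) (solutionK x n p) (solutionE x n p)
        (conj (solutionH x n p)) (conj (solutionE x n p))
        (conj (solutionK x n p) ^ 2 + conj (solutionH x n p) * conj (solutionE x n p))
        (m p) (σ p) (π p) := by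
  have hpolar (p : Heis) (hp : p ∈ V) := hS.polarRelations hp
  refine ((hS.isInversionSolution hVl hl).eq_or_exists_quarticEqSq ?_ ?_ ?_ ?_).imp ?_ ?_
  · exact smoothGerm_ne_zero_iff.mpr (mem_of_superset hVl fun p hp => (hpolar p hp).h_ne_zero)
  · exact smoothGerm_ne_zero_iff.mpr (mem_of_superset hVl fun p hp => (hpolar p hp).e_ne_zero)
  · simp only [smoothGerm_pow, smoothGerm_mul, smoothGerm_add, smoothGerm_ne_zero_iff]
    exact mem_of_superset hVl fun p hp => (hpolar p hp).disc_ne_zero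
  · simp only [heisenbergGerms_Z, heisenbergGerms_Zb, heisenbergGerms_conj, smoothGerm_mul, Ne,
      smoothGerm_eq_iff, ZD_conj, ZbD_conj, ← Ultrafilter.eventually_not]
    exact mem_of_superset hVl fun p => hS.jacobian_ne
  · simp only [heisenbergGerms_Z, heisenbergGerms_conj, smoothGerm_mul, smoothGerm_pow,
      ← smoothGerm_ofNat, smoothGerm_eq_iff, ZD_conj]
    exact id
  · rintro ⟨m, σ, π, hQ⟩
    obtain ⟨m, hm, rfl⟩ := exists_eq_smoothGerm m
    obtain ⟨σ, hσ, rfl⟩ := exists_eq_smoothGerm σ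
    obtain ⟨π, hπ, rfl⟩ := exists_eq_smoothGerm π
    simp only [heisenbergGerms_conj, smoothGerm_pow, smoothGerm_mul, smoothGerm_add] at hQ
    exact ⟨m, σ, π, eventually_quarticEqSq hQ⟩

lemma eventually_n_sq_ne (hl : IsGeneric l) :
    ∀ᶠ p in (l : Filter Heis), n p ^ 2 ≠ conj (n p) ^ 2 := by
  have hn := hS.smoothAlong_n hVl
  rw [Ultrafilter.eventually_not]
  intro h
  obtain ⟨p, hp, hpV⟩ :=
    ((hl.eventually_eventuallyEq_nhds (hn.pow 2) (hn.conj.pow 2) h).and hVl).exists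
  exact hS.not_eventually_n_sq_eq hpV hp

end Germs

theorem eq_empty : V = ∅ := by
  by_contra hV
  obtain ⟨l, hVl, hl⟩ := exists_isGeneric hS.isOpen (Set.nonempty_iff_ne_empty.mpr hV)
  rcases hS.eq_or_exists_quarticEqSq hVl hl with hfirst | ⟨m, σ, π, hQ⟩
  · obtain ⟨p, hp, hpV⟩ := (hfirst.and hVl).exists
    exact hS.first_alternative_ne hpV hp
  · obtain ⟨p, ⟨hp, hnp⟩, hpV⟩ := ((hQ.and (hS.eventually_n_sq_ne hVl hl)).and hVl).exists
    exact (hS.polarRelations hpV).not_quarticEqSq hnp _ _ _ hp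

end IsNonconformalSolution

end Rigidity

/-! ### The Schwarzian of an inversion -/

section Schwarzian

open scoped ContDiff ComplexConjugate Topology
open Filter

variable {W : Set Heis} {u v m Q : Heis → ℂ} {p : Heis}

/-- The classical type Schwarzian as an operator on complex functions. -/
def schwarzian (u : Heis → ℂ) (p : Heis) : ℂ :=
  ZD (ZD (ZD u)) p / ZD u p - (3 / 2 : ℂ) * (ZD (ZD u) p / ZD u p) ^ 2

lemma schwarzian_sub_of_ZD_eq_mul (hW : IsOpen W) (hu : ContDiffOn ℝ ∞ u W)
    (hm : ContDiffOn ℝ ∞ m W) (hQ : ContDiffOn ℝ ∞ Q W)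
    (hvu : Set.EqOn (ZD v) (m * ZD u) W)
    (hmQ : Set.EqOn (ZD m) (Q * m) W) (hp : p ∈ W) (hmp : m p ≠ 0) (hup : ZD u p ≠ 0) :
    schwarzian v p - schwarzian u p =
      ZD Q p - Q p * (ZD (ZD u) p / ZD u p) - Q p ^ 2 / 2 := by
  have hu' := isFirstOrder_ZD.contDiffOn hW hu
  have hu'' := isFirstOrder_ZD.contDiffOn hW hu'
  have hdiff {w : Heis → ℂ} (hw : ContDiffOn ℝ ∞ w W) {q : Heis} (hq : q ∈ W) :=
    differentiableAt_of_contDiffOn hW hw hq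
  have hv₂ : Set.EqOn (ZD (ZD v)) (fun q => m q * (Q q * ZD u q + ZD (ZD u) q)) W := fun q hq => by
    rw [isFirstOrder_ZD.congr_of_eqOn hW hvu hq]
    refine (isFirstOrder_ZD.mul (hdiff hm hq) (hdiff hu' hq)).trans ?_
    rw [hmQ hq]
    rw [Pi.mul_apply]
    ring
  have hv₃ : ZD (ZD (ZD v)) p = m p * (Q p * (Q p * ZD u p + ZD (ZD u) p) +
      (ZD Q p * ZD u p + Q p * ZD (ZD u) p + ZD (ZD (ZD u)) p)) := by
    rw [isFirstOrder_ZD.congr_of_eqOn hW hv₂ hp,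
      isFirstOrder_ZD.mul (hdiff hm hp) (hdiff ((hQ.mul hu').add hu'') hp), hmQ hp,
      isFirstOrder_ZD.add (hdiff (hQ.mul hu') hp) (hdiff hu'' hp),
      isFirstOrder_ZD.mul (hdiff hQ hp) (hdiff hu' hp), Pi.mul_apply]
    ring
  rw [schwarzian, schwarzian, hvu hp, hv₂ hp, hv₃]
  simp only [Pi.mul_apply]
  field_simp
  ring

lemma schwarzian_affine (hW : IsOpen W) (hu : ContDiffOn ℝ ∞ u W) (hp : p ∈ W) {c : ℂ}
    (hc : c ≠ 0) (d : ℂ) : schwarzian (fun q => c * u q + d) p = schwarzian u p := by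
  have hu' := isFirstOrder_ZD.contDiffOn hW hu
  have hu'' := isFirstOrder_ZD.contDiffOn hW hu'
  have hZ : Set.EqOn (ZD fun q => c * u q + d) (fun q => c * ZD u q) W := fun q hq =>
    isFirstOrder_ZD.affine c d (differentiableAt_of_contDiffOn hW hu hq)
  have hZ₂ : Set.EqOn (ZD (ZD fun q => c * u q + d)) (fun q => c * ZD (ZD u) q) W := fun q hq =>
    (isFirstOrder_ZD.congr_of_eqOn hW hZ hq).trans
      (isFirstOrder_ZD.const_mul c (differentiableAt_of_contDiffOn hW hu' hq))
  rw [schwarzian, schwarzian, hZ hp, hZ₂ hp, isFirstOrder_ZD.congr_of_eqOn hW hZ₂ hp,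
    isFirstOrder_ZD.const_mul c (differentiableAt_of_contDiffOn hW hu'' hp),
    mul_div_mul_left _ _ hc, mul_div_mul_left _ _ hc]

/-- A map with complex horizontal component `x` that satisfies the contact equations and has
positive horizontal Jacobian, encoded with the single complex function `N = i t - |x|²` in place
of the vertical component `t`. The Korányi inversion of the map has horizontal component `x / N`. -/
structure IsContactPair (W : Set Heis) (x N : Heis → ℂ) : Prop where
  isOpen : IsOpen W
  contDiffOn_x : ContDiffOn ℝ ∞ x W
  contDiffOn_N : ContDiffOn ℝ ∞ N W
  norm_lt : ∀ p ∈ W, ‖ZbD x p‖ < ‖ZD x p‖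
  N_add_conj : ∀ p ∈ W, N p + conj (N p) = -2 * x p * conj (x p)
  ZD_N : ∀ p ∈ W, ZD N p = -2 * conj (x p) * ZD x p
  ZbD_N : ∀ p ∈ W, ZbD N p = -2 * conj (x p) * ZbD x p

/-- The logarithmic `Z`-derivative of the factor `-N̄ / N²` in `Z (x / N) = -N̄ / N² · Z x`. -/
def inversionLogDeriv (x N : Heis → ℂ) (p : Heis) : ℂ :=
  -2 * (x p * conj (ZbD x p) / conj (N p)) + 4 * (conj (x p) * ZD x p / N p)

namespace IsContactPair

variable {x N : Heis → ℂ} (hC : IsContactPair W x N)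
include hC

lemma mono {V : Set Heis} (hV : IsOpen V) (hVW : V ⊆ W) : IsContactPair V x N where
  isOpen := hV
  contDiffOn_x := hC.contDiffOn_x.mono hVW
  contDiffOn_N := hC.contDiffOn_N.mono hVW
  norm_lt p hp := hC.norm_lt p (hVW hp)
  N_add_conj p hp := hC.N_add_conj p (hVW hp)
  ZD_N p hp := hC.ZD_N p (hVW hp)
  ZbD_N p hp := hC.ZbD_N p (hVW hp)

lemma ZD_x_ne_zero (hp : p ∈ W) : ZD x p ≠ 0 :=
  norm_pos_iff.mp ((norm_nonneg _).trans_lt (hC.norm_lt p hp))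

lemma contDiffOn_ZD_x : ContDiffOn ℝ ∞ (ZD x) W :=
  isFirstOrder_ZD.contDiffOn hC.isOpen hC.contDiffOn_x

lemma contDiffOn_conj_ZbD_x : ContDiffOn ℝ ∞ (fun q => conj (ZbD x q)) W :=
  contDiffOn_conj (isFirstOrder_ZbD.contDiffOn hC.isOpen hC.contDiffOn_x)

lemma differentiableAt_x (hp : p ∈ W) : DifferentiableAt ℝ x p :=
  differentiableAt_of_contDiffOn hC.isOpen hC.contDiffOn_x hp

lemma differentiableAt_N (hp : p ∈ W) : DifferentiableAt ℝ N p :=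
  differentiableAt_of_contDiffOn hC.isOpen hC.contDiffOn_N hp

lemma differentiableAt_conj_N (hp : p ∈ W) : DifferentiableAt ℝ (fun q => conj (N q)) p :=
  differentiableAt_of_contDiffOn hC.isOpen (contDiffOn_conj hC.contDiffOn_N) hp

lemma differentiableAt_ZD_x (hp : p ∈ W) : DifferentiableAt ℝ (ZD x) p :=
  differentiableAt_of_contDiffOn hC.isOpen hC.contDiffOn_ZD_x hp

lemma differentiableAt_conj_ZbD_x (hp : p ∈ W) :
    DifferentiableAt ℝ (fun q => conj (ZbD x q)) p :=
  differentiableAt_of_contDiffOn hC.isOpen hC.contDiffOn_conj_ZbD_x hp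

lemma ZD_conj_N (hp : p ∈ W) : ZD (fun q => conj (N q)) p = -2 * x p * conj (ZbD x p) := by
  rw [ZD_conj, hC.ZbD_N p hp]
  simp only [map_mul, map_neg, map_ofNat, Complex.conj_conj]

section

variable (hN : ∀ q ∈ W, N q ≠ 0)
include hN

lemma contDiffOn_inversionLogDeriv : ContDiffOn ℝ ∞ (inversionLogDeriv x N) W :=
  (contDiffOn_const.mul (contDiffOn_div (hC.contDiffOn_x.mul hC.contDiffOn_conj_ZbD_x)
    (contDiffOn_conj hC.contDiffOn_N) fun q hq => (map_ne_zero _).mpr (hN q hq))).add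
  (contDiffOn_const.mul (contDiffOn_div ((contDiffOn_conj hC.contDiffOn_x).mul hC.contDiffOn_ZD_x)
    hC.contDiffOn_N hN))

lemma ZD_div (hp : p ∈ W) :
    ZD (fun q => x q / N q) p = -1 * (conj (N p) / N p ^ 2) * ZD x p := by
  have hNp := hN p hp
  rw [isFirstOrder_ZD.div (hC.differentiableAt_x hp) (hC.differentiableAt_N hp) hNp, hC.ZD_N p hp]
  field_simp
  linear_combination ZD x p * hC.N_add_conj p hp

lemma ZD_inversionFactor (hp : p ∈ W) : ZD (fun q => -1 * (conj (N q) / N q ^ 2)) p =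
    inversionLogDeriv x N p * (-1 * (conj (N p) / N p ^ 2)) := by
  have hNp := hN p hp
  have hNp' : conj (N p) ≠ 0 := (map_ne_zero _).mpr hNp
  have hd := hC.differentiableAt_N hp
  have hd' := hC.differentiableAt_conj_N hp
  rw [isFirstOrder_ZD.const_mul _ (differentiableAt_of_contDiffOn hC.isOpen
      (contDiffOn_div (contDiffOn_conj hC.contDiffOn_N) (hC.contDiffOn_N.pow 2)
        fun q hq => pow_ne_zero 2 (hN q hq)) hp),
    isFirstOrder_ZD.div hd' (hd.fun_pow 2) (pow_ne_zero 2 hNp),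
    isFirstOrder_ZD.comp (φ := fun z => z ^ 2) (hasDerivAt_pow 2 _) hd, hC.ZD_conj_N hp,
    hC.ZD_N p hp, inversionLogDeriv]
  push_cast
  field_simp
  ring

lemma ZD_x_mul_conj_div (hp : p ∈ W) : ZD (fun q => x q * conj (ZbD x q) / conj (N q)) p =
    (x p * ZD (fun q => conj (ZbD x q)) p + conj (ZbD x p) * ZD x p) / conj (N p) +
      2 * (x p * conj (ZbD x p)) ^ 2 / conj (N p) ^ 2 := by
  have hxd := hC.differentiableAt_x hp
  have hBd := hC.differentiableAt_conj_ZbD_x hp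
  rw [isFirstOrder_ZD.div (hxd.fun_mul hBd) (hC.differentiableAt_conj_N hp)
    ((map_ne_zero _).mpr (hN p hp)), isFirstOrder_ZD.mul hxd hBd, hC.ZD_conj_N hp]
  ring

lemma ZD_conj_x_mul_div (hp : p ∈ W) : ZD (fun q => conj (x q) * ZD x q / N q) p =
    (conj (x p) * ZD (ZD x) p + ZD x p * conj (ZbD x p)) / N p +
      2 * (conj (x p) * ZD x p) ^ 2 / N p ^ 2 := by
  have hxd := differentiableAt_of_contDiffOn hC.isOpen (contDiffOn_conj hC.contDiffOn_x) hp
  have hAd := hC.differentiableAt_ZD_x hp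
  rw [isFirstOrder_ZD.div (hxd.fun_mul hAd) (hC.differentiableAt_N hp) (hN p hp),
    isFirstOrder_ZD.mul hxd hAd, ZD_conj, hC.ZD_N p hp]
  ring

lemma ZD_inversionLogDeriv (hp : p ∈ W) : ZD (inversionLogDeriv x N) p =
    -2 * ZD (fun q => x q * conj (ZbD x q) / conj (N q)) p +
      4 * ZD (fun q => conj (x q) * ZD x q / N q) p :=
  isFirstOrder_ZD.linear_combination _ _
    (differentiableAt_of_contDiffOn hC.isOpen
      (contDiffOn_div (hC.contDiffOn_x.mul hC.contDiffOn_conj_ZbD_x)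
        (contDiffOn_conj hC.contDiffOn_N) fun q hq => (map_ne_zero _).mpr (hN q hq)) hp)
    (differentiableAt_of_contDiffOn hC.isOpen
      (contDiffOn_div ((contDiffOn_conj hC.contDiffOn_x).mul hC.contDiffOn_ZD_x)
        hC.contDiffOn_N hN) hp)

theorem schwarzian_div_sub (hp : p ∈ W) :
    schwarzian (fun q => x q / N q) p - schwarzian x p = -(2 / conj (N p)) *
      (3 * ZD x p * conj (ZbD x p) +
        x p * (ZD (fun q => conj (ZbD x q)) p - ZD (ZD x) p / ZD x p * conj (ZbD x p)) +
        3 * x p ^ 2 * conj (ZbD x p) ^ 2 / conj (N p)) := by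
  have hNp := hN p hp
  have hNp' : conj (N p) ≠ 0 := (map_ne_zero _).mpr hNp
  have hAp := hC.ZD_x_ne_zero hp
  rw [schwarzian_sub_of_ZD_eq_mul (m := fun q => -1 * (conj (N q) / N q ^ 2)) hC.isOpen
      hC.contDiffOn_x
      (contDiffOn_const.mul (contDiffOn_div (contDiffOn_conj hC.contDiffOn_N)
        (hC.contDiffOn_N.pow 2) fun q hq => pow_ne_zero 2 (hN q hq)))
      (hC.contDiffOn_inversionLogDeriv hN) (fun q hq => hC.ZD_div hN hq)
      (fun q hq => hC.ZD_inversionFactor hN hq) hp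
      (mul_ne_zero (neg_ne_zero.mpr one_ne_zero) (div_ne_zero hNp' (pow_ne_zero 2 hNp))) hAp,
    hC.ZD_inversionLogDeriv hN hp, hC.ZD_x_mul_conj_div hN hp, hC.ZD_conj_x_mul_div hN hp,
    inversionLogDeriv]
  field_simp
  linear_combination 8 * ZD x p ^ 2 * conj (ZbD x p) * conj (N p) * N p * hC.N_add_conj p hp

end

end IsContactPair

lemma exists_contDiffOn_sq_eq {N : Heis → ℂ} (hN : ContDiffOn ℝ ∞ N W)
    (hre : ∀ q ∈ W, (N q).re < 0) :
    ∃ n : Heis → ℂ, ContDiffOn ℝ ∞ n W ∧ ∀ q ∈ W, n q ^ 2 = N q := by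
  have hslit : ∀ q ∈ W, -N q ∈ slitPlane := fun q hq => Or.inl <| by
    simpa only [neg_re, Left.neg_pos_iff] using hre q hq
  refine ⟨fun q => Complex.I * cexp (Complex.log (-N q) / 2), fun q hq => ?_, fun q hq => ?_⟩
  · have hsqrt : ContDiffAt ℝ ∞ (fun z : ℂ => Complex.I * cexp (Complex.log z / 2)) (-N q) :=
      (contDiffAt_const.mul
        ((contDiffAt_log (n := ∞) (hslit q hq)).div_const 2).cexp).restrict_scalars ℝ
    exact ContDiffAt.comp_contDiffWithinAt (f := fun q => -N q) q hsqrt (hN.neg q hq)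
  · rw [mul_pow, Complex.I_sq, ← Complex.exp_nat_mul, Nat.cast_ofNat, mul_div_cancel₀ _ two_ne_zero,
      Complex.exp_log (slitPlane_ne_zero (hslit q hq))]
    ring

namespace IsContactPair

variable {x N n : Heis → ℂ} (hC : IsContactPair W x N)
include hC

lemma re_N_neg (hp : p ∈ W) (hx : x p ≠ 0) : (N p).re < 0 := by
  have hre := congrArg Complex.re (hC.N_add_conj p hp)
  rw [mul_assoc, Complex.mul_conj, Complex.add_conj, Complex.ofReal_re, ← Complex.ofReal_ofNat,
    ← Complex.ofReal_neg, ← Complex.ofReal_mul, Complex.ofReal_re] at hre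
  linarith [Complex.normSq_pos.mpr hx]

lemma two_mul_sqrt_mul_apply {D : (Heis → ℂ) → Heis → ℂ} (hD : IsFirstOrder D)
    (hn : ContDiffOn ℝ ∞ n W) (hnN : ∀ q ∈ W, n q ^ 2 = N q) (hp : p ∈ W) :
    2 * (n p * D n p) = D N p := by
  rw [← hD.congr_of_eqOn hC.isOpen hnN hp, hD.comp (φ := fun z => z ^ 2) (hasDerivAt_pow 2 _)
    (differentiableAt_of_contDiffOn hC.isOpen hn hp)]
  push_cast
  ring

lemma n_mul_ZD_n (hn : ContDiffOn ℝ ∞ n W) (hnN : ∀ q ∈ W, n q ^ 2 = N q) (hp : p ∈ W) :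
    n p * ZD n p = -conj (x p) * ZD x p := by
  linear_combination (hC.two_mul_sqrt_mul_apply isFirstOrder_ZD hn hnN hp + hC.ZD_N p hp) / 2

lemma n_mul_ZbD_n (hn : ContDiffOn ℝ ∞ n W) (hnN : ∀ q ∈ W, n q ^ 2 = N q) (hp : p ∈ W) :
    n p * ZbD n p = -conj (x p) * ZbD x p := by
  linear_combination (hC.two_mul_sqrt_mul_apply isFirstOrder_ZbD hn hnN hp + hC.ZbD_N p hp) / 2

lemma ZD_conj_solutionK (hn : ContDiffOn ℝ ∞ n W) (hnN : ∀ q ∈ W, n q ^ 2 = N q) (hp : p ∈ W)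
    (hx : x p ≠ 0) (hB : ZbD x p ≠ 0)
    (hS : 3 * ZD x p * conj (ZbD x p) +
      x p * (ZD (fun q => conj (ZbD x q)) p - ZD (ZD x) p / ZD x p * conj (ZbD x p)) +
      3 * x p ^ 2 * conj (ZbD x p) ^ 2 / conj (N p) = 0) (hNp : N p ≠ 0) :
    ZD (fun q => conj (n q) ^ 3 * ZD x q / (conj (ZbD x q) * x q ^ 3)) p = 0 := by
  have hBp : conj (ZbD x p) ≠ 0 := (map_ne_zero _).mpr hB
  have hAp := hC.ZD_x_ne_zero hp
  have hNp' : conj (N p) ≠ 0 := (map_ne_zero _).mpr hNp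
  have hxd := hC.differentiableAt_x hp
  have hAd := hC.differentiableAt_ZD_x hp
  have hBd := hC.differentiableAt_conj_ZbD_x hp
  have hnd := differentiableAt_of_contDiffOn hC.isOpen (contDiffOn_conj hn) hp
  have hZn : conj (n p) * ZD (fun q => conj (n q)) p = -x p * conj (ZbD x p) := by
    have hconj := congrArg conj (hC.n_mul_ZbD_n hn hnN hp)
    simpa only [ZD_conj, map_mul, map_neg, Complex.conj_conj] using hconj
  have hcleared : 3 * ZD x p ^ 2 * conj (ZbD x p) * conj (n p) ^ 2 +
      x p * (ZD (fun q => conj (ZbD x q)) p * ZD x p - ZD (ZD x) p * conj (ZbD x p)) *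
        conj (n p) ^ 2 + 3 * x p ^ 2 * conj (ZbD x p) ^ 2 * ZD x p = 0 := by
    rw [← map_pow, hnN p hp]
    field_simp at hS
    linear_combination hS
  rw [isFirstOrder_ZD.div ((hnd.fun_pow 3).fun_mul hAd) (hBd.fun_mul (hxd.fun_pow 3))
      (mul_ne_zero hBp (pow_ne_zero 3 hx)), isFirstOrder_ZD.mul (hnd.fun_pow 3) hAd,
    isFirstOrder_ZD.mul hBd (hxd.fun_pow 3),
    isFirstOrder_ZD.comp (φ := fun z => z ^ 3) (hasDerivAt_pow 3 _) hnd,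
    isFirstOrder_ZD.comp (φ := fun z => z ^ 3) (hasDerivAt_pow 3 _) hxd]
  field_simp
  push_cast
  linear_combination (3 * ZD x p * conj (n p) * conj (ZbD x p) * x p ^ 3) * hZn -
    conj (n p) * x p ^ 2 * hcleared

lemma isNonconformalSolution (hN : ∀ q ∈ W, N q ≠ 0) (hx : ∀ q ∈ W, x q ≠ 0)
    (hB : ∀ q ∈ W, ZbD x q ≠ 0) (hn : ContDiffOn ℝ ∞ n W) (hnN : ∀ q ∈ W, n q ^ 2 = N q)
    (hS : ∀ q ∈ W, schwarzian (fun q => x q / N q) q = schwarzian x q) :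
    IsNonconformalSolution W x n where
  isOpen := hC.isOpen
  contDiffOn_x := hC.contDiffOn_x
  contDiffOn_n := hn
  x_ne_zero := hx
  n_ne_zero q hq := pow_ne_zero_iff two_ne_zero |>.mp ((hnN q hq).trans_ne (hN q hq))
  ZbD_x_ne_zero := hB
  norm_lt := hC.norm_lt
  n_sq_add q hq := by rw [← map_pow, hnN q hq, hC.N_add_conj q hq]
  n_mul_ZD_n q hq := hC.n_mul_ZD_n hn hnN hq
  n_mul_ZbD_n q hq := hC.n_mul_ZbD_n hn hnN hq
  ZbD_solutionK q hq := by
    have hsub := hC.schwarzian_div_sub hN hq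
    rw [hS q hq, sub_self, zero_eq_mul, neg_eq_zero] at hsub
    have hZ := hC.ZD_conj_solutionK hn hnN hq (hx q hq) (hB q hq)
      (hsub.resolve_left (div_ne_zero two_ne_zero ((map_ne_zero _).mpr (hN q hq)))) (hN q hq)
    have hZb := congrArg conj hZ
    rw [← ZbD_conj] at hZb
    simp only [map_mul, map_div₀, map_pow, Complex.conj_conj, map_zero] at hZb
    exact hZb

theorem ZbD_eq_zero_of_schwarzian_div_eq (hN : ∀ q ∈ W, N q ≠ 0)
    (hS : ∀ q ∈ W, schwarzian (fun q => x q / N q) q = schwarzian x q) (hp : p ∈ W) :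
    ZbD x p = 0 := by
  by_contra hBp
  set U := W ∩ ZbD x ⁻¹' {0}ᶜ
  have hU : IsOpen U := (isFirstOrder_ZbD.contDiffOn hC.isOpen hC.contDiffOn_x
    ).continuousOn.isOpen_inter_preimage hC.isOpen isOpen_compl_singleton
  set V := U ∩ x ⁻¹' {0}ᶜ
  have hVW : V ⊆ W := Set.inter_subset_left.trans Set.inter_subset_left
  have hV : IsOpen V := (hC.contDiffOn_x.mono Set.inter_subset_left
    ).continuousOn.isOpen_inter_preimage hU isOpen_compl_singleton
  have hCV := hC.mono hV hVW
  obtain ⟨n, hn, hnN⟩ := exists_contDiffOn_sq_eq hCV.contDiffOn_N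
    fun q hq => hCV.re_N_neg hq hq.2
  have hV_empty : V = ∅ := (hCV.isNonconformalSolution (fun q hq => hN q (hVW hq))
    (fun q hq => hq.2) (fun q hq => hq.1.2) hn hnN fun q hq => hS q (hVW hq)).eq_empty
  have hxU : Set.EqOn x (fun _ => 0) U := fun q hq =>
    not_not.mp fun hxq => Set.eq_empty_iff_forall_notMem.mp hV_empty q ⟨hq, hxq⟩
  exact hBp ((isFirstOrder_ZbD.congr_of_eqOn hU hxU ⟨hp, hBp⟩).trans (isFirstOrder_ZbD.const 0 p))

theorem schwarzian_div_eq_iff (hN : ∀ q ∈ W, N q ≠ 0) :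
    (∀ q ∈ W, schwarzian (fun q => x q / N q) q = schwarzian x q) ↔ ∀ q ∈ W, ZbD x q = 0 := by
  refine ⟨fun hS q hq => hC.ZbD_eq_zero_of_schwarzian_div_eq hN hS hq, fun hB q hq => ?_⟩
  have hB' : Set.EqOn (fun q => conj (ZbD x q)) (fun _ => 0) W := fun v hv => by
    simp only [hB v hv, map_zero]
  rw [← sub_eq_zero, hC.schwarzian_div_sub hN hq,
    isFirstOrder_ZD.congr_of_eqOn hC.isOpen hB' hq, isFirstOrder_ZD.const, hB q hq, map_zero]
  ring

end IsContactPair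

end Schwarzian

/-! ### Contact maps of the Heisenberg group -/

section Contact

open scoped ContDiff ComplexConjugate

/-- The horizontal complex coordinate `z` of a point `(z, t)`. -/
def zCoord (w : Heis) : ℂ := w.1 + w.2.1 * Complex.I

/-- The denominator `i t - |z|²` of the Korányi inversion at `(z, t)`. -/
def inversionDenom (w : Heis) : ℂ := w.2.2 * Complex.I - ((w.1 ^ 2 + w.2.1 ^ 2 : ℝ) : ℂ)

/-- The complex factor `r e^{iφ}` of the similarity `r_φ ∘ δ_r`. -/
def similarityFactor (φ r : ℝ) : ℂ := r * cexp (φ * Complex.I)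

lemma similarityFactor_ne_zero (φ : ℝ) {r : ℝ} (hr : r ≠ 0) : similarityFactor φ r ≠ 0 :=
  mul_ne_zero (Complex.ofReal_ne_zero.mpr hr) (Complex.exp_ne_zero _)

lemma similarityFactor_mul_conj (φ r : ℝ) :
    similarityFactor φ r * conj (similarityFactor φ r) = (r : ℂ) ^ 2 := by
  rw [Complex.mul_conj', similarityFactor, norm_mul, Complex.norm_exp_ofReal_mul_I, mul_one,
    Complex.norm_real, Real.norm_eq_abs, ← Complex.ofReal_pow, sq_abs, Complex.ofReal_pow]

lemma zCoord_tau (p w : Heis) : zCoord (tau p w) = zCoord w + zCoord p := by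
  simp only [zCoord, tau, hmul]
  push_cast
  ring

lemma zCoord_rot_dil (φ r : ℝ) (w : Heis) :
    zCoord (rot φ (dil r w)) = similarityFactor φ r * zCoord w := by
  simp only [zCoord, rot, dil, similarityFactor, Complex.exp_mul_I]
  push_cast
  linear_combination (-(r : ℂ) * Complex.sin φ * w.2.1) * Complex.I_sq

lemma zCoord_iotaMap (w : Heis) : zCoord (iotaMap w) = zCoord w / inversionDenom w :=
  Complex.re_add_im (iotaC w)

lemma inversionDenom_tau (p w : Heis) : inversionDenom (tau p w) =
    inversionDenom w - 2 * conj (zCoord p) * zCoord w + inversionDenom p := by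
  simp only [inversionDenom, zCoord, tau, hmul, map_add, map_mul, Complex.conj_ofReal,
    Complex.conj_I]
  push_cast
  linear_combination (-2 * (p.2.1 : ℂ) * w.2.1) * Complex.I_sq

lemma inversionDenom_rot_dil (φ r : ℝ) (w : Heis) :
    inversionDenom (rot φ (dil r w)) =
      similarityFactor φ r * conj (similarityFactor φ r) * inversionDenom w := by
  rw [similarityFactor_mul_conj]
  simp only [inversionDenom, rot, dil]
  push_cast
  linear_combination (-(r : ℂ) ^ 2 * (w.1 ^ 2 + w.2.1 ^ 2)) * Complex.sin_sq_add_cos_sq (φ : ℂ)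

lemma inversionDenom_add_conj (w : Heis) :
    inversionDenom w + conj (inversionDenom w) = -2 * zCoord w * conj (zCoord w) := by
  simp only [inversionDenom, zCoord, map_add, map_sub, map_mul, Complex.conj_ofReal,
    Complex.conj_I]
  push_cast
  linear_combination (-2 * (w.2.1 : ℂ) ^ 2) * Complex.I_sq

lemma inversionDenom_ne_zero {w : Heis} (hw : w ≠ 0) : inversionDenom w ≠ 0 := by
  obtain ⟨a, b, t⟩ := w
  intro h
  have hre : -(a ^ 2 + b ^ 2) = 0 := by
    rw [← Complex.zero_re, ← h, inversionDenom, Complex.sub_re, Complex.re_ofReal_mul,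
      Complex.ofReal_re, Complex.I_re, mul_zero, zero_sub]
  have him : t = 0 := by simpa [inversionDenom, pow_two] using congrArg Complex.im h
  have ha : a = 0 := by nlinarith [sq_nonneg a, sq_nonneg b]
  have hb : b = 0 := by nlinarith [sq_nonneg a, sq_nonneg b]
  exact hw (by rw [ha, hb, him]; rfl)

namespace IsContactPair

variable {W : Set Heis} {x N : Heis → ℂ} (hC : IsContactPair W x N)
include hC

lemma const_mul {a : ℂ} (ha : a ≠ 0) :
    IsContactPair W (fun q => a * x q) (fun q => a * conj a * N q) where
  isOpen := hC.isOpen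
  contDiffOn_x := contDiffOn_const.mul hC.contDiffOn_x
  contDiffOn_N := contDiffOn_const.mul hC.contDiffOn_N
  norm_lt p hp := by
    have hx := hC.differentiableAt_x hp
    rw [isFirstOrder_ZbD.const_mul a hx, isFirstOrder_ZD.const_mul a hx, norm_mul, norm_mul]
    exact mul_lt_mul_of_pos_left (hC.norm_lt p hp) (norm_pos_iff.mpr ha)
  N_add_conj p hp := by
    simp only [map_mul, Complex.conj_conj]
    linear_combination a * conj a * hC.N_add_conj p hp
  ZD_N p hp := by
    rw [isFirstOrder_ZD.const_mul _ (hC.differentiableAt_N hp),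
      isFirstOrder_ZD.const_mul a (hC.differentiableAt_x hp), hC.ZD_N p hp, map_mul]
    ring
  ZbD_N p hp := by
    rw [isFirstOrder_ZbD.const_mul _ (hC.differentiableAt_N hp),
      isFirstOrder_ZbD.const_mul a (hC.differentiableAt_x hp), hC.ZbD_N p hp, map_mul]
    ring

lemma translate {b d : ℂ} (hbd : d + conj d = -2 * b * conj b) :
    IsContactPair W (fun q => x q + b) (fun q => N q - 2 * conj b * x q + d) := by
  have hderiv {D : (Heis → ℂ) → Heis → ℂ} (hD : IsFirstOrder D) {p : Heis} (hp : p ∈ W) :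
      D (fun q => x q + b) p = D x p ∧
        D (fun q => N q - 2 * conj b * x q + d) p = D N p - 2 * conj b * D x p := by
    have hx := hC.differentiableAt_x hp
    have hN := hC.differentiableAt_N hp
    refine ⟨by simpa only [one_mul] using hD.affine 1 b hx, ?_⟩
    have hsum := hD.add (hN.const_mul 1) ((hx.const_mul (-2 * conj b)).add_const d)
    rw [hD.const_mul _ hN, hD.affine _ _ hx] at hsum
    convert hsum using 2
    · ext v
      ring
    · ring
  exact {
    isOpen := hC.isOpen
    contDiffOn_x := hC.contDiffOn_x.add contDiffOn_const
    contDiffOn_N := (hC.contDiffOn_N.sub (contDiffOn_const.mul hC.contDiffOn_x)).add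
      contDiffOn_const
    norm_lt p hp := by
      rw [(hderiv isFirstOrder_ZD hp).1, (hderiv isFirstOrder_ZbD hp).1]
      exact hC.norm_lt p hp
    N_add_conj p hp := by
      simp only [map_add, map_sub, map_mul, map_ofNat, Complex.conj_conj]
      linear_combination hC.N_add_conj p hp + hbd
    ZD_N p hp := by
      rw [(hderiv isFirstOrder_ZD hp).1, (hderiv isFirstOrder_ZD hp).2, hC.ZD_N p hp, map_add]
      ring
    ZbD_N p hp := by
      rw [(hderiv isFirstOrder_ZbD hp).1, (hderiv isFirstOrder_ZbD hp).2, hC.ZbD_N p hp, map_add]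
      ring }

end IsContactPair

/-- The horizontal coordinate and the inversion denominator of a map of the Heisenberg group form
a contact pair. -/
def IsContactMap (W : Set Heis) (G : Heis → Heis) : Prop :=
  IsContactPair W (fun v => zCoord (G v)) (fun v => inversionDenom (G v))

section

variable {W : Set Heis} {G : Heis → Heis} {w : Heis}

lemma schwarzian_zCoord_tau (hW : IsOpen W) (hG : ContDiffOn ℝ ∞ (fun v => zCoord (G v)) W)
    (hw : w ∈ W) (p : Heis) :
    schwarzian (fun v => zCoord (tau p (G v))) w = schwarzian (fun v => zCoord (G v)) w := by
  simpa only [zCoord_tau, one_mul] using schwarzian_affine hW hG hw one_ne_zero (zCoord p)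

lemma schwarzian_zCoord_similarity (hW : IsOpen W)
    (hG : ContDiffOn ℝ ∞ (fun v => zCoord (G v)) W) (hw : w ∈ W) (q : Heis) (φ : ℝ) {r : ℝ}
    (hr : r ≠ 0) : schwarzian (fun v => zCoord (rot φ (dil r (tau q (G v))))) w =
      schwarzian (fun v => zCoord (G v)) w := by
  simpa only [zCoord_rot_dil, zCoord_tau, mul_add] using
    schwarzian_affine hW hG hw (similarityFactor_ne_zero φ hr) (similarityFactor φ r * zCoord q)

lemma ZbD_zCoord_similarity (hG : DifferentiableAt ℝ (fun v => zCoord (G v)) w) (q : Heis)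
    (φ r : ℝ) : ZbD (fun v => zCoord (rot φ (dil r (tau q (G v))))) w =
      similarityFactor φ r * ZbD (fun v => zCoord (G v)) w := by
  simpa only [zCoord_rot_dil, zCoord_tau, mul_add] using
    isFirstOrder_ZbD.affine (similarityFactor φ r) (similarityFactor φ r * zCoord q) hG

end

namespace IsContactMap

variable {W : Set Heis} {G : Heis → Heis} (hG : IsContactMap W G)
include hG

lemma similarity (q : Heis) (φ : ℝ) {r : ℝ} (hr : r ≠ 0) :
    IsContactMap W fun v => rot φ (dil r (tau q (G v))) := by
  simpa only [IsContactMap, zCoord_rot_dil, inversionDenom_rot_dil, zCoord_tau,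
    inversionDenom_tau] using
    (hG.translate (inversionDenom_add_conj q)).const_mul (similarityFactor_ne_zero φ hr)

lemma contDiffOn_zCoord_iotaMap (h0 : ∀ v ∈ W, G v ≠ 0) :
    ContDiffOn ℝ ∞ (fun v => zCoord (iotaMap (G v))) W := by
  simpa only [zCoord_iotaMap] using contDiffOn_div hG.contDiffOn_x hG.contDiffOn_N
    fun v hv => inversionDenom_ne_zero (h0 v hv)

theorem schwarzian_iotaMap_eq_iff (h0 : ∀ v ∈ W, G v ≠ 0) :
    (∀ w ∈ W, schwarzian (fun v => zCoord (iotaMap (G v))) w =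
      schwarzian (fun v => zCoord (G v)) w) ↔ ∀ w ∈ W, ZbD (fun v => zCoord (G v)) w = 0 := by
  simpa only [zCoord_iotaMap] using
    hG.schwarzian_div_eq_iff fun v hv => inversionDenom_ne_zero (h0 v hv)

end IsContactMap

section

variable {f1 f2 f3 : Heis → ℝ} {p : Heis}

lemma contDiffOn_complexOfReal {u : Heis → ℝ} {Ω : Set Heis} (hu : ContDiffOn ℝ ∞ u Ω) :
    ContDiffOn ℝ ∞ (fun p => (u p : ℂ)) Ω :=
  (Complex.ofRealCLM.contDiff (n := ∞)).comp_contDiffOn hu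

lemma fderiv_CF (hf1 : DifferentiableAt ℝ f1 p) (hf2 : DifferentiableAt ℝ f2 p) (w : Heis) :
    fderiv ℝ (CF f1 f2) p w = (fderiv ℝ f1 p w : ℂ) + (fderiv ℝ f2 p w : ℂ) * Complex.I := by
  have h : HasFDerivAt (CF f1 f2) (Complex.ofRealCLM.comp (fderiv ℝ f1 p) +
      (Complex.ofRealCLM.comp (fderiv ℝ f2 p)).smulRight Complex.I) p :=
    (Complex.ofRealCLM.hasFDerivAt.comp p hf1.hasFDerivAt).add
      ((Complex.ofRealCLM.hasFDerivAt.comp p hf2.hasFDerivAt).mul_const' Complex.I)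
  rw [h.fderiv]
  simp

lemma normSq_ZD_CF_sub_normSq_ZbD_CF (hf1 : DifferentiableAt ℝ f1 p)
    (hf2 : DifferentiableAt ℝ f2 p) :
    normSq (ZD (CF f1 f2) p) - normSq (ZbD (CF f1 f2) p) = JF f1 f2 p := by
  simp only [JF, ZbD, ZD, XD, YD, fderiv_CF hf1 hf2, Complex.normSq_apply,
    Complex.div_ofNat_re, Complex.div_ofNat_im, Complex.sub_re, Complex.sub_im, Complex.add_re,
    Complex.add_im, Complex.mul_re, Complex.mul_im, Complex.I_re, Complex.I_im, Complex.ofReal_re,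
    Complex.ofReal_im]
  ring

lemma fderiv_inversionDenom_Fmap {w : Heis} (hf1 : DifferentiableAt ℝ f1 p)
    (hf2 : DifferentiableAt ℝ f2 p) (hf3 : DifferentiableAt ℝ f3 p)
    (h : fderiv ℝ f3 p w - 2 * f2 p * fderiv ℝ f1 p w + 2 * f1 p * fderiv ℝ f2 p w = 0) :
    fderiv ℝ (fun v => inversionDenom (Fmap f1 f2 f3 v)) p w =
      -2 * conj (CF f1 f2 p) * fderiv ℝ (CF f1 f2) p w := by
  have hnorm : HasFDerivAt (fun v => -(f1 v ^ 2 + f2 v ^ 2)) _ p :=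
    ((hf1.hasFDerivAt.pow 2).fun_add (hf2.hasFDerivAt.pow 2)).fun_neg
  have hCF : (fun v => inversionDenom (Fmap f1 f2 f3 v)) =
      CF (fun v => -(f1 v ^ 2 + f2 v ^ 2)) f3 := by
    ext v
    simp only [inversionDenom, Fmap, CF, Complex.ofReal_neg]
    ring
  have hf3w : fderiv ℝ f3 p w = 2 * f2 p * fderiv ℝ f1 p w - 2 * f1 p * fderiv ℝ f2 p w := by
    linarith
  rw [hCF, fderiv_CF hnorm.differentiableAt hf3, fderiv_CF hf1 hf2, hnorm.fderiv, hf3w]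
  simp only [CF, add_apply, neg_apply, smul_apply, smul_eq_mul, nsmul_eq_mul, map_add, map_mul,
    Complex.conj_ofReal, Complex.conj_I]
  push_cast
  linear_combination (-2 * f2 p * (fderiv ℝ f2 p w : ℂ)) * Complex.I_sq

theorem isContactMap_Fmap {Ω : Set Heis} (hΩ : IsOpen Ω) (hf1 : ContDiffOn ℝ ∞ f1 Ω)
    (hf2 : ContDiffOn ℝ ∞ f2 Ω) (hf3 : ContDiffOn ℝ ∞ f3 Ω) (hcont : ContactOn f1 f2 f3 Ω)
    (hJ : ∀ p ∈ Ω, 0 < JF f1 f2 p) : IsContactMap Ω (Fmap f1 f2 f3) := by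
  have hd1 := fun p (hp : p ∈ Ω) => differentiableAt_of_contDiffOn hΩ hf1 hp
  have hd2 := fun p (hp : p ∈ Ω) => differentiableAt_of_contDiffOn hΩ hf2 hp
  have hd3 := fun p (hp : p ∈ Ω) => differentiableAt_of_contDiffOn hΩ hf3 hp
  have hX : ∀ p ∈ Ω, XD (fun v => inversionDenom (Fmap f1 f2 f3 v)) p =
      -2 * conj (CF f1 f2 p) * XD (CF f1 f2) p := fun p hp =>
    fderiv_inversionDenom_Fmap (hd1 p hp) (hd2 p hp) (hd3 p hp) (hcont p hp).1
  have hY : ∀ p ∈ Ω, YD (fun v => inversionDenom (Fmap f1 f2 f3 v)) p =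
      -2 * conj (CF f1 f2 p) * YD (CF f1 f2) p := fun p hp =>
    fderiv_inversionDenom_Fmap (hd1 p hp) (hd2 p hp) (hd3 p hp) (hcont p hp).2
  exact {
    isOpen := hΩ
    contDiffOn_x := (contDiffOn_complexOfReal hf1).add
      ((contDiffOn_complexOfReal hf2).mul contDiffOn_const)
    contDiffOn_N := ((contDiffOn_complexOfReal hf3).mul contDiffOn_const).sub
      (contDiffOn_complexOfReal ((hf1.pow 2).add (hf2.pow 2)))
    norm_lt p hp := by
      have hJF := normSq_ZD_CF_sub_normSq_ZbD_CF (hd1 p hp) (hd2 p hp) ▸ hJ p hp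
      rw [Complex.normSq_eq_norm_sq, Complex.normSq_eq_norm_sq, sub_pos] at hJF
      exact lt_of_pow_lt_pow_left₀ 2 (norm_nonneg _) hJF
    N_add_conj p _ := inversionDenom_add_conj _
    ZD_N p hp := by
      change _ = -2 * conj (CF f1 f2 p) * ZD (CF f1 f2) p
      rw [ZD, ZD, hX p hp, hY p hp]
      ring
    ZbD_N p hp := by
      change _ = -2 * conj (CF f1 f2 p) * ZbD (CF f1 f2) p
      rw [ZbD, ZbD, hX p hp, hY p hp]
      ring }

end

end Contact

/-- for a smooth positively oriented contact map f on Ω and a conformal g: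
(1) if g = τ_p ∘ r_φ ∘ δ_r ∘ τ_q (type 1), then S_CL(g ∘ f) = S_CL(f) on Ω;
(2) if g = τ_p ∘ ι ∘ r_φ ∘ δ_r ∘ τ_q (type 2, defined on an open set containing f(Ω),
i.e. avoiding the singularity of ι), then S_CL(g ∘ f) = S_CL(f) on Ω iff Z̄F = 0 on Ω,
i.e. iff f is conformal. -/
theorem stmt_10 (Ω : Set Heis) (hΩ : IsOpen Ω) (f1 f2 f3 : Heis → ℝ)
    (hf1 : ContDiffOn ℝ (⊤ : ℕ∞) f1 Ω) (hf2 : ContDiffOn ℝ (⊤ : ℕ∞) f2 Ω)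
    (hf3 : ContDiffOn ℝ (⊤ : ℕ∞) f3 Ω)
    (hcont : ContactOn f1 f2 f3 Ω) (hJ : ∀ p ∈ Ω, 0 < JF f1 f2 p) :
    -- (1) type 1
    (∀ p q : Heis, ∀ φ r : ℝ, 0 < r →
      ∀ w ∈ Ω,
        SCL (fun v => (tau p (rot φ (dil r (tau q (Fmap f1 f2 f3 v))))).1)
            (fun v => (tau p (rot φ (dil r (tau q (Fmap f1 f2 f3 v))))).2.1) w
          = SCL f1 f2 w) ∧
    -- (2) type 2
    (∀ p q : Heis, ∀ φ r : ℝ, 0 < r →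
      (∀ w ∈ Ω, rot φ (dil r (tau q (Fmap f1 f2 f3 w))) ≠ 0) →
      ((∀ w ∈ Ω,
          SCL (fun v => (tau p (iotaMap (rot φ (dil r (tau q (Fmap f1 f2 f3 v)))))).1)
              (fun v => (tau p (iotaMap (rot φ (dil r (tau q (Fmap f1 f2 f3 v)))))).2.1) w
            = SCL f1 f2 w)
        ↔ (∀ w ∈ Ω, ZbD (CF f1 f2) w = 0))) := by
  have hf := isContactMap_Fmap hΩ hf1 hf2 hf3 hcont hJ
  refine ⟨fun p q φ r hr w hw => ?_, fun p q φ r hr h0 => ?_⟩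
  · exact (schwarzian_zCoord_tau hΩ (hf.similarity q φ hr.ne').contDiffOn_x hw p).trans
      (schwarzian_zCoord_similarity hΩ hf.contDiffOn_x hw q φ hr.ne')
  · have hg := hf.similarity q φ hr.ne'
    refine Iff.trans (forall₂_congr fun w hw => ?_)
      ((hg.schwarzian_iotaMap_eq_iff h0).trans (forall₂_congr fun w hw => ?_))
    · exact Eq.congr (schwarzian_zCoord_tau hΩ (hg.contDiffOn_zCoord_iotaMap h0) hw p)
        (schwarzian_zCoord_similarity hΩ hf.contDiffOn_x hw q φ hr.ne').symm
    · rw [ZbD_zCoord_similarity (hf.differentiableAt_x hw), mul_eq_zero,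
        or_iff_right (similarityFactor_ne_zero φ hr.ne')]
      rfl
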